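/- arXiv:1305.0353 — 5 statements merged into one kernel-verified Lean document; each statement's English description precedes it below -/
import Mathlib

section
/- For each 1 ≤ i ≤ n−1 the polynomial det A_i(λ) has exactly i distinct positive real roots; let λ^{(i)} denote the smallest, and set λ^{(0)} := ∞. For λ > 0 let φ_λ be the function on V with φ_λ(1) = −1 satisfying the positive-part recursion with parameter λ, and set T_i(λ) = Σ_{j=1}^{i} φ_λ(j) π(j). Then: (1) λ^G_{π,ν} = λ^{(n−1)} < λ^{(n−2)} < ⋯ < λ^{(1)}; (2) for 1 ≤ i ≤ n−2 and λ ∈ [λ^{(i)}, λ^{(i−1)}), one has φ_λ(i) < φ_λ(i+1) = φ_λ(i+2); (3) φ_λ(n−1) < φ_λ(n) for λ ∈ (0, λ^{(n−2)}). Moreover, for 1 ≤ i ≤ n−1, T_{i+1}(λ) = −π(1) det A_i(λ) for all λ ∈ (0, λ^{(i−1)}), and (λ − λ^{(i)}) T_{i+1}(λ) > 0 for all λ ∈ (0, λ^{(i)}) ∪ (λ^{(i)}, ∞). -/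
open Finset

/-- Dirichlet form on the path with vertices `{1,…,n}`;
`ν i` denotes the weight of edge `{i, i+1}`. -/
noncomputable def EForm (n : ℕ) (ν : ℕ → ℝ) (f g : ℕ → ℝ) : ℝ :=
  ∑ i ∈ Finset.Icc 1 (n - 1), (f i - f (i + 1)) * (g i - g (i + 1)) * ν i

/-- Mean of `f` with respect to `π` on `{1,…,n}`. -/
noncomputable def piMean (n : ℕ) (π : ℕ → ℝ) (f : ℕ → ℝ) : ℝ :=
  ∑ i ∈ Finset.Icc 1 n, f i * π i

/-- Variance of `f` with respect to `π` on `{1,…,n}`. -/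
noncomputable def varPi (n : ℕ) (π : ℕ → ℝ) (f : ℕ → ℝ) : ℝ :=
  piMean n π (fun i => (f i) ^ 2) - (piMean n π f) ^ 2

/-- `f` is non-constant on `{1,…,n}`. -/
def Nonconstant (n : ℕ) (f : ℕ → ℝ) : Prop :=
  ∃ i ∈ Finset.Icc 1 n, ∃ j ∈ Finset.Icc 1 n, f i ≠ f j

/-- `lam` is the spectral gap: the minimum of the Rayleigh quotients over
non-constant functions. -/
def IsSpectralGap (n : ℕ) (π ν : ℕ → ℝ) (lam : ℝ) : Prop :=
  IsLeast {r : ℝ | ∃ f : ℕ → ℝ, Nonconstant n f ∧ r = EForm n ν f f / varPi n π f} lam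

/-- The positive-part recursion with parameter `lam`:
`ψ(i+1) = ψ(i) + max{[ψ(i)−ψ(i−1)]ν(i−1,i) − λ π(i) ψ(i), 0}/ν(i,i+1)` for `1 ≤ i < n`. -/
def PosPartRec (n : ℕ) (π ν : ℕ → ℝ) (lam : ℝ) (ψ : ℕ → ℝ) : Prop :=
  ∀ i, 1 ≤ i → i < n →
    ψ (i + 1) = ψ i + max ((ψ i - ψ (i - 1)) * ν (i - 1) - lam * (π i * ψ i)) 0 / ν i

/-- The `i × i` tridiagonal matrix `A_i(λ)` with diagonal entries
`a_k(λ) = 1 + π(k+1)/π(k) − λ π(k+1)/ν(k,k+1)`, superdiagonal entries `1`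
and subdiagonal entries `π(k+2)/π(k+1)`. -/
noncomputable def Amat (π ν : ℕ → ℝ) (i : ℕ) (lam : ℝ) : Matrix (Fin i) (Fin i) ℝ :=
  Matrix.of fun r c =>
    if (r : ℕ) = (c : ℕ) then
      1 + π ((r : ℕ) + 2) / π ((r : ℕ) + 1) - lam * π ((r : ℕ) + 2) / ν ((r : ℕ) + 1)
    else if (c : ℕ) = (r : ℕ) + 1 then 1
    else if (r : ℕ) = (c : ℕ) + 1 then π ((r : ℕ) + 2) / π ((r : ℕ) + 1)
    else 0


theorem sgn_prod (k i : ℕ) (x : ℕ → ℝ) (l : ℝ) (hk : k ≤ i) (h1 : ∀ j < k, x j < l)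
    (h2 : ∀ j, k ≤ j → j < i → l < x j) : 0 < (-1)^k * ∏ j ∈ range i, (x j - l) := by
  rw [← Finset.prod_range_mul_prod_Ico _ hk, ← mul_assoc]
  apply mul_pos
  · have : (-1:ℝ)^k * ∏ j ∈ range k, (x j - l) = ∏ j ∈ range k, (l - x j) := by
      have h : ∀ j ∈ range k, l - x j = (-1) * (x j - l) := fun j _ => by ring
      rw [Finset.prod_congr rfl h, Finset.prod_mul_distrib]; simp
    rw [this]
    exact Finset.prod_pos fun j hj => sub_pos.2 (h1 j (by simpa using hj))
  · exact Finset.prod_pos fun j hj => sub_pos.2 (by simp at hj; exact h2 j hj.1 hj.2)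

theorem lt_of_step (m : ℕ) (z : ℕ → ℝ) (hz : ∀ k, k + 1 < m → z k < z (k+1)) :
    ∀ j, ∀ i, i < j → j < m → z i < z j := by
  intro j
  induction j with
  | zero => intro i hi; omega
  | succ j ih =>
    intro i hi hj
    rcases Nat.lt_succ_iff_lt_or_eq.1 hi with h | h
    · exact (ih i h (by omega)).trans (hz j hj)
    · subst h; exact hz i hj

open Polynomial in
theorem factor_poly (m : ℕ) (p : ℝ[X]) (hd : p.natDegree ≤ m) (hc : 0 < (-1)^m * p.coeff m)
    (z : ℕ → ℝ) (hz : ∀ k, k + 1 < m → z k < z (k+1)) (hr : ∀ k < m, p.eval (z k) = 0) :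
    ∃ c : ℝ, 0 < c ∧ ∀ l, p.eval l = c * ∏ k ∈ range m, (z k - l) := by
  have hinj : Set.InjOn z (range m) := by
    intro a ha b hb hab
    simp at ha hb
    rcases lt_trichotomy a b with h | h | h
    · exact absurd hab (lt_of_step m z hz b a h hb).ne
    · exact h
    · exact absurd hab (lt_of_step m z hz a b h ha).ne'
  have hcm : p.coeff m ≠ 0 := by intro h; simp [h] at hc
  have hp0 : p ≠ 0 := by rintro rfl; simp at hcm
  have hnd : p.natDegree = m := le_antisymm hd (le_natDegree_of_ne_zero hcm)
  have hcard : ((range m).image z).card = m := by rw [Finset.card_image_of_injOn hinj]; simp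
  have hle : ((range m).image z).val ≤ p.roots := by
    rw [Finset.val_le_iff_val_subset]
    intro a ha
    rw [Finset.mem_val, Finset.mem_image] at ha
    obtain ⟨k, hk, rfl⟩ := ha
    rw [mem_roots hp0]
    exact hr k (by simpa using hk)
  have heq : ((range m).image z).val = p.roots := by
    apply Multiset.eq_of_le_of_card_le hle
    rw [Finset.card_val, hcard, ← hnd]; exact card_roots' p
  have hrc : p.roots.card = p.natDegree := by rw [← heq, Finset.card_val, hcard, hnd]
  have h := C_leadingCoeff_mul_prod_multiset_X_sub_C hrc
  refine ⟨_, hc, fun l => ?_⟩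
  conv_lhs => rw [← h]
  rw [← heq]
  have h3 : (Multiset.map (fun a => X - C a) ((range m).image z).val).prod
     = ∏ k ∈ range m, (X - C (z k)) := by
    rw [← Finset.prod_image (f := fun a => X - C a) hinj]; rfl
  rw [h3, eval_mul, eval_C, eval_prod, leadingCoeff, hnd]
  have h4 : ∀ j ∈ range m, z j - l = (-1) * (eval l (X - C (z j))) := fun j _ => by simp
  rw [Finset.prod_congr rfl h4, Finset.prod_mul_distrib]
  simp only [prod_const, card_range]
  have : ((-1:ℝ)^m)*(-1)^m = 1 := by rw [← mul_pow]; simp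
  linear_combination (-p.coeff m * ∏ j ∈ range m, eval l (X - C (z j))) * this

noncomputable def EE (s b : ℕ → ℝ) : ℕ → ℝ → ℝ
  | 0, _ => 0
  | 1, _ => 1
  | (k+2), l => (1 + s k - b k * l) * EE s b (k+1) l - s k * EE s b k l

open Polynomial in
noncomputable def EP (s b : ℕ → ℝ) : ℕ → ℝ[X]
  | 0 => 0
  | 1 => 1
  | (k+2) => (C (1 + s k) - C (b k) * X) * EP s b (k+1) - C (s k) * EP s b k

open Polynomial in
theorem EP_eval (s b : ℕ → ℝ) (l : ℝ) : ∀ k, (EP s b k).eval l = EE s b k l ∧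
    (EP s b (k+1)).eval l = EE s b (k+1) l := by
  intro k
  induction k with
  | zero => simp [EP, EE]
  | succ k ih => refine ⟨ih.2, ?_⟩; simp [EP, EE, ih.1, ih.2]

open Polynomial in
theorem EP_deg (s b : ℕ → ℝ) (hb : ∀ k, 0 < b k) : ∀ k,
    (EP s b k).natDegree ≤ k ∧ (EP s b (k+1)).natDegree ≤ k ∧ 
    (EP s b k).coeff k = 0 ∧ 0 < (-1)^k * (EP s b (k+1)).coeff k := by
  intro k
  induction k with
  | zero => simp [EP]
  | succ k ih =>
    obtain ⟨h1, h2, h3, h4⟩ := ih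
    have hlin : (C (1 + s k) - C (b k) * X).natDegree ≤ 1 := by
      compute_degree
    refine ⟨h2.trans (by omega), ?_, ?_, ?_⟩
    · rw [EP]
      refine (natDegree_sub_le _ _).trans (max_le ?_ ?_)
      · refine natDegree_mul_le.trans ?_; omega
      · refine (natDegree_C_mul_le _ _).trans ?_; omega
    · exact coeff_eq_zero_of_natDegree_lt (by omega)
    · have h5 : (EP s b (k+1)).coeff (k+1) = 0 := coeff_eq_zero_of_natDegree_lt (by omega)
      have h6 : (EP s b k).coeff (k+1) = 0 := coeff_eq_zero_of_natDegree_lt (by omega)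
      have : (EP s b (k+1+1)).coeff (k+1) = - b k * (EP s b (k+1)).coeff k := by
        rw [EP, coeff_sub, coeff_C_mul, h6, sub_mul, coeff_sub, coeff_C_mul, h5, mul_assoc,
          coeff_C_mul, coeff_X_mul]; ring
      rw [this, pow_succ]
      have := mul_pos (hb k) h4
      linarith

theorem EE_zero (s b : ℕ → ℝ) (hs : ∀ k, 0 < s k) : ∀ k, 0 < EE s b (k+1) 0 ∧
    EE s b k 0 < EE s b (k+1) 0 := by
  intro k
  induction k with
  | zero => simp [EE]
  | succ k ih =>
    have : EE s b (k+1+1) 0 - EE s b (k+1) 0 = s k * (EE s b (k+1) 0 - EE s b k 0) := by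
      rw [EE]; ring
    have h2 := mul_pos (hs k) (sub_pos.2 ih.2)
    constructor <;> linarith [ih.1]

theorem ivt_root (f : ℝ → ℝ) (hf : Continuous f) (a c : ℝ) (hac : a < c) (e : ℝ) (ha : 0 < e * f a)
    (hc : 0 < -e * f c) : ∃ z, a < z ∧ z < c ∧ f z = 0 := by
  have h := intermediate_value_Icc' hac.le (f := fun x => e * f x) (by fun_prop)
  obtain ⟨z, hz, h0⟩ := h (show (0:ℝ) ∈ Set.Icc (e * f c) (e * f a) from ⟨by linarith, ha.le⟩)
  simp only at h0
  have he : e ≠ 0 := by rintro rfl; simp at ha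
  refine ⟨z, lt_of_le_of_ne hz.1 ?_, lt_of_le_of_ne hz.2 ?_, by simpa [he] using h0⟩
  · rintro rfl; linarith
  · rintro rfl; linarith

open Polynomial in
theorem large_sign (m : ℕ) (hm : 0 < m) (p : ℝ[X]) (hd : p.natDegree ≤ m)
    (hc : 0 < (-1)^m * p.coeff m) (a : ℝ) : ∃ x, a < x ∧ 0 < (-1)^m * p.eval x := by
  have hcm : p.coeff m ≠ 0 := by intro h; simp [h] at hc
  have hnd : p.natDegree = m := le_antisymm hd (le_natDegree_of_ne_zero hcm)
  have hq : (C ((-1)^m) * p).natDegree = m := by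
    rw [natDegree_C_mul (by simp), hnd]
  have h := tendsto_atTop_of_leadingCoeff_nonneg (C ((-1:ℝ)^m) * p)
    (by rw [← natDegree_pos_iff_degree_pos, hq]; exact hm)
    (by rw [leadingCoeff, hq, coeff_C_mul]; exact hc.le)
  obtain ⟨x, hx1, hx2⟩ := ((h.eventually_gt_atTop 0).and (Filter.eventually_gt_atTop a)).exists
  exact ⟨x, hx2, by simpa using hx1⟩

theorem interlace (s b : ℕ → ℝ) (hs : ∀ k, 0 < s k) (hb : ∀ k, 0 < b k) (i : ℕ) :
    ∃ x y : ℕ → ℝ, ∃ c c' : ℝ, 0 < c ∧ 0 < c' ∧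
      (∀ l, EE s b (i+1) l = c * ∏ k ∈ range i, (x k - l)) ∧
      (∀ l, EE s b (i+2) l = c' * ∏ k ∈ range (i+1), (y k - l)) ∧ 0 < y 0 ∧
      (∀ k < i, y k < x k ∧ x k < y (k+1)) := by
  induction i with
  | zero =>
    refine ⟨fun _ => 0, fun _ => (1 + s 0) / b 0, 1, b 0, one_pos, hb 0, ?_, ?_, ?_, ?_⟩
    · simp [EE]
    · intro l
      have := (hb 0).ne'
      simp [EE]; field_simp
    · have := hb 0; have := hs 0; positivity
    · simp
  | succ i ih =>
    obtain ⟨x, y, c, c', hc, hc', hx, hy, hy0, hxy⟩ := ih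
    have hyk : ∀ k, k + 1 < i + 1 → y k < y (k+1) := fun k hk =>
      (hxy k (by omega)).1.trans (hxy k (by omega)).2
    have hymono := lt_of_step (i+1) y hyk
    have hxk : ∀ k, k + 1 < i → x k < x (k+1) := fun k hk =>
      (hxy k (by omega)).2.trans (hxy (k+1) (by omega)).1
    have hxmono := lt_of_step i x hxk
    have hsign : ∀ k < i + 1, 0 < (-1)^(k+1) * EE s b (i+3) (y k) := by
      intro k hk
      have h0 : EE s b (i+2) (y k) = 0 := by
        rw [hy, Finset.prod_eq_zero (i := k) (by simpa using hk) (by simp)]; simp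
      have h1 := sgn_prod k i x (y k) (by omega)
        (by
          intro j hj
          rcases (show j + 1 = k ∨ j + 1 < k by omega) with h | h
          · subst h; exact (hxy j (by omega)).2
          · exact (hxy j (by omega)).2.trans (hymono k (j+1) h hk))
        (by
          intro j hj hji
          rcases hj.eq_or_lt with h | h
          · subst h; exact (hxy k hji).1
          · exact (hymono j k h (by omega)).trans (hxy j hji).1)
      have h2 : EE s b (i+3) (y k) = - s (i+1) * EE s b (i+1) (y k) := by
        rw [EE, h0]; ring
      rw [h2, hx, pow_succ]
      have := mul_pos (mul_pos (hs (i+1)) hc) h1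
      linarith
    obtain ⟨hd1, hd2, hd3, hd4⟩ := EP_deg s b hb (i+2)
    obtain ⟨u, hu1, hu2⟩ := large_sign (i+2) (by omega) _ hd2 hd4 (y i)
    have hev : ∀ l, (EP s b (i+3)).eval l = EE s b (i+3) l := fun l => (EP_eval s b l (i+3)).1
    rw [hev] at hu2
    have hcont : Continuous (EE s b (i+3)) := by
      have : EE s b (i+3) = fun l => (EP s b (i+3)).eval l := by ext l; rw [hev]
      rw [this]; exact Polynomial.continuous _
    -- endpoints
    have hex : ∀ k, ∃ z, k < i + 2 → (EE s b (i+3) z = 0 ∧ (k = 0 → 0 < z) ∧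
        (0 < k → y (k-1) < z) ∧ (k < i + 1 → z < y k)) := by
      intro k
      by_cases hk : k < i + 2
      swap
      · exact ⟨0, fun h => absurd h hk⟩
      have hE0 := (EE_zero s b hs (i+2)).1
      rcases k with _ | k
      · obtain ⟨z, h1, h2, h3⟩ := ivt_root _ hcont 0 (y 0) hy0 1 (by simpa using hE0)
          (by simpa using hsign 0 (by omega))
        exact ⟨z, fun _ => ⟨h3, fun _ => h1, by simp, fun _ => h2⟩⟩
      · by_cases hki : k < i
        · obtain ⟨z, h1, h2, h3⟩ := ivt_root _ hcont (y k) (y (k+1)) (hyk k (by omega)) ((-1)^(k+1))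
            (hsign k (by omega)) (by have := hsign (k+1) (by omega); rw [pow_succ] at this; linarith)
          exact ⟨z, fun _ => ⟨h3, by simp, fun _ => by simpa using h1, fun _ => h2⟩⟩
        · obtain rfl : k = i := by omega
          obtain ⟨z, h1, h2, h3⟩ := ivt_root _ hcont (y k) u hu1 ((-1)^(k+1))
            (hsign k (by omega)) (by rw [pow_succ] at hu2; linarith)
          exact ⟨z, fun _ => ⟨h3, by simp, fun _ => by simpa using h1, fun h => by omega⟩⟩
    choose z hz using hex
    have hzy : ∀ k < i + 1, z k < y k ∧ y k < z (k+1) := fun k hk =>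
      ⟨(hz k (by omega)).2.2.2 hk, by simpa using (hz (k+1) (by omega)).2.2.1 (by omega)⟩
    obtain ⟨c'', hc'', hfac⟩ := factor_poly (i+2) _ hd2 hd4 z
      (fun k hk => (hzy k (by omega)).1.trans (hzy k (by omega)).2)
      (fun k hk => by rw [hev]; exact (hz k hk).1)
    exact ⟨y, z, c', c'', hc', hc'', hy, fun l => by rw [← hev]; exact hfac l,
      (hz 0 (by omega)).2.1 rfl, hzy⟩

theorem roots_main (s b : ℕ → ℝ) (hs : ∀ k, 0 < s k) (hb : ∀ k, 0 < b k) (i : ℕ) :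
    ∃ r : ℝ, ∃ S : Finset ℝ, S.card = i + 1 ∧ (∀ x ∈ S, 0 < x) ∧
      (∀ x, EE s b (i+2) x = 0 ↔ x ∈ S) ∧ r ∈ S ∧ (∀ x ∈ S, r ≤ x) ∧
      (∀ x < r, 0 < EE s b (i+2) x) ∧
      (∀ q, EE s b (i+1) q = 0 → (∀ x < q, 0 < EE s b (i+1) x) →
        r < q ∧ ∀ x, r < x → x ≤ q → EE s b (i+2) x < 0) ∧
      (i = 0 → ∀ x, r < x → EE s b (i+2) x < 0) := by
  obtain ⟨x, y, c, c', hc, hc', hx, hy, hy0, hxy⟩ := interlace s b hs hb i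
  have hyk : ∀ k, k + 1 < i + 1 → y k < y (k+1) := fun k hk =>
    (hxy k (by omega)).1.trans (hxy k (by omega)).2
  have hymono := lt_of_step (i+1) y hyk
  have hy0le : ∀ k < i + 1, y 0 ≤ y k := by
    intro k hk
    rcases Nat.eq_zero_or_pos k with h | h
    · rw [h]
    · exact (hymono k 0 h hk).le
  have hinj : Set.InjOn y (range (i+1)) := by
    intro a ha b hb hab
    simp at ha hb
    rcases lt_trichotomy a b with h | h | h
    · exact absurd hab (hymono b a h (by omega)).ne
    · exact h
    · exact absurd hab (hymono a b h (by omega)).ne'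
  have hneg : ∀ l, y 0 < l → (∀ j, 1 ≤ j → j < i + 1 → l < y j) → EE s b (i+2) l < 0 := by
    intro l h1 h2
    have := sgn_prod 1 (i+1) y l (by omega) (by intro j hj; obtain rfl : j = 0 := by omega
                                                exact h1) h2
    rw [hy]
    have := mul_pos hc' this
    linarith
  refine ⟨y 0, (range (i+1)).image y, ?_, ?_, ?_, ?_, ?_, ?_, ?_, ?_⟩
  · rw [Finset.card_image_of_injOn hinj]; simp
  · intro a ha
    obtain ⟨k, hk, rfl⟩ := Finset.mem_image.1 ha
    exact hy0.trans_le (hy0le k (by simpa using hk))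
  · intro l
    rw [hy, mul_eq_zero, Finset.prod_eq_zero_iff, Finset.mem_image]
    simp only [hc'.ne', false_or, sub_eq_zero]
  · exact Finset.mem_image.2 ⟨0, by simp, rfl⟩
  · intro a ha
    obtain ⟨k, hk, rfl⟩ := Finset.mem_image.1 ha
    exact hy0le k (by simpa using hk)
  · intro l hl
    have := sgn_prod 0 (i+1) y l (by omega) (by simp)
      (fun j _ hj => hl.trans_le (hy0le j hj))
    rw [hy]
    have := mul_pos hc' this
    linarith
  · intro q hq1 hq2
    rw [hx, mul_eq_zero, Finset.prod_eq_zero_iff] at hq1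
    rcases hq1 with h | ⟨k, hk, h⟩
    · exact absurd h hc.ne'
    simp at hk
    have hqk : q = x k := by linarith
    have hi : 0 < i := by omega
    have hx0 : EE s b (i+1) (x 0) = 0 := by
      rw [hx, Finset.prod_eq_zero (i := 0) (by simpa using hi) (by simp)]; simp
    have hq0 : q ≤ x 0 := by
      by_contra hcon
      have := hq2 _ (not_le.1 hcon)
      linarith
    refine ⟨?_, ?_⟩
    · rw [hqk]; exact (hy0le k (by omega)).trans_lt (hxy k hk).1
    · intro l h1 h2
      apply hneg l h1
      intro j hj1 hj2
      have h3 : l < y 1 := (h2.trans hq0).trans_lt (hxy 0 hi).2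
      rcases hj1.eq_or_lt with h | h
      · rw [← h]; exact h3
      · exact h3.trans (hymono j 1 h hj2)
  · intro hi l hl
    exact hneg l hl (by omega)

theorem det_rec (π ν : ℕ → ℝ) (i : ℕ) (l : ℝ) :
    (Amat π ν (i+2) l).det =
      (1 + π (i+3) / π (i+2) - π (i+3) / ν (i+2) * l) * (Amat π ν (i+1) l).det
        - π (i+3) / π (i+2) * (Amat π ν i l).det := by
  rw [Matrix.det_succ_row _ (Fin.last (i+1)), Fin.sum_univ_castSucc, Fin.sum_univ_castSucc]
  have hz : ∑ j : Fin i, (-1:ℝ) ^ (((Fin.last (i+1) : Fin (i+2)) : ℕ) + (j.castSucc.castSucc : ℕ)) *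
      Amat π ν (i+2) l (Fin.last (i+1)) j.castSucc.castSucc *
      ((Amat π ν (i+2) l).submatrix (Fin.last (i+1)).succAbove
        j.castSucc.castSucc.succAbove).det = 0 := by
    apply Finset.sum_eq_zero
    intro j _
    have hj := j.2
    have : Amat π ν (i+2) l (Fin.last (i+1)) j.castSucc.castSucc = 0 := by
      simp only [Amat, Matrix.of_apply, Fin.val_last, Fin.val_castSucc]
      rw [if_neg (by omega), if_neg (by omega), if_neg (by omega)]
    rw [this]; simp
  have h1 : (Amat π ν (i+2) l).submatrix (Fin.last (i+1)).succAbove (Fin.last (i+1)).succAbove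
      = Amat π ν (i+1) l := by
    ext r c
    simp [Amat, Fin.succAbove_last]
  have h2 : ((Amat π ν (i+2) l).submatrix (Fin.last (i+1)).succAbove
      (Fin.last i).castSucc.succAbove).det = (Amat π ν i l).det := by
    rw [Matrix.det_succ_column _ (Fin.last i), Fin.sum_univ_castSucc]
    rw [Finset.sum_eq_zero]
    · have e1 : (Fin.last i).castSucc.succAbove (Fin.last i) = Fin.last (i+1) := by
        simp [Fin.succAbove]
      have e2 : (((Amat π ν (i+2) l).submatrix (Fin.last (i+1)).succAbove
          (Fin.last i).castSucc.succAbove).submatrix (Fin.last i).succAbove (Fin.last i).succAbove)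
          = Amat π ν i l := by
        ext r c
        have : (Fin.last i).castSucc.succAbove c.castSucc = c.castSucc.castSucc := by
          simp [Fin.succAbove, Fin.lt_def]
        simp [Amat, Fin.succAbove_last, this]
      rw [e2, Matrix.submatrix_apply, e1, Fin.succAbove_last]
      have e3 : Amat π ν (i+2) l (Fin.last i).castSucc (Fin.last (i+1)) = 1 := by
        simp [Amat]
      rw [e3]
      have : ((-1:ℝ)) ^ (i + i) = 1 := by rw [← two_mul]; simp
      simp [this]
    · intro r _
      have hr := r.2
      have e1 : (Fin.last i).castSucc.succAbove (Fin.last i) = Fin.last (i+1) := by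
        simp [Fin.succAbove]
      rw [Matrix.submatrix_apply, e1, Fin.succAbove_last]
      have : Amat π ν (i+2) l r.castSucc.castSucc (Fin.last (i+1)) = 0 := by
        simp only [Amat, Matrix.of_apply, Fin.val_last, Fin.val_castSucc]
        rw [if_neg (by omega), if_neg (by omega), if_neg (by omega)]
      rw [this]; simp
  rw [hz, h1, h2]
  have e4 : Amat π ν (i+2) l (Fin.last (i+1)) (Fin.last (i+1)) =
      1 + π (i+3) / π (i+2) - l * π (i+3) / ν (i+2) := by
    simp [Amat]
  have e5 : Amat π ν (i+2) l (Fin.last (i+1)) (Fin.last i).castSucc = π (i+3) / π (i+2) := by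
    simp [Amat]
    intro h; omega
  rw [e4, e5]
  have p1 : ((-1:ℝ)) ^ (i + 1 + (i + 1)) = 1 := by rw [← two_mul]; simp
  have p2 : ((-1:ℝ)) ^ (i + 1 + i) = -1 := by
    rw [show i + 1 + i = 2 * i + 1 by ring, pow_succ]; simp
  simp only [Fin.val_last, Fin.val_castSucc]
  rw [p1, p2]; ring

theorem det_EE (π ν : ℕ → ℝ) (l : ℝ) : ∀ i, (Amat π ν i l).det =
    EE (fun k => π (k+2) / π (k+1)) (fun k => π (k+2) / ν (k+1)) (i+1) l ∧ 
    (Amat π ν (i+1) l).det =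
    EE (fun k => π (k+2) / π (k+1)) (fun k => π (k+2) / ν (k+1)) (i+2) l := by
  intro i
  induction i with
  | zero => simp [EE, Amat]; ring
  | succ i ih =>
    refine ⟨ih.2, ?_⟩
    rw [det_rec, ih.1, ih.2]
    conv_rhs => rw [EE]

theorem EE_congr (s b s' b' : ℕ → ℝ) (l : ℝ) : ∀ i, (∀ k, k + 2 ≤ i + 1 → s k = s' k ∧ b k = b' k) →
    EE s b i l = EE s' b' i l ∧ EE s b (i+1) l = EE s' b' (i+1) l := by
  intro i
  induction i with
  | zero => simp [EE]
  | succ i ih =>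
    intro h
    have := ih (fun k hk => h k (by omega))
    refine ⟨this.2, ?_⟩
    rw [EE, EE, this.1, this.2, (h i (by omega)).1, (h i (by omega)).2]

/-- Linear recursion step. -/
theorem T_step (π ν : ℕ → ℝ) (l c : ℝ) (h : ℕ → ℝ) (k : ℕ) (hp : 0 < π (k+1)) (hn : 0 < ν (k+1))
    (h1 : ∑ j ∈ Icc 1 k, h j * π j = c *
      EE (fun k => π (k+2) / π (k+1)) (fun k => π (k+2) / ν (k+1)) k l)
    (h2 : ∑ j ∈ Icc 1 (k+1), h j * π j = c *
      EE (fun k => π (k+2) / π (k+1)) (fun k => π (k+2) / ν (k+1)) (k+1) l)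
    (h3 : (h (k+1) - h (k+2)) * ν (k+1) = l * ∑ j ∈ Icc 1 (k+1), h j * π j) :
    ∑ j ∈ Icc 1 (k+2), h j * π j = c *
      EE (fun k => π (k+2) / π (k+1)) (fun k => π (k+2) / ν (k+1)) (k+2) l := by
  have e1 : ∑ j ∈ Icc 1 (k+1), h j * π j = ∑ j ∈ Icc 1 k, h j * π j + h (k+1) * π (k+1) :=
    Finset.sum_Icc_succ_top (by omega) _
  have e2 : ∑ j ∈ Icc 1 (k+2), h j * π j = ∑ j ∈ Icc 1 (k+1), h j * π j + h (k+2) * π (k+2) :=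
    Finset.sum_Icc_succ_top (by omega) _
  rw [e2, EE]
  rw [h2] at h3 e1 ⊢
  rw [h1] at e1
  generalize EE (fun k => π (k+2) / π (k+1)) (fun k => π (k+2) / ν (k+1)) (k+1) l = X at *
  generalize EE (fun k => π (k+2) / π (k+1)) (fun k => π (k+2) / ν (k+1)) k l = Y at *
  have e3 : h (k+1) = c * (X - Y) / π (k+1) := by field_simp; linarith
  have e4 : h (k+2) = h (k+1) - l * (c * X) / ν (k+1) := by field_simp; linarith
  rw [e4, e3]
  field_simp
  ring

theorem T_lin (n : ℕ) (π ν : ℕ → ℝ) (hπ : ∀ i ∈ Icc 1 n, 0 < π i)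
    (hν : ∀ i ∈ Icc 1 (n - 1), 0 < ν i) (l : ℝ) (h : ℕ → ℝ)
    (hrec : ∀ k, 1 ≤ k → k < n → (h k - h (k+1)) * ν k = l * ∑ j ∈ Icc 1 k, h j * π j) :
    ∀ k, k + 1 ≤ n → (∑ j ∈ Icc 1 k, h j * π j = (h 1 * π 1) *
      EE (fun k => π (k+2) / π (k+1)) (fun k => π (k+2) / ν (k+1)) k l) ∧
      (∑ j ∈ Icc 1 (k+1), h j * π j = (h 1 * π 1) *
      EE (fun k => π (k+2) / π (k+1)) (fun k => π (k+2) / ν (k+1)) (k+1) l) := by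
  intro k
  induction k with
  | zero => intro _; simp [EE]
  | succ k ih =>
    intro hk
    obtain ⟨h1, h2⟩ := ih (by omega)
    exact ⟨h2, T_step π ν l _ h k (hπ _ (by simp; omega)) (hν _ (by simp; omega)) h1 h2
      (hrec (k+1) (by omega) (by omega))⟩

theorem T_phi (n : ℕ) (π ν : ℕ → ℝ) (hπ : ∀ i ∈ Icc 1 n, 0 < π i)
    (hν : ∀ i ∈ Icc 1 (n - 1), 0 < ν i) (hν0 : ν 0 = 0) (l : ℝ) (hl : 0 < l) (φ : ℕ → ℝ)
    (h1 : φ 1 = -1) (hrec : PosPartRec n π ν l φ) :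
    ∀ k, k + 1 ≤ n → 
      (∀ j < k, 0 < EE (fun k => π (k+2) / π (k+1)) (fun k => π (k+2) / ν (k+1)) (j+1) l) →
      (∑ j ∈ Icc 1 k, φ j * π j = -π 1 *
      EE (fun k => π (k+2) / π (k+1)) (fun k => π (k+2) / ν (k+1)) k l) ∧
      (∑ j ∈ Icc 1 (k+1), φ j * π j = -π 1 *
      EE (fun k => π (k+2) / π (k+1)) (fun k => π (k+2) / ν (k+1)) (k+1) l) ∧ 
      (φ k - φ (k+1)) * ν k = l * ∑ j ∈ Icc 1 k, φ j * π j := by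
  intro k
  induction k with
  | zero => intro _ _; simp [EE, h1, hν0]
  | succ k ih =>
    intro hk hpos
    obtain ⟨e1, e2, e3⟩ := ih (by omega) (fun j hj => hpos j (by omega))
    have hpk := hπ (k+1) (by simp; omega)
    have hp1 := hπ 1 (by simp; omega)
    have hnk := hν (k+1) (by simp; omega)
    have hT : ∑ j ∈ Icc 1 (k+1), φ j * π j < 0 := by
      rw [e2]; have := mul_pos hp1 (hpos k (by omega)); linarith
    have es : ∑ j ∈ Icc 1 (k+1), φ j * π j = ∑ j ∈ Icc 1 k, φ j * π j + φ (k+1) * π (k+1) :=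
      Finset.sum_Icc_succ_top (by omega) _
    have hr := hrec (k+1) (by omega) (by omega)
    have hm : (φ (k+1) - φ (k+1-1)) * ν (k+1-1) - l * (π (k+1) * φ (k+1))
        = - (l * ∑ j ∈ Icc 1 (k+1), φ j * π j) := by
      rw [es, Nat.add_sub_cancel]; linarith
    have hlT := mul_neg_of_pos_of_neg hl hT
    rw [hm, max_eq_left (by linarith)] at hr
    have e4 : (φ (k+1) - φ (k+2)) * ν (k+1) = l * ∑ j ∈ Icc 1 (k+1), φ j * π j := by
      rw [show k + 2 = k + 1 + 1 from rfl, hr]; field_simp; ring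
    exact ⟨e2, T_step π ν l _ φ k hpk hnk e1 e2 e4, e4⟩

theorem phi_mono (n : ℕ) (π ν : ℕ → ℝ) (hν : ∀ i ∈ Icc 1 (n - 1), 0 < ν i) (l : ℝ) (φ : ℕ → ℝ)
    (hrec : PosPartRec n π ν l φ) (a : ℕ) (ha : 1 ≤ a) : ∀ k, a ≤ k → k ≤ n → φ a ≤ φ k := by
  intro k hk
  induction k, hk using Nat.le_induction with
  | base => simp
  | succ k hk ih =>
    intro hkn
    refine (ih (by omega)).trans ?_
    rw [hrec k (by omega) (by omega)]
    have := hν k (by simp; omega)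
    have : 0 ≤ max ((φ k - φ (k - 1)) * ν (k - 1) - l * (π k * φ k)) 0 / ν k :=
      div_nonneg (le_max_right _ _) this.le
    linarith

theorem var_eq (n : ℕ) (π : ℕ → ℝ) (hπ1 : ∑ i ∈ Icc 1 n, π i = 1) (f : ℕ → ℝ) :
    varPi n π f = ∑ i ∈ Icc 1 n, (f i - piMean n π f)^2 * π i := by
  have : ∀ i ∈ Icc 1 n, (f i - piMean n π f)^2 * π i = 
    f i ^ 2 * π i - 2 * piMean n π f * (f i * π i) + (piMean n π f)^2 * π i := fun i _ => by ring
  rw [Finset.sum_congr rfl this, Finset.sum_add_distrib, Finset.sum_sub_distrib, ← Finset.mul_sum,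
    ← Finset.mul_sum, hπ1, varPi]
  change piMean n π (fun i => f i ^ 2) - _ = piMean n π (fun i => f i ^ 2) - 2 * piMean n π f * piMean n π f + _
  ring

theorem var_pos (n : ℕ) (π : ℕ → ℝ) (hπ : ∀ i ∈ Icc 1 n, 0 < π i)
    (hπ1 : ∑ i ∈ Icc 1 n, π i = 1) (f : ℕ → ℝ) (hf : Nonconstant n f) : 0 < varPi n π f := by
  rw [var_eq n π hπ1]
  obtain ⟨i, hi, j, hj, hij⟩ := hf
  have hnn : ∀ i ∈ Icc 1 n, 0 ≤ (f i - piMean n π f)^2 * π i := fun i hi =>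
    mul_nonneg (sq_nonneg _) (hπ i hi).le
  apply Finset.sum_pos' hnn
  by_cases h : f i = piMean n π f
  · refine ⟨j, hj, mul_pos (sq_pos_of_ne_zero fun h2 => hij (by linarith)) (hπ j hj)⟩
  · refine ⟨i, hi, mul_pos (sq_pos_of_ne_zero fun h2 => h (by linarith)) (hπ i hi)⟩

theorem quad_nonneg (n : ℕ) (π ν : ℕ → ℝ) (hπ : ∀ i ∈ Icc 1 n, 0 < π i)
    (hπ1 : ∑ i ∈ Icc 1 n, π i = 1) (gap : ℝ) (hgap : IsSpectralGap n π ν gap) (f : ℕ → ℝ) :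
    0 ≤ EForm n ν f f - gap * varPi n π f := by
  by_cases hf : Nonconstant n f
  · have h := hgap.2 ⟨f, hf, rfl⟩
    rw [le_div_iff₀ (var_pos n π hπ hπ1 f hf)] at h
    linarith
  · have hc : ∀ i ∈ Icc 1 n, ∀ j ∈ Icc 1 n, f i = f j := by
      intro i hi j hj
      by_contra h
      exact hf ⟨i, hi, j, hj, h⟩
    have hE : EForm n ν f f = 0 := by
      apply Finset.sum_eq_zero
      intro i hi
      simp at hi
      rw [hc i (by simp; omega) (i+1) (by simp; omega)]; ring
    have hV : varPi n π f = 0 := by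
      rw [var_eq n π hπ1]
      apply Finset.sum_eq_zero
      intro i hi
      have : piMean n π f = f i := by
        rw [piMean, Finset.sum_congr rfl (fun j hj => by rw [hc j hj i hi]), ← Finset.mul_sum, hπ1,
          mul_one]
      rw [this]; ring
    rw [hE, hV]; simp

theorem E_expand (n : ℕ) (ν f g : ℕ → ℝ) (t : ℝ) :
    EForm n ν (fun i => f i + t * g i) (fun i => f i + t * g i) =
      EForm n ν f f + 2 * t * EForm n ν f g + t^2 * EForm n ν g g := by
  simp only [EForm, Finset.mul_sum, ← Finset.sum_add_distrib]
  apply Finset.sum_congr rfl; intros; ring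

theorem mean_expand (n : ℕ) (π f g : ℕ → ℝ) (t : ℝ) :
    piMean n π (fun i => f i + t * g i) = piMean n π f + t * piMean n π g := by
  simp only [piMean, Finset.mul_sum, ← Finset.sum_add_distrib]
  apply Finset.sum_congr rfl; intros; ring

theorem var_expand (n : ℕ) (π f g : ℕ → ℝ) (t : ℝ) :
    varPi n π (fun i => f i + t * g i) = varPi n π f +
      2 * t * (piMean n π (fun i => f i * g i) - piMean n π f * piMean n π g)
      + t^2 * varPi n π g := by
  have : piMean n π (fun i => (f i + t * g i)^2) = piMean n π (fun i => f i ^ 2)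
     + 2 * t * piMean n π (fun i => f i * g i) + t^2 * piMean n π (fun i => g i ^ 2) := by
    simp only [piMean, Finset.mul_sum, ← Finset.sum_add_distrib]
    apply Finset.sum_congr rfl; intros; ring
  rw [varPi, this, mean_expand, varPi, varPi]; ring

theorem sum_ind (n k : ℕ) (hk : k ≤ n) (F : ℕ → ℝ) :
    ∑ i ∈ Icc 1 n, F i * (if i ≤ k then 1 else 0) = ∑ i ∈ Icc 1 k, F i := by
  rw [← Finset.sum_subset (Finset.Icc_subset_Icc_right hk)]
  · apply Finset.sum_congr rfl
    intro i hi; simp at hi; simp [hi.2]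
  · intro i hi hi2
    simp at hi hi2
    rw [if_neg (by omega)]; simp

theorem gap_root (n : ℕ) (hn : 3 ≤ n) (π ν : ℕ → ℝ) (hπ : ∀ i ∈ Icc 1 n, 0 < π i)
    (hπ1 : ∑ i ∈ Icc 1 n, π i = 1) (hν : ∀ i ∈ Icc 1 (n - 1), 0 < ν i)
    (gap : ℝ) (hgap : IsSpectralGap n π ν gap) :
    EE (fun k => π (k+2) / π (k+1)) (fun k => π (k+2) / ν (k+1)) n gap = 0 := by
  obtain ⟨f, hf, hfe⟩ := hgap.1
  have hv := var_pos n π hπ hπ1 f hf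
  have hf0 : EForm n ν f f = gap * varPi n π f := by rw [hfe]; field_simp
  have hEL : ∀ g : ℕ → ℝ, EForm n ν f g =
      gap * (piMean n π (fun i => f i * g i) - piMean n π f * piMean n π g) := by
    intro g
    have := discrim_le_zero (a := EForm n ν g g - gap * varPi n π g)
      (b := 2 * (EForm n ν f g -
        gap * (piMean n π (fun i => f i * g i) - piMean n π f * piMean n π g))) (c := 0) (by
        intro t
        have h := quad_nonneg n π ν hπ hπ1 gap hgap (fun i => f i + t * g i)
        rw [E_expand, var_expand] at h
        nlinarith)
    rw [discrim] at this
    have h2 := sq_nonneg (2 * (EForm n ν f g -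
        gap * (piMean n π (fun i => f i * g i) - piMean n π f * piMean n π g)))
    have h3 := pow_eq_zero_iff (two_ne_zero) |>.1 (le_antisymm (by linarith) h2)
    linarith
  set m := piMean n π f with hm
  have hrec : ∀ k, 1 ≤ k → k < n → ((fun i => f i - m) k - (fun i => f i - m) (k+1)) * ν k
      = gap * ∑ j ∈ Icc 1 k, (fun i => f i - m) j * π j := by
    intro k hk1 hk2
    have h := hEL (fun i => if i ≤ k then 1 else 0)
    have a1 : EForm n ν f (fun i => if i ≤ k then 1 else 0) = (f k - f (k+1)) * ν k := by
      rw [EForm, Finset.sum_eq_single k]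
      · simp
      · intro j hj hjk
        rcases lt_or_gt_of_ne hjk with h | h
        · rw [if_pos (by omega), if_pos (by omega)]; ring
        · rw [if_neg (by omega), if_neg (by omega)]; ring
      · intro h; simp at h; omega
    have a2 : piMean n π (fun i => f i * (if i ≤ k then 1 else 0)) = ∑ j ∈ Icc 1 k, f j * π j := by
      rw [piMean, ← sum_ind n k hk2.le]
      apply Finset.sum_congr rfl; intros; ring
    have a3 : piMean n π (fun i => (if i ≤ k then 1 else 0)) = ∑ j ∈ Icc 1 k, π j := by
      rw [piMean, ← sum_ind n k hk2.le]
      apply Finset.sum_congr rfl; intros; ring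
    rw [a1, a2, a3] at h
    simp only [sub_mul, Finset.sum_sub_distrib, ← Finset.mul_sum]
    linarith
  have hlin := T_lin n π ν hπ hν gap _ hrec
  have hT := (hlin (n-1) (by omega)).2
  rw [Nat.sub_add_cancel (by omega)] at hT
  have h0 : ∑ j ∈ Icc 1 n, (fun i => f i - m) j * π j = 0 := by
    simp only [sub_mul, Finset.sum_sub_distrib, ← Finset.mul_sum, hπ1]
    rw [hm, piMean]; ring
  rw [h0] at hT
  rcases mul_eq_zero.1 hT.symm with h | h
  swap
  · exact h
  exfalso
  rw [h] at hlin
  have hz : ∀ j, 1 ≤ j → j ≤ n → f j = m := by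
    intro j hj1 hj2
    obtain ⟨k, rfl⟩ : ∃ k, j = k + 1 := ⟨j-1, by omega⟩
    obtain ⟨u1, u2⟩ := hlin k hj2
    rw [Finset.sum_Icc_succ_top (by omega), u1] at u2
    have := (hπ (k+1) (by simp; omega)).ne'
    simp [this] at u2
    linarith
  obtain ⟨i, hi, j, hj, hij⟩ := hf
  simp at hi hj
  exact hij (by rw [hz i hi.1 hi.2, hz j hj.1 hj.2])

theorem gap_le (n : ℕ) (hn : 3 ≤ n) (π ν : ℕ → ℝ) (hπ : ∀ i ∈ Icc 1 n, 0 < π i)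
    (hπ1 : ∑ i ∈ Icc 1 n, π i = 1) (hν : ∀ i ∈ Icc 1 (n - 1), 0 < ν i)
    (gap : ℝ) (hgap : IsSpectralGap n π ν gap) (l : ℝ) 
    (hl : EE (fun k => π (k+2) / π (k+1)) (fun k => π (k+2) / ν (k+1)) n l = 0) : gap ≤ l := by
  set e := fun k => EE (fun k => π (k+2) / π (k+1)) (fun k => π (k+2) / ν (k+1)) k l with he
  set f : ℕ → ℝ := fun k => (e k - e (k-1)) / π k with hf
  have hT : ∀ k, k ≤ n → ∑ j ∈ Icc 1 k, f j * π j = e k := by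
    intro k
    induction k with
    | zero => intro _; simp [he, EE]
    | succ k ih =>
      intro hk
      rw [Finset.sum_Icc_succ_top (by omega), ih (by omega)]
      have := (hπ (k+1) (by simp; omega)).ne'
      simp only [hf, Nat.add_sub_cancel]
      field_simp; ring
  have hrec : ∀ k, 1 ≤ k → k < n → (f k - f (k+1)) * ν k = l * e k := by
    intro k hk1 hk2
    obtain ⟨k, rfl⟩ : ∃ j, k = j + 1 := ⟨k-1, by omega⟩
    have q1 := (hπ (k+1) (by simp; omega)).ne'
    have q2 := (hπ (k+2) (by simp; omega)).ne'
    have q3 := (hν (k+1) (by simp; omega)).ne'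
    have hE : e (k+2) = (1 + π (k+2) / π (k+1) - π (k+2) / ν (k+1) * l) * e (k+1)
        - π (k+2) / π (k+1) * e k := by simp only [he]; rw [EE]
    have f1 : f (k+1) = (e (k+1) - e k) / π (k+1) := rfl
    have f2 : f (k+1+1) = (e (k+2) - e (k+1)) / π (k+2) := rfl
    rw [f1, f2, hE]; field_simp; ring
  have habel : ∀ k, k + 1 ≤ n → ∑ j ∈ Icc 1 k, (f j - f (j+1)) * (f j - f (j+1)) * ν j =
      l * (∑ j ∈ Icc 1 (k+1), f j ^ 2 * π j - f (k+1) * e (k+1)) := by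
    intro k
    induction k with
    | zero =>
      intro _
      have h1 := hT 1 (by omega)
      simp at h1
      simp [← h1]; right; ring
    | succ k ih =>
      intro hk
      have h1 := hT (k+2) (by omega)
      rw [Finset.sum_Icc_succ_top (by omega), hT (k+1) (by omega)] at h1
      rw [Finset.sum_Icc_succ_top (by omega), ih (by omega),
        Finset.sum_Icc_succ_top (b := k+1) (by omega), mul_assoc, hrec (k+1) (by omega) (by omega)]
      simp only [show k + 1 + 1 = k + 2 from rfl] at h1 ⊢
      rw [← h1]; ring
  have hE := habel (n-1) (by omega)
  rw [Nat.sub_add_cancel (by omega)] at hE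
  have hen : e n = 0 := hl
  rw [hen, mul_zero, sub_zero] at hE
  have hmean : piMean n π f = 0 := by rw [piMean, hT n le_rfl, hen]
  have hV : varPi n π f = ∑ j ∈ Icc 1 n, f j ^ 2 * π j := by
    rw [varPi, hmean, piMean]; ring
  have hp1 := hπ 1 (by simp; omega)
  have hf1 : f 1 = 1 / π 1 := by simp [hf, he, EE]
  have hVpos : 0 < varPi n π f := by
    rw [hV]
    apply Finset.sum_pos' (fun i hi => mul_nonneg (sq_nonneg _) (hπ i hi).le)
    exact ⟨1, by simp; omega, by rw [hf1]; positivity⟩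
  have hEV : EForm n ν f f = l * varPi n π f := by rw [hV, EForm, hE]
  have := quad_nonneg n π ν hπ hπ1 gap hgap f
  rw [hEV] at this
  by_contra hcon
  have := mul_pos (sub_pos.2 (not_le.1 hcon)) hVpos
  linarith

theorem roots_pkg (n : ℕ) (π ν : ℕ → ℝ) (hπ : ∀ i ∈ Icc 1 n, 0 < π i)
    (hν : ∀ i ∈ Icc 1 (n - 1), 0 < ν i) :
    ∃ R : ℕ → ℝ, (∀ i, 1 ≤ i → i ≤ n - 1 → ∃ S : Finset ℝ,
        S.card = i ∧ (∀ x ∈ S, (0 : ℝ) < x) ∧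
        (∀ x : ℝ, Matrix.det (Amat π ν i x) = 0 ↔ x ∈ S) ∧
        R i ∈ S ∧ (∀ x ∈ S, R i ≤ x)) ∧
      (∀ i, 1 ≤ i → i ≤ n - 2 → R (i + 1) < R i) ∧
      (∀ i, 1 ≤ i → i ≤ n - 1 → ∀ x < R i, 0 < Matrix.det (Amat π ν i x)) ∧
      (∀ i, 1 ≤ i → i ≤ n - 1 → ∀ x, R i < x → (i = 1 ∨ x < R (i-1)) →
        Matrix.det (Amat π ν i x) < 0) := by
  set s : ℕ → ℝ := fun k => if k + 2 ≤ n then π (k+2) / π (k+1) else 1 with hs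
  set b : ℕ → ℝ := fun k => if k + 2 ≤ n then π (k+2) / ν (k+1) else 1 with hb
  have hspos : ∀ k, 0 < s k := by
    intro k
    simp only [hs]
    split_ifs with h
    · exact div_pos (hπ _ (by simp; omega)) (hπ _ (by simp; omega))
    · exact one_pos
  have hbpos : ∀ k, 0 < b k := by
    intro k
    simp only [hb]
    split_ifs with h
    · exact div_pos (hπ _ (by simp; omega)) (hν _ (by simp; omega))
    · exact one_pos
  have hdet : ∀ i, i + 1 ≤ n → ∀ x, (Amat π ν i x).det = EE s b (i+1) x := by
    intro i hi x
    rw [(det_EE π ν x i).1]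
    refine (EE_congr _ _ _ _ x i ?_).2
    intro k hk
    simp only [hs, hb]
    rw [if_pos (by omega), if_pos (by omega)]
    exact ⟨rfl, rfl⟩
  choose r S h1 h2 h3 h4 h5 h6 h7 h8 using roots_main s b hspos hbpos
  refine ⟨fun i => r (i-1), ?_, ?_, ?_, ?_⟩
  · intro i hi1 hi2
    obtain ⟨i, rfl⟩ : ∃ j, i = j + 1 := ⟨i-1, by omega⟩
    refine ⟨S i, h1 i, h2 i, ?_, h4 i, h5 i⟩
    intro x
    rw [hdet (i+1) (by omega)]; exact h3 i x
  · intro i hi1 hi2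
    obtain ⟨i, rfl⟩ : ∃ j, i = j + 1 := ⟨i-1, by omega⟩
    exact (h7 (i+1) (r i) ((h3 i _).2 (h4 i)) (h6 i)).1
  · intro i hi1 hi2 x hx
    obtain ⟨i, rfl⟩ : ∃ j, i = j + 1 := ⟨i-1, by omega⟩
    rw [hdet (i+1) (by omega)]; exact h6 i x hx
  · intro i hi1 hi2 x hx hx2
    obtain ⟨i, rfl⟩ : ∃ j, i = j + 1 := ⟨i-1, by omega⟩
    rw [hdet (i+1) (by omega)]
    rcases i with _ | i
    · exact h8 0 rfl x hx
    · rcases hx2 with h | h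
      · omega
      · exact (h7 (i+1) (r i) ((h3 i _).2 (h4 i)) (h6 i)).2 x hx h.le

theorem stmt7 (n : ℕ) (hn : 3 ≤ n) (π ν : ℕ → ℝ)
    (hπ : ∀ i ∈ Finset.Icc 1 n, 0 < π i)
    (hπ1 : ∑ i ∈ Finset.Icc 1 n, π i = 1)
    (hν : ∀ i ∈ Finset.Icc 1 (n - 1), 0 < ν i)
    (hν0 : ν 0 = 0) (hνn : ν n = 0)
    (gap : ℝ) (hgap : IsSpectralGap n π ν gap) :
    ∃ lamRoot : ℕ → ℝ,
      -- for every `1 ≤ i ≤ n−1`, `det A_i(λ)` has exactly `i` distinct positive real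
      -- roots, and `lamRoot i` is the smallest of them
      (∀ i, 1 ≤ i → i ≤ n - 1 → ∃ S : Finset ℝ,
        S.card = i ∧ (∀ x ∈ S, (0 : ℝ) < x) ∧
        (∀ x : ℝ, Matrix.det (Amat π ν i x) = 0 ↔ x ∈ S) ∧
        lamRoot i ∈ S ∧ (∀ x ∈ S, lamRoot i ≤ x)) ∧
      -- (1) `λ^G = λ^{(n−1)} < λ^{(n−2)} < ⋯ < λ^{(1)}`
      gap = lamRoot (n - 1) ∧
      (∀ i, 1 ≤ i → i ≤ n - 2 → lamRoot (i + 1) < lamRoot i) ∧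
      -- statements about `φ_λ` (`λ^{(0)} := ∞` is encoded by the disjunct `i = 1`)
      (∀ lam : ℝ, 0 < lam → ∀ φ : ℕ → ℝ, φ 1 = -1 → PosPartRec n π ν lam φ →
        -- (2)
        (∀ i, 1 ≤ i → i ≤ n - 2 → lamRoot i ≤ lam → (i = 1 ∨ lam < lamRoot (i - 1)) →
          φ i < φ (i + 1) ∧ φ (i + 1) = φ (i + 2)) ∧
        -- (3)
        (lam < lamRoot (n - 2) → φ (n - 1) < φ n) ∧
        -- `T_{i+1}(λ) = −π(1) det A_i(λ)` on `(0, λ^{(i−1)})` and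
        -- `(λ − λ^{(i)}) T_{i+1}(λ) > 0` off `λ^{(i)}`
        (∀ i, 1 ≤ i → i ≤ n - 1 →
          ((i = 1 ∨ lam < lamRoot (i - 1)) →
            (∑ j ∈ Finset.Icc 1 (i + 1), φ j * π j) =
              -(π 1) * Matrix.det (Amat π ν i lam)) ∧
          (lam ≠ lamRoot i →
            0 < (lam - lamRoot i) * ∑ j ∈ Finset.Icc 1 (i + 1), φ j * π j))) := by
  
  obtain ⟨R, hR1, hR2, hR3, hR4⟩ := roots_pkg n π ν hπ hν
  have hanti : ∀ i j, 1 ≤ i → i ≤ j → j ≤ n - 1 → R j ≤ R i := by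
    intro i j hi hij
    induction j, hij using Nat.le_induction with
    | base => simp
    | succ j hj ih => exact fun h => (hR2 j (by omega) (by omega)).le.trans (ih (by omega))
  have hdz : ∀ i, 1 ≤ i → i ≤ n - 1 → Matrix.det (Amat π ν i (R i)) = 0 := by
    intro i hi1 hi2
    obtain ⟨S, _, _, h3, h4, _⟩ := hR1 i hi1 hi2
    exact (h3 _).2 h4
  refine ⟨R, hR1, ?_, hR2, ?_⟩
  · have hEn : ∀ x, Matrix.det (Amat π ν (n-1) x) =
        EE (fun k => π (k+2) / π (k+1)) (fun k => π (k+2) / ν (k+1)) n x := by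
      intro x
      rw [(det_EE π ν x (n-1)).1, Nat.sub_add_cancel (by omega)]
    apply le_antisymm
    · apply gap_le n hn π ν hπ hπ1 hν gap hgap
      rw [← hEn]; exact hdz (n-1) (by omega) le_rfl
    · obtain ⟨S, _, _, h3, _, h5⟩ := hR1 (n-1) (by omega) le_rfl
      apply h5
      rw [← h3, hEn]
      exact gap_root n hn π ν hπ hπ1 hν gap hgap
  intro lam hlam φ hφ1 hrec
  have hp1 := hπ 1 (by simp; omega)
  -- the linear regime
  have hlin : ∀ i, 1 ≤ i → i ≤ n - 1 → (i = 1 ∨ lam < R (i-1)) →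
      (∑ j ∈ Finset.Icc 1 (i + 1), φ j * π j) = -(π 1) * Matrix.det (Amat π ν i lam) ∧
      (∑ j ∈ Finset.Icc 1 i, φ j * π j) < 0 ∧ φ i < φ (i+1) := by
    intro i hi1 hi2 hi
    have hpos : ∀ j < i, 0 < EE (fun k => π (k+2) / π (k+1)) (fun k => π (k+2) / ν (k+1)) (j+1) lam := by
      intro j hj
      rcases Nat.eq_zero_or_pos j with h | h
      · subst h; simp [EE]
      · rw [← (det_EE π ν lam j).1]
        rcases hi with h' | h'
        · omega
        · exact hR3 j h (by omega) _ (h'.trans_le (hanti j (i-1) h (by omega) (by omega)))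
    obtain ⟨a1, a2, a3⟩ := T_phi n π ν hπ hν hν0 lam hlam φ hφ1 hrec i (by omega) hpos
    have hTneg : (∑ j ∈ Finset.Icc 1 i, φ j * π j) < 0 := by
      rw [a1]
      have := hpos (i-1) (by omega)
      rw [Nat.sub_add_cancel hi1] at this
      have := mul_pos hp1 this
      linarith
    refine ⟨?_, hTneg, ?_⟩
    · rw [a2, (det_EE π ν lam i).1]
    · have hni := hν i (by simp; omega)
      have h1 : (φ i - φ (i+1)) * ν i < 0 := by
        rw [a3]; exact mul_neg_of_pos_of_neg hlam hTneg
      by_contra hcon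
      have := mul_nonneg (sub_nonneg.2 (not_lt.1 hcon)) hni.le
      linarith
  -- the first index where the root is passed
  have hpass : ∀ i, 1 ≤ i → i ≤ n - 1 → (i = 1 ∨ lam < R (i-1)) → R i ≤ lam →
      0 ≤ ∑ j ∈ Finset.Icc 1 (i + 1), φ j * π j := by
    intro i hi1 hi2 hi hl
    rw [(hlin i hi1 hi2 hi).1]
    have : Matrix.det (Amat π ν i lam) ≤ 0 := by
      rcases hl.eq_or_lt with h | h
      · rw [← h, hdz i hi1 hi2]
      · exact (hR4 i hi1 hi2 lam h hi).le
    have := mul_nonneg hp1.le (neg_nonneg.2 this)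
    linarith
  have hphipos : ∀ i, 1 ≤ i → i ≤ n - 1 → (i = 1 ∨ lam < R (i-1)) → R i ≤ lam → 0 < φ (i+1) := by
    intro i hi1 hi2 hi hl
    have h1 := hpass i hi1 hi2 hi hl
    have h2 := (hlin i hi1 hi2 hi).2.1
    rw [Finset.sum_Icc_succ_top (by omega)] at h1
    have h3 := hπ (i+1) (by simp; omega)
    by_contra hcon
    have := mul_nonneg (neg_nonneg.2 (not_lt.1 hcon)) h3.le
    linarith
  refine ⟨?_, ?_, ?_⟩
  · intro i hi1 hi2 hl hi
    obtain ⟨a1, a2, a3⟩ := hlin i hi1 (by omega) hi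
    refine ⟨a3, ?_⟩
    have h1 := hpass i hi1 (by omega) hi hl
    have hpos : ∀ j < i, 0 < EE (fun k => π (k+2) / π (k+1)) (fun k => π (k+2) / ν (k+1)) (j+1) lam := by
      intro j hj
      rcases Nat.eq_zero_or_pos j with h | h
      · subst h; simp [EE]
      · rw [← (det_EE π ν lam j).1]
        rcases hi with h' | h'
        · omega
        · exact hR3 j h (by omega) _ (h'.trans_le (hanti j (i-1) h (by omega) (by omega)))
    have a4 := (T_phi n π ν hπ hν hν0 lam hlam φ hφ1 hrec i (by omega) hpos).2.2
    have hr := hrec (i+1) (by omega) (by omega)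
    rw [Nat.add_sub_cancel, max_eq_right] at hr
    · rw [show i + 2 = i + 1 + 1 from rfl, hr]; simp
    · rw [Finset.sum_Icc_succ_top (by omega)] at h1
      have := mul_nonneg hlam.le h1
      linarith
  · intro hl
    have h := (hlin (n-1) (by omega) le_rfl (Or.inr (by
      rw [show n - 1 - 1 = n - 2 by omega]; exact hl))).2.2
    rwa [Nat.sub_add_cancel (by omega)] at h
  · intro i hi1 hi2
    refine ⟨fun hi => (hlin i hi1 hi2 hi).1, ?_⟩
    intro hne
    rcases lt_or_gt_of_ne hne with hlt | hgt
    · have hi : i = 1 ∨ lam < R (i-1) := by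
        by_cases h : i = 1
        · exact Or.inl h
        · exact Or.inr (hlt.trans_le (hanti (i-1) i (by omega) (by omega) hi2))
      have hd := mul_pos hp1 (hR3 i hi1 hi2 lam hlt)
      rw [(hlin i hi1 hi2 hi).1]
      exact mul_pos_of_neg_of_neg (by linarith) (by linarith)
    · apply mul_pos (by linarith)
      classical
      have hex : ∃ m, 1 ≤ m ∧ R m ≤ lam := ⟨i, hi1, hgt.le⟩
      obtain ⟨hm1, hm2⟩ := Nat.find_spec hex
      have hmi : Nat.find hex ≤ i := Nat.find_min' hex ⟨hi1, hgt.le⟩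
      have hmin : ∀ k < Nat.find hex, ¬ (1 ≤ k ∧ R k ≤ lam) := fun k hk => Nat.find_min hex hk
      generalize Nat.find hex = m at *
      have hm : m = 1 ∨ lam < R (m-1) := by
        by_cases h : m = 1
        · exact Or.inl h
        · right
          by_contra hcon
          exact hmin (m-1) (by omega) ⟨by omega, not_lt.1 hcon⟩
      rcases hmi.eq_or_lt with h | h
      · subst h
        rw [(hlin m hi1 hi2 hm).1]
        have := mul_pos hp1 (neg_pos.2 (hR4 m hi1 hi2 lam hgt hm))
        linarith
      · have hb := hpass m hm1 (by omega) hm hm2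
        have hpp := hphipos m hm1 (by omega) hm hm2
        have key : ∀ k, m + 1 ≤ k → k ≤ i → 0 < ∑ j ∈ Finset.Icc 1 (k + 1), φ j * π j := by
          intro k hk
          induction k, hk using Nat.le_induction with
          | base =>
            intro hk
            rw [Finset.sum_Icc_succ_top (by omega)]
            have := mul_pos (hpp.trans_le (phi_mono n π ν hν lam φ hrec (m+1) (by omega) (m+1+1)
              (by omega) (by omega))) (hπ (m+1+1) (by simp; omega))
            linarith
          | succ k hk ih =>
            intro hki
            rw [Finset.sum_Icc_succ_top (by omega)]
            have := mul_pos (hpp.trans_le (phi_mono n π ν hν lam φ hrec (m+1) (by omega) (k+1+1)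
              (by omega) (by omega))) (hπ (k+1+1) (by simp; omega))
            linarith [ih (by omega)]
        exact key i h le_rfl
end

section
/- Assume n ≥ 3. The polynomial det A_{n−2}(λ) has exactly n−2 distinct roots α_1 < ⋯ < α_{n−2}, and, setting α_0 := 0 and α_{n−1} := ∞: (1) λ^G_j < α_j < λ^G_{j+1} for 1 ≤ j ≤ n−2; (2) for each 1 ≤ j ≤ n−1, the function ξ_λ is of type j for all λ ∈ (α_{j−1}, α_j]. -/
open Finset

/-- `ζ` is an eigenvector of `M^G_{π,ν}` with eigenvalue `lam`, expressed through the
Euler–Lagrange equations (recall the conventions `ν 0 = 0`, `ν n = 0`). -/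
def IsEigen (n : ℕ) (π ν : ℕ → ℝ) (lam : ℝ) (ζ : ℕ → ℝ) : Prop :=
  (∃ k ∈ Finset.Icc 1 n, ζ k ≠ 0) ∧
  ∀ k ∈ Finset.Icc 1 n,
    lam * (π k * ζ k) = (ζ k - ζ (k - 1)) * ν (k - 1) + (ζ k - ζ (k + 1)) * ν k

/-- `ξ` is the function `ξ_λ`: `ξ(1) = −1` and
`ξ(k+1) = ξ(k) + ([ξ(k)−ξ(k−1)] ν(k−1,k) − λ π(k) ξ(k))/ν(k,k+1)` for `1 ≤ k < n`. -/
def XiRec (n : ℕ) (π ν : ℕ → ℝ) (lam : ℝ) (ξ : ℕ → ℝ) : Prop :=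
  ξ 1 = -1 ∧ ∀ k, 1 ≤ k → k < n →
    ξ (k + 1) = ξ k + ((ξ k - ξ (k - 1)) * ν (k - 1) - lam * (π k * ξ k)) / ν k

/-- `f` is of type `i` on `{1,…,n}` with peak-valley points `a 1 < b 1 ≤ a 2 < b 2 ≤ ⋯
≤ a i < b i ≤ n`. -/
def IsTypeWith (n : ℕ) (f : ℕ → ℝ) (i : ℕ) (a b : ℕ → ℕ) : Prop :=
  a 1 = 1 ∧ b i ≤ n ∧
  (∀ j, 1 ≤ j → j ≤ i → a j < b j) ∧
  (∀ j, 1 ≤ j → j < i → b j ≤ a (j + 1) ∧ a (j + 1) ≤ b j + 1) ∧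
  (∀ j, 1 ≤ j → j ≤ i →
    StrictMonoOn f (Set.Icc (a j) (b j)) ∨ StrictAntiOn f (Set.Icc (a j) (b j))) ∧
  (∀ j, 1 ≤ j → j < i →
    (f (a j) - f (a j + 1)) * (f (a (j + 1)) - f (a (j + 1) + 1)) < 0) ∧
  (∀ j, 1 ≤ j → j < i → f (a (j + 1)) = f (b j)) ∧
  (∀ k, b i ≤ k → k ≤ n → f k = f (b i))

/-- `f` is of type `i` on `{1,…,n}`. -/
def IsType (n : ℕ) (f : ℕ → ℝ) (i : ℕ) : Prop :=
  ∃ a b : ℕ → ℕ, IsTypeWith n f i a b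

namespace SturmAux

/-- Sturm sequence polynomials. -/
noncomputable def P (p q c : ℕ → ℝ) : ℕ → Polynomial ℝ
  | 0 => 1
  | 1 => Polynomial.C (p 0) - Polynomial.C (q 0) * Polynomial.X
  | (k+2) => (Polynomial.C (p (k+1)) - Polynomial.C (q (k+1)) * Polynomial.X) * P p q c (k+1)
      - Polynomial.C (c (k+1)) * P p q c k

noncomputable def D (p q c : ℕ → ℝ) (k : ℕ) (x : ℝ) : ℝ := (P p q c k).eval x

lemma D_zero (p q c : ℕ → ℝ) (x : ℝ) : D p q c 0 x = 1 := by simp [D, P]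
lemma D_one (p q c : ℕ → ℝ) (x : ℝ) : D p q c 1 x = p 0 - q 0 * x := by simp [D, P]
lemma D_succ (p q c : ℕ → ℝ) (k : ℕ) (x : ℝ) :
    D p q c (k+2) x = (p (k+1) - q (k+1) * x) * D p q c (k+1) x - c (k+1) * D p q c k x := by
  simp [D, P]

lemma P_deg (p q c : ℕ → ℝ) (hq : ∀ k, 0 < q k) (k : ℕ) :
    ((P p q c k).natDegree ≤ k ∧ 0 < (-1)^k * (P p q c k).coeff k) ∧
    ((P p q c (k+1)).natDegree ≤ k+1 ∧ 0 < (-1)^(k+1) * (P p q c (k+1)).coeff (k+1)) := by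
  induction k with
  | zero =>
    refine ⟨by simp [P], ?_, ?_⟩
    · simp only [P]
      compute_degree
    · simp [P, Polynomial.coeff_C]; exact hq 0
  | succ k ih =>
    refine ⟨ih.2, ?_, ?_⟩
    · simp only [P]
      refine (Polynomial.natDegree_sub_le _ _).trans (max_le ?_ ?_)
      · refine (Polynomial.natDegree_mul_le).trans ?_
        have h1 : (Polynomial.C (p (k+1)) - Polynomial.C (q (k+1)) * Polynomial.X : Polynomial ℝ).natDegree ≤ 1 := by
          compute_degree
        have := ih.2.1
        omega
      · refine (Polynomial.natDegree_C_mul_le _ _).trans ?_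
        have := ih.1.1
        omega
    · have h1 : (P p q c (k+1)).coeff (k+2) = 0 :=
        Polynomial.coeff_eq_zero_of_natDegree_lt (by have := ih.2.1; omega)
      have h2 : (P p q c k).coeff (k+2) = 0 :=
        Polynomial.coeff_eq_zero_of_natDegree_lt (by have := ih.1.1; omega)
      have h3 : (P p q c (k+2)).coeff (k+2) = - q (k+1) * (P p q c (k+1)).coeff (k+1) := by
        simp only [P, sub_mul, Polynomial.coeff_sub, Polynomial.coeff_C_mul, mul_assoc,
          Polynomial.coeff_X_mul, h1, h2]
        ring
      show 0 < (-1)^(k+2) * (P p q c (k+2)).coeff (k+2)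
      rw [h3]
      have := mul_pos (hq (k+1)) ih.2.2
      rw [pow_succ]
      linarith

def Good (p q c : ℕ → ℝ) (k : ℕ) (r : ℕ → ℝ) : Prop :=
  (∀ i j, 1 ≤ i → i < j → j ≤ k → r i < r j) ∧
  ∃ L : ℝ, 0 < L ∧ ∀ x, D p q c k x = L * ∏ j ∈ Finset.Icc 1 k, (r j - x)

def Inter (k : ℕ) (r s : ℕ → ℝ) : Prop :=
  ∀ j, 1 ≤ j → j ≤ k → s j < r j ∧ r j < s (j+1)

def Loc (k : ℕ) (r : ℕ → ℝ) (x : ℝ) (N : ℕ) : Prop :=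
  N ≤ k ∧ (∀ i, 1 ≤ i → i ≤ N → r i < x) ∧ (∀ i, N < i → i ≤ k → x ≤ r i)

lemma Good.of_roots {p q c : ℕ → ℝ} (hq : ∀ k, 0 < q k) {k : ℕ} {r : ℕ → ℝ}
    (hm : ∀ i j, 1 ≤ i → i < j → j ≤ k → r i < r j)
    (hr : ∀ i, 1 ≤ i → i ≤ k → D p q c k (r i) = 0) : Good p q c k r := by
  refine ⟨hm, ?_⟩
  obtain ⟨⟨hd, hl⟩, -⟩ := P_deg p q c hq k
  refine ⟨_, hl, fun x => ?_⟩
  have hinj : Set.InjOn r (Finset.Icc 1 k : Finset ℕ) := by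
    intro i hi j hj hij
    simp only [Finset.coe_Icc, Set.mem_Icc] at hi hj
    rcases lt_trichotomy i j with h | h | h
    · have := hm i j hi.1 h hj.2; linarith
    · exact h
    · have := hm j i hj.1 h hi.2; linarith
  have key : P p q c k = Polynomial.C ((P p q c k).coeff k) *
      ∏ j ∈ Finset.Icc 1 k, (Polynomial.X - Polynomial.C (r j)) := by
    set Q : Polynomial ℝ := ∏ j ∈ Finset.Icc 1 k, (Polynomial.X - Polynomial.C (r j)) with hQ
    have hQm : Q.Monic := Polynomial.monic_prod_of_monic _ _ (fun j _ => Polynomial.monic_X_sub_C _)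
    have hQd : Q.natDegree = k := by
      rw [hQ, Polynomial.natDegree_prod_of_monic _ _ (fun j _ => Polynomial.monic_X_sub_C _)]
      simp
    rw [← sub_eq_zero]
    refine Polynomial.eq_zero_of_degree_lt_of_eval_index_eq_zero (v := r) (s := Finset.Icc 1 k) hinj ?_ ?_
    · rw [Nat.card_Icc, Nat.add_sub_cancel, Polynomial.degree_lt_iff_coeff_zero]
      intro m hkm
      rcases hkm.eq_or_lt with rfl | h
      · have : Q.coeff k = 1 := by
          have := hQm.coeff_natDegree; rwa [hQd] at this
        simp [this]
      · rw [Polynomial.coeff_sub, Polynomial.coeff_C_mul,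
          Polynomial.coeff_eq_zero_of_natDegree_lt (by omega),
          Polynomial.coeff_eq_zero_of_natDegree_lt (p := Q) (by omega)]
        simp
    · intro i hi
      have h1 : Q.eval (r i) = 0 := by
        rw [hQ, Polynomial.eval_prod]
        exact Finset.prod_eq_zero hi (by simp)
      rw [Finset.mem_Icc] at hi
      have h2 := hr i hi.1 hi.2
      rw [D] at h2
      simp [h1, h2]
  have h3 : ∏ j ∈ Finset.Icc 1 k, (r j - x) = (-1)^k * ∏ j ∈ Finset.Icc 1 k, (x - r j) := by
    have : ∀ j ∈ Finset.Icc 1 k, r j - x = (-1) * (x - r j) := fun j _ => by ring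
    rw [Finset.prod_congr rfl this, Finset.prod_mul_distrib]
    simp
  rw [D, h3]
  conv_lhs => rw [key]
  rw [Polynomial.eval_mul, Polynomial.eval_prod]
  simp only [Polynomial.eval_C, Polynomial.eval_sub, Polynomial.eval_X]
  have h4 : ((-1:ℝ)^k) * (-1)^k = 1 := by rw [← mul_pow]; simp
  linear_combination (-(P p q c k).coeff k * ∏ j ∈ Finset.Icc 1 k, (x - r j)) * h4

lemma Good.root {p q c : ℕ → ℝ} {k : ℕ} {r : ℕ → ℝ} (h : Good p q c k r) {i : ℕ}
    (h1 : 1 ≤ i) (h2 : i ≤ k) : D p q c k (r i) = 0 := by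
  obtain ⟨-, L, hL, h⟩ := h
  rw [h, Finset.prod_eq_zero (i := i) (by simp [h1, h2]) (by simp), mul_zero]

lemma Good.eq_of_root {p q c : ℕ → ℝ} {k : ℕ} {r : ℕ → ℝ} (h : Good p q c k r) {x : ℝ}
    (h0 : D p q c k x = 0) : ∃ i, 1 ≤ i ∧ i ≤ k ∧ x = r i := by
  obtain ⟨-, L, hL, h⟩ := h
  rw [h, mul_eq_zero, Finset.prod_eq_zero_iff] at h0
  rcases h0 with h0 | ⟨i, hi, h0⟩
  · linarith
  · rw [Finset.mem_Icc] at hi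
    exact ⟨i, hi.1, hi.2, by linarith⟩

lemma Good.sign {p q c : ℕ → ℝ} {k : ℕ} {r : ℕ → ℝ} (h : Good p q c k r) {x : ℝ} {N : ℕ}
    (hl : Loc k r x N) (h0 : D p q c k x ≠ 0) : 0 < (-1)^N * D p q c k x := by
  have hne : ∀ i, 1 ≤ i → i ≤ k → x ≠ r i := fun i h1 h2 h3 => h0 (h3 ▸ h.root h1 h2)
  obtain ⟨-, L, hL, h⟩ := h
  obtain ⟨hN, ha, hb⟩ := hl
  have e : ((-1:ℝ))^N = ∏ j ∈ Finset.Icc 1 k, (if j ≤ N then (-1:ℝ) else 1) := by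
    rw [Finset.prod_ite]
    have : (Finset.Icc 1 k).filter (fun j => j ≤ N) = Finset.Icc 1 N := by
      ext j; simp; omega
    rw [this]; simp
  have : 0 < ∏ j ∈ Finset.Icc 1 k, ((if j ≤ N then (-1:ℝ) else 1) * (r j - x)) := by
    apply Finset.prod_pos
    intro j hj
    rw [Finset.mem_Icc] at hj
    split_ifs with hjN
    · have := ha j hj.1 hjN; linarith
    · have := hb j (by omega) hj.2
      have := lt_of_le_of_ne this (hne j hj.1 hj.2); linarith
  rw [h, e]
  rw [Finset.prod_mul_distrib] at this
  have := mul_pos hL this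
  linarith

open Filter in
lemma D_bot (p q c : ℕ → ℝ) (hq : ∀ k, 0 < q k) (hc : ∀ k, 0 < c k) (k : ℕ) :
    ∀ᶠ x in atBot, 0 < D p q c k x ∧ D p q c k x ≤ D p q c (k+1) x := by
  have hlin : ∀ k (B : ℝ), ∀ᶠ x in atBot, B ≤ p k - q k * x := by
    intro k B
    filter_upwards [eventually_le_atBot ((p k - B) / q k)] with x hx
    rw [le_div_iff₀ (hq k)] at hx
    linarith
  induction k with
  | zero =>
    filter_upwards [hlin 0 1] with x hx
    rw [D_zero, D_one]; exact ⟨one_pos, hx⟩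
  | succ k ih =>
    filter_upwards [ih, hlin (k+1) (1 + c (k+1))] with x h hx
    refine ⟨h.1.trans_le h.2, ?_⟩
    rw [D_succ]
    nlinarith [mul_le_mul_of_nonneg_right hx (h.1.trans_le h.2).le, mul_le_mul_of_nonneg_left h.2 (hc (k+1)).le]

open Filter in
lemma D_top (p q c : ℕ → ℝ) (hq : ∀ k, 0 < q k) (hc : ∀ k, 0 < c k) (k : ℕ) :
    ∀ᶠ x in atTop, 0 < (-1)^k * D p q c k x ∧ (-1)^k * D p q c k x ≤ (-1)^(k+1) * D p q c (k+1) x := by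
  have hlin : ∀ k (B : ℝ), ∀ᶠ x in atTop, B ≤ - (p k - q k * x) := by
    intro k B
    filter_upwards [eventually_ge_atTop ((p k + B) / q k)] with x hx
    rw [div_le_iff₀ (hq k)] at hx
    linarith
  induction k with
  | zero =>
    filter_upwards [hlin 0 1] with x hx
    rw [D_zero, D_one]; constructor
    · norm_num
    · norm_num; linarith
  | succ k ih =>
    filter_upwards [ih, hlin (k+1) (1 + c (k+1))] with x h hx
    refine ⟨h.1.trans_le h.2, ?_⟩
    rw [D_succ]
    have e : (-1:ℝ)^(k+1+1) * ((p (k+1) - q (k+1) * x) * D p q c (k+1) x - c (k+1) * D p q c k x)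
      = - (p (k+1) - q (k+1) * x) * ((-1)^(k+1) * D p q c (k+1) x) - c (k+1) * ((-1)^k * D p q c k x) := by
      ring
    rw [e]
    nlinarith [mul_le_mul_of_nonneg_right hx (h.1.trans_le h.2).le, mul_le_mul_of_nonneg_left h.2 (hc (k+1)).le]

lemma D_cont (p q c : ℕ → ℝ) (k : ℕ) : Continuous (D p q c k) := (P p q c k).continuous

lemma step (p q c : ℕ → ℝ) (hq : ∀ k, 0 < q k) (hc : ∀ k, 0 < c k) (k : ℕ) (r s : ℕ → ℝ)
    (hr : Good p q c k r) (hs : Good p q c (k+1) s) (hi : Inter k r s) :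
    ∃ t, Good p q c (k+2) t ∧ Inter (k+1) s t := by
  obtain ⟨x0, hx0, hx0'⟩ := ((D_bot p q c hq hc (k+2)).and (Filter.eventually_lt_atBot (s 1))).exists
  obtain ⟨x1, hx1, hx1', hx01⟩ := ((D_top p q c hq hc (k+2)).and
    ((Filter.eventually_gt_atTop (s (k+1))).and (Filter.eventually_gt_atTop x0))).exists
  obtain ⟨S, hS⟩ : ∃ S : ℕ → ℝ, S = fun i => if i = 0 then x0 else if i ≤ k+1 then s i else x1 :=
    ⟨_, rfl⟩
  have hSs : ∀ i, 1 ≤ i → i ≤ k+1 → S i = s i := by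
    intro i h1 h2; rw [hS]; simp [h2]; omega
  have hS0 : S 0 = x0 := by rw [hS]; simp
  have hSe : S (k+2) = x1 := by rw [hS]; simp
  have hSstep : ∀ i, i ≤ k+1 → S i < S (i+1) := by
    intro i h
    rcases Nat.eq_zero_or_pos i with rfl | h1
    · rw [hS0, hSs 1 le_rfl (by omega)]; exact hx0'
    · rcases h.eq_or_lt with rfl | h2
      · rw [hSs _ h1 le_rfl, hSe]; exact hx1'
      · rw [hSs _ h1 h, hSs _ (by omega) (by omega)]
        exact hs.1 _ _ h1 (by omega) (by omega)
  have hSsign : ∀ i, i ≤ k+2 → 0 < (-1)^i * D p q c (k+2) (S i) := by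
    intro i h
    rcases Nat.eq_zero_or_pos i with rfl | h1
    · rw [hS0]; simpa using hx0.1
    · rcases h.eq_or_lt with rfl | h2
      · rw [hSe]; exact hx1.1
      · rw [hSs _ h1 (by omega), D_succ, hs.root h1 (by omega)]
        have hloc : Loc k r (s i) (i-1) := by
          refine ⟨by omega, fun j h3 h4 => ?_, fun j h3 h4 => ?_⟩
          · have h5 := (hi j h3 (by omega)).2
            rcases (show j+1 ≤ i by omega).eq_or_lt with rfl | h6
            · exact h5
            · exact h5.trans (hs.1 _ _ (by omega) h6 (by omega))
          · have h5 := (hi j (by omega) h4).1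
            rcases (show i ≤ j by omega).eq_or_lt with rfl | h6
            · exact h5.le
            · exact ((hs.1 _ _ h1 h6 (by omega)).trans h5).le
        have hne : D p q c k (s i) ≠ 0 := by
          intro h0
          obtain ⟨j, h3, h4, h5⟩ := hr.eq_of_root h0
          have h6 := hi j h3 h4
          rw [← h5] at h6
          rcases le_or_gt i j with h7 | h7
          · rcases h7.eq_or_lt with rfl | h7
            · exact lt_irrefl _ h6.1
            · exact lt_asymm h6.1 (hs.1 _ _ h1 h7 (by omega))
          · rcases (show j+1 ≤ i by omega).eq_or_lt with rfl | h7
            · exact lt_irrefl _ h6.2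
            · exact lt_asymm h6.2 (hs.1 _ _ (by omega) h7 (by omega))
        have h8 := mul_pos (hc (k+1)) (hr.sign hloc hne)
        obtain ⟨i, rfl⟩ : ∃ i', i = i'+1 := ⟨i-1, by omega⟩
        rw [Nat.add_sub_cancel] at h8
        rw [pow_succ]
        linarith
  have hex : ∀ i, i ≤ k+1 → ∃ t, S i < t ∧ t < S (i+1) ∧ D p q c (k+2) t = 0 := by
    intro i h
    have h1 := hSsign i (by omega)
    have h2 := hSsign (i+1) (by omega)
    have hlt := hSstep i h
    have hcont : ContinuousOn (D p q c (k+2)) (Set.Icc (S i) (S (i+1))) := (D_cont p q c _).continuousOn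
    rcases neg_one_pow_eq_or ℝ i with e | e
    · rw [pow_succ, e] at h2; rw [e] at h1
      obtain ⟨t, ht, ht0⟩ := intermediate_value_Ioo' hlt.le hcont (show (0:ℝ) ∈ Set.Ioo _ _ from ⟨by linarith, by linarith⟩)
      exact ⟨t, ht.1, ht.2, ht0⟩
    · rw [pow_succ, e] at h2; rw [e] at h1
      obtain ⟨t, ht, ht0⟩ := intermediate_value_Ioo hlt.le hcont (show (0:ℝ) ∈ Set.Ioo _ _ from ⟨by linarith, by linarith⟩)
      exact ⟨t, ht.1, ht.2, ht0⟩
  choose! T hT1 hT2 hT3 using hex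
  have hSm : ∀ i j, i ≤ j → j ≤ k+2 → S i ≤ S j := by
    intro i j hij
    induction j, hij using Nat.le_induction with
    | base => intro _; exact le_rfl
    | succ j hij ih => intro h; exact (ih (by omega)).trans (hSstep j (by omega)).le
  refine ⟨fun j => T (j-1), Good.of_roots hq ?_ ?_, ?_⟩
  · intro i j h1 hij hj
    have a1 := hT2 (i-1) (by omega)
    have a2 := hT1 (j-1) (by omega)
    have a3 := hSm (i-1+1) (j-1) (by omega) (by omega)
    linarith
  · intro i h1 h2
    exact hT3 (i-1) (by omega)
  · intro j h1 h2
    have a1 := hT2 (j-1) (by omega)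
    have a2 := hT1 j (by omega)
    rw [Nat.sub_add_cancel h1] at a1
    rw [hSs j h1 h2] at a1 a2
    exact ⟨a1, by simpa using a2⟩

lemma exists_R (p q c : ℕ → ℝ) (hq : ∀ k, 0 < q k) (hc : ∀ k, 0 < c k) :
    ∃ R : ℕ → ℕ → ℝ, ∀ k, Good p q c k (R k) ∧ Inter k (R k) (R (k+1)) := by
  choose! nxt h1 h2 using step p q c hq hc
  let F : ℕ → (ℕ → ℝ) × (ℕ → ℝ) := fun k => Nat.rec (fun _ => 0, fun _ => p 0 / q 0)
    (fun k z => (z.2, nxt k z.1 z.2)) k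
  have hF : ∀ k, Good p q c k (F k).1 ∧ Good p q c (k+1) (F k).2 ∧ Inter k (F k).1 (F k).2 := by
    intro k
    induction k with
    | zero =>
      refine ⟨Good.of_roots hq (by intros; omega) (by intros; omega),
        Good.of_roots hq (by intros; omega) ?_, by intro j h1 h2; omega⟩
      intro i _ _
      show D p q c 1 (p 0 / q 0) = 0
      rw [D_one, mul_div_cancel₀ _ (hq 0).ne', sub_self]
    | succ k ih =>
      exact ⟨ih.2.1, h1 k _ _ ih.1 ih.2.1 ih.2.2, h2 k _ _ ih.1 ih.2.1 ih.2.2⟩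
  exact ⟨fun k => (F k).1, fun k => ⟨(hF k).1, (hF k).2.2⟩⟩

end SturmAux

namespace SturmAux

lemma Amat_det_rec (π ν : ℕ → ℝ) (k : ℕ) (x : ℝ) :
    (Amat π ν (k+2) x).det =
      (1 + π (k+3) / π (k+2) - x * π (k+3) / ν (k+2)) * (Amat π ν (k+1) x).det
        - π (k+3) / π (k+2) * (Amat π ν k x).det := by
  rw [Matrix.det_succ_row _ (Fin.last (k+1)), Fin.sum_univ_castSucc, Fin.sum_univ_castSucc]
  have hz : ∑ i : Fin k, (-1 : ℝ) ^ ((Fin.last (k+1) : ℕ) + (i.castSucc.castSucc : Fin (k+2)) : ℕ) *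
      Amat π ν (k+2) x (Fin.last (k+1)) i.castSucc.castSucc *
      ((Amat π ν (k+2) x).submatrix (Fin.last (k+1)).succAbove
        (i.castSucc.castSucc : Fin (k+2)).succAbove).det = 0 := by
    apply Finset.sum_eq_zero
    intro i _
    have : Amat π ν (k+2) x (Fin.last (k+1)) i.castSucc.castSucc = 0 := by
      have := i.2
      simp only [Amat, Matrix.of_apply, Fin.val_last, Fin.val_castSucc]
      rw [if_neg (by omega), if_neg (by omega), if_neg (by omega)]
    rw [this]; ring
  rw [hz]
  have h1 : Amat π ν (k+2) x (Fin.last (k+1)) (Fin.last k).castSucc = π (k+3) / π (k+2) := by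
    simp only [Amat, Matrix.of_apply, Fin.val_last, Fin.val_castSucc]
    rw [if_neg (by omega), if_neg (by omega), if_pos trivial]
  have h2 : Amat π ν (k+2) x (Fin.last (k+1)) (Fin.last (k+1)) =
      (1 + π (k+3) / π (k+2) - x * π (k+3) / ν (k+2)) := by
    simp [Amat, Matrix.of_apply]
  have h3 : (Amat π ν (k+2) x).submatrix (Fin.last (k+1)).succAbove (Fin.last (k+1)).succAbove
      = Amat π ν (k+1) x := by
    ext i j
    simp [Amat, Matrix.of_apply]
  have h4 : ((Amat π ν (k+2) x).submatrix (Fin.last (k+1)).succAbove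
      (Fin.last k).castSucc.succAbove).det = (Amat π ν k x).det := by
    rw [Matrix.det_succ_column _ (Fin.last k), Fin.sum_univ_castSucc, Finset.sum_eq_zero]
    · have e1 : ((Amat π ν (k+2) x).submatrix (Fin.last (k+1)).succAbove
          (Fin.last k).castSucc.succAbove) (Fin.last k) (Fin.last k) = 1 := by
        simp [Amat, Matrix.of_apply, Fin.succAbove]
      have e2 : (((Amat π ν (k+2) x).submatrix (Fin.last (k+1)).succAbove
          (Fin.last k).castSucc.succAbove).submatrix (Fin.last k).succAbove (Fin.last k).succAbove)
          = Amat π ν k x := by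
        ext i j
        simp [Amat, Matrix.of_apply, Fin.succAbove, Fin.lt_def]
      rw [e1, e2]
      simp [← two_mul]
    · intro i _
      have e1 : ((Amat π ν (k+2) x).submatrix (Fin.last (k+1)).succAbove
          (Fin.last k).castSucc.succAbove) i.castSucc (Fin.last k) = 0 := by
        have := i.2
        have h : ((Fin.last k).castSucc.succAbove (Fin.last k) : ℕ) = k+1 := by
          simp [Fin.succAbove]
        simp only [Amat, Matrix.of_apply, Matrix.submatrix_apply, h, Fin.succAbove_last,
          Fin.val_castSucc]
        rw [if_neg (by omega), if_neg (by omega), if_neg (by omega)]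
      rw [e1]; ring
  rw [h1, h2, h3, h4]
  simp only [Fin.val_last, Fin.val_castSucc]
  have e5 : (-1:ℝ)^(k+1+k) = -1 := Odd.neg_one_pow ⟨k, by ring⟩
  have e6 : (-1:ℝ)^(k+1+(k+1)) = 1 := Even.neg_one_pow ⟨k+1, by ring⟩
  rw [e5, e6]; ring

lemma Amat_det (π ν p q c : ℕ → ℝ) (m : ℕ)
    (hp : ∀ k < m, p k = 1 + π (k+2) / π (k+1))
    (hq : ∀ k < m, q k = π (k+2) / ν (k+1))
    (hc : ∀ k < m, c k = π (k+2) / π (k+1)) (x : ℝ) (k : ℕ) :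
    (k ≤ m → (Amat π ν k x).det = D p q c k x) ∧
    (k + 1 ≤ m → (Amat π ν (k+1) x).det = D p q c (k+1) x) := by
  induction k with
  | zero =>
    refine ⟨fun _ => by simp [D_zero], fun h => ?_⟩
    rw [D_one, hp 0 (by omega), hq 0 (by omega)]
    simp [Amat, Matrix.det_unique]
    ring
  | succ k ih =>
    refine ⟨ih.2, fun h => ?_⟩
    rw [Amat_det_rec, D_succ, ih.1 (by omega), ih.2 (by omega), hp (k+1) (by omega),
      hq (k+1) (by omega), hc (k+1) (by omega)]
    ring

lemma type_flat {n : ℕ} {f : ℕ → ℝ} {i : ℕ} {a b : ℕ → ℕ} (h : IsTypeWith n f i a b)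
    (hf : f (n+1) = f n) : IsTypeWith (n+1) f i a b := by
  obtain ⟨h1, h2, h3, h4, h5, h6, h7, h8⟩ := h
  refine ⟨h1, by omega, h3, h4, h5, h6, h7, fun k hk hkn => ?_⟩
  rcases hkn.eq_or_lt with rfl | hlt
  · rw [hf]; exact h8 n h2 le_rfl
  · exact h8 k hk (by omega)

lemma mono_ext {f : ℕ → ℝ} {a n : ℕ} (ha : a ≤ n) (h : StrictMonoOn f (Set.Icc a n))
    (hf : f n < f (n+1)) : StrictMonoOn f (Set.Icc a (n+1)) := by
  intro x hx y hy hxy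
  simp only [Set.mem_Icc] at hx hy
  rcases hy.2.eq_or_lt with rfl | hlt
  · exact (h.monotoneOn ⟨hx.1, by omega⟩ ⟨ha, le_rfl⟩ (by omega)).trans_lt hf
  · exact h ⟨hx.1, by omega⟩ ⟨hy.1, by omega⟩ hxy

lemma anti_ext {f : ℕ → ℝ} {a n : ℕ} (ha : a ≤ n) (h : StrictAntiOn f (Set.Icc a n))
    (hf : f (n+1) < f n) : StrictAntiOn f (Set.Icc a (n+1)) := by
  intro x hx y hy hxy
  simp only [Set.mem_Icc] at hx hy
  rcases hy.2.eq_or_lt with rfl | hlt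
  · exact hf.trans_le (h.antitoneOn ⟨hx.1, by omega⟩ ⟨ha, le_rfl⟩ (by omega))
  · exact h ⟨hx.1, by omega⟩ ⟨hy.1, by omega⟩ hxy

lemma type_extend {n : ℕ} {f : ℕ → ℝ} {i : ℕ} {a b : ℕ → ℕ} (hi : 1 ≤ i)
    (h : IsTypeWith n f i a b) (hb : b i = n)
    (hf : 0 < (f (a i + 1) - f (a i)) * (f (n+1) - f n)) :
    IsTypeWith (n+1) f i a (Function.update b i (n+1)) := by
  obtain ⟨h1, h2, h3, h4, h5, h6, h7, h8⟩ := h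
  have hai := h3 i hi le_rfl
  refine ⟨h1, by simp, fun j hj hji => ?_, fun j hj hji => ?_, fun j hj hji => ?_, h6,
    fun j hj hji => ?_, fun k hk hkn => ?_⟩
  · rcases hji.eq_or_lt with rfl | hlt
    · simp; omega
    · rw [Function.update_of_ne (by omega)]; exact h3 j hj hji
  · rw [Function.update_of_ne (by omega)]; exact h4 j hj hji
  · rcases hji.eq_or_lt with rfl | hlt
    · rw [Function.update_self]
      have h9 := h5 j hj le_rfl
      rw [hb] at h9 hai
      rcases h9 with h9 | h9
      · left
        refine mono_ext hai.le h9 ?_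
        have := h9 (a := a j) (b := a j + 1) ⟨le_rfl, hai.le⟩ ⟨by omega, by omega⟩ (by omega)
        have := (pos_iff_pos_of_mul_pos hf).1 (by linarith)
        linarith
      · right
        refine anti_ext hai.le h9 ?_
        have := h9 (a := a j) (b := a j + 1) ⟨le_rfl, hai.le⟩ ⟨by omega, by omega⟩ (by omega)
        have := (neg_iff_neg_of_mul_pos hf).1 (by linarith)
        linarith
    · rw [Function.update_of_ne (by omega)]; exact h5 j hj hji
  · rw [Function.update_of_ne (by omega)]; exact h7 j hj hji
  · rw [Function.update_self] at hk ⊢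
    rw [show k = n+1 by omega]

lemma type_new {n : ℕ} {f : ℕ → ℝ} {i : ℕ} {a b : ℕ → ℕ} (hi : 1 ≤ i)
    (h : IsTypeWith n f i a b) (hb : n ≤ b i + 1)
    (hf : (f (a i + 1) - f (a i)) * (f (n+1) - f n) < 0) :
    IsTypeWith (n+1) f (i+1) (Function.update a (i+1) n) (Function.update b (i+1) (n+1)) := by
  obtain ⟨h1, h2, h3, h4, h5, h6, h7, h8⟩ := h
  have ua : ∀ j, j ≤ i → Function.update a (i+1) n j = a j :=
    fun j hj => Function.update_of_ne (by omega) _ _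
  have ub : ∀ j, j ≤ i → Function.update b (i+1) (n+1) j = b j :=
    fun j hj => Function.update_of_ne (by omega) _ _
  refine ⟨by rw [ua 1 hi, h1], by simp, fun j hj hji => ?_, fun j hj hji => ?_, fun j hj hji => ?_,
    fun j hj hji => ?_, fun j hj hji => ?_, fun k hk hkn => ?_⟩
  · rcases hji.eq_or_lt with rfl | hlt
    · simp
    · rw [ua _ (by omega), ub _ (by omega)]; exact h3 j hj (by omega)
  · rw [ub j (by omega)]
    rcases (show j ≤ i by omega).eq_or_lt with rfl | hlt
    · rw [Function.update_self]; omega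
    · rw [ua _ (by omega)]; exact h4 j hj hlt
  · rcases hji.eq_or_lt with rfl | hlt
    · rw [Function.update_self, Function.update_self]
      have hne : f (n+1) - f n ≠ 0 := by intro h0; rw [h0] at hf; simp at hf
      rcases lt_or_gt_of_ne hne with h9 | h9
      · right
        exact anti_ext le_rfl (by simp) (by linarith)
      · left
        exact mono_ext le_rfl (by simp) (by linarith)
    · rw [ua _ (by omega), ub _ (by omega)]; exact h5 j hj (by omega)
  · rw [ua j (by omega)]
    rcases (show j ≤ i by omega).eq_or_lt with rfl | hlt
    · rw [Function.update_self]; linarith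
    · rw [ua _ (by omega)]; exact h6 j hj hlt
  · rw [ub j (by omega)]
    rcases (show j ≤ i by omega).eq_or_lt with rfl | hlt
    · rw [Function.update_self]; exact h8 n h2 le_rfl
    · rw [ua _ (by omega)]; exact h7 j hj hlt
  · rw [Function.update_self] at hk ⊢
    rw [show k = n+1 by omega]

lemma type_main (p q c : ℕ → ℝ) (R : ℕ → ℕ → ℝ)
    (hR : ∀ k, Good p q c k (R k) ∧ Inter k (R k) (R (k+1))) (x : ℝ) (f g : ℕ → ℝ) (k : ℕ) :
    ∀ N, (∀ m ≤ k, 0 < g m ∧ f (m+2) - f (m+1) = g m * D p q c m x) → Loc k (R k) x N →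
      ∃ a b, IsTypeWith (k+2) f (N+1) a b ∧
        0 < (-1)^N * (f (a (N+1) + 1) - f (a (N+1))) ∧
        (D p q c k x ≠ 0 → b (N+1) = k+2) ∧ k + 1 ≤ b (N+1) := by
  induction k with
  | zero =>
    intro N hg hl
    obtain rfl : N = 0 := by have := hl.1; omega
    have h0 := hg 0 le_rfl
    rw [D_zero] at h0
    have hlt : f 1 < f 2 := by have := h0.2; norm_num at this; linarith
    refine ⟨fun _ => 1, fun _ => 2, ⟨rfl, by simp, by simp, by intros; omega, ?_, by intros; omega,
      by intros; omega, ?_⟩, by simpa using hlt, fun _ => rfl, by simp⟩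
    · intros; left; exact mono_ext le_rfl (by simp) hlt
    · intro k h1 h2; dsimp only at h1; rw [show k = 2 by omega]
  | succ k ih =>
    intro N' hg hl
    obtain ⟨hN', hla, hlb⟩ := hl
    obtain ⟨hG, hI⟩ := hR k
    have hG' := (hR (k+1)).1
    have hgk := hg (k+1) le_rfl
    have hcase : (N' ≤ k ∧ (∀ i, 1 ≤ i → i ≤ N' → R k i < x)) ∨
        (1 ≤ N' ∧ (N' ≤ k → x ≤ R k N')) := by
      rcases Nat.eq_zero_or_pos N' with rfl | hpos
      · left; exact ⟨by omega, by intros; omega⟩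
      · by_cases h : N' ≤ k ∧ R k N' < x
        · left
          refine ⟨h.1, fun i h1 h2 => ?_⟩
          rcases h2.eq_or_lt with rfl | h3
          · exact h.2
          · exact (hI i h1 (by omega)).2.trans (hla (i+1) (by omega) (by omega))
        · right
          refine ⟨hpos, fun h1 => ?_⟩
          by_contra h2
          exact h ⟨h1, not_le.1 h2⟩
    rcases hcase with ⟨hk, hr⟩ | ⟨hpos, hr⟩
    · have hstrict : ∀ i, N' < i → i ≤ k → x < R k i := fun i h1 h2 =>
        (hlb i h1 (by omega)).trans_lt (hI i (by omega) h2).1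
      have hloc : Loc k (R k) x N' := ⟨hk, hr, fun i h1 h2 => (hstrict i h1 h2).le⟩
      have hne : D p q c k x ≠ 0 := by
        intro h0
        obtain ⟨i, h1, h2, h3⟩ := hG.eq_of_root h0
        rcases le_or_gt i N' with h4 | h4
        · exact (hr i h1 h4).ne h3.symm
        · exact (hstrict i h4 h2).ne h3
      obtain ⟨a, b, hT, hs, hb, -⟩ := ih N' (fun m hm => hg m (by omega)) hloc
      have hb := hb hne
      by_cases h0 : D p q c (k+1) x = 0
      · refine ⟨a, b, type_flat hT ?_, hs, fun h => absurd h0 h, by omega⟩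
        have := hgk.2
        rw [h0, mul_zero] at this
        exact sub_eq_zero.1 this
      · have hsg := hG'.sign ⟨hN', hla, hlb⟩ h0
        refine ⟨a, _, type_extend (by omega) hT hb ?_, hs, fun _ => by simp, by simp⟩
        rw [show f (k+2+1) - f (k+2) = _ from hgk.2]
        have e := mul_pos hs (mul_pos hgk.1 hsg)
        have e4 : ((-1:ℝ)^N') * (-1)^N' = 1 := by rw [← mul_pow]; simp
        calc 0 < _ := e
          _ = ((-1:ℝ)^N' * (-1)^N') * ((f (a (N'+1) + 1) - f (a (N'+1))) * (g (k+1) * D p q c (k+1) x)) := by ring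
          _ = _ := by rw [e4, one_mul]
    · obtain ⟨N, rfl⟩ : ∃ N, N' = N+1 := ⟨N'-1, by omega⟩
      have hloc : Loc k (R k) x N := by
        refine ⟨by omega, fun i h1 h2 => ?_, fun i h1 h2 => ?_⟩
        · exact (hI i h1 (by omega)).2.trans (hla (i+1) (by omega) (by omega))
        · rcases (show N+1 ≤ i by omega).eq_or_lt with rfl | h3
          · exact hr h2
          · exact (hlb i h3 (by omega)).trans (hI i (by omega) h2).1.le
      have h0 : D p q c (k+1) x ≠ 0 := by
        intro h0
        obtain ⟨i, h1, h2, h3⟩ := hG'.eq_of_root h0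
        rcases le_or_gt i (N+1) with h4 | h4
        · exact (hla i h1 h4).ne h3.symm
        · have h5 := (hI (i-1) (by omega) (by omega)).2
          rw [Nat.sub_add_cancel h1] at h5
          have h6 := hloc.2.2 (i-1) (by omega) (by omega)
          linarith
      obtain ⟨a, b, hT, hs, -, hb⟩ := ih N (fun m hm => hg m (by omega)) hloc
      have hsg := hG'.sign ⟨hN', hla, hlb⟩ h0
      have e := mul_pos hgk.1 hsg
      have e2 : f (k+2+1) - f (k+2) = g (k+1) * D p q c (k+1) x := hgk.2
      have e4 : ((-1:ℝ)^N) * (-1)^N = 1 := by rw [← mul_pow]; simp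
      refine ⟨_, _, type_new (by omega) hT (by omega) ?_, ?_, fun _ => by simp, by simp⟩
      · rw [e2]
        have e := mul_pos hs e
        have : (f (a (N+1) + 1) - f (a (N+1))) * (g (k+1) * D p q c (k+1) x) =
          - ((-1)^N * (f (a (N+1) + 1) - f (a (N+1))) * (g (k+1) * ((-1)^(N+1) * D p q c (k+1) x))) := by
          rw [pow_succ]
          linear_combination (-(f (a (N+1) + 1) - f (a (N+1))) * (g (k+1) * D p q c (k+1) x)) * e4
        rw [this]; linarith
      · rw [Function.update_self, e2]
        linarith

/-- flux recursion -/
lemma flux (n : ℕ) (π ν p q c : ℕ → ℝ)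
    (hπ : ∀ i, 1 ≤ i → i ≤ n → 0 < π i)
    (hν : ∀ i, 1 ≤ i → i < n → 0 < ν i)
    (hp : ∀ k < n-1, p k = 1 + π (k+2) / π (k+1))
    (hq : ∀ k < n-1, q k = π (k+2) / ν (k+1))
    (hc : ∀ k < n-1, c k = π (k+2) / π (k+1)) (x : ℝ) (f W : ℕ → ℝ)
    (m : ℕ) (hmn : m ≤ n) (hW0 : W 0 = 0)
    (hW : ∀ k, 1 ≤ k → k < n → W k = (f (k+1) - f k) * ν k)
    (hrec : ∀ k, 1 ≤ k → k ≤ m → W k = W (k-1) - x * (π k * f k)) (k : ℕ) :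
    (k + 1 ≤ m → W (k+1) = W 1 * D p q c k x) ∧
    (k + 2 ≤ m → W (k+2) = W 1 * D p q c (k+1) x) := by
  have base : ∀ k, k + 2 ≤ m → W (k+2) = (p k - q k * x) * W (k+1) - c k * W k := by
    intro k hk
    have h1 := hrec (k+1) (by omega) (by omega)
    have h2 := hrec (k+2) (by omega) hk
    have h3 := hW (k+1) (by omega) (by omega)
    rw [Nat.add_sub_cancel] at h1
    rw [show k+2-1 = k+1 from rfl] at h2
    have p1 := (hπ (k+1) (by omega) (by omega)).ne'
    have n1 := (hν (k+1) (by omega) (by omega)).ne'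
    rw [hp k (by omega), hq k (by omega), hc k (by omega)]
    have h4 : f (k+2) = f (k+1) + W (k+1) / ν (k+1) := by
      rw [h3]; field_simp; ring
    have h5 : x * f (k+1) = (W k - W (k+1)) / π (k+1) := by
      rw [h1]; field_simp; ring
    have h6 : W (k+2) = W (k+1) - π (k+2) * (x * f (k+1)) - x * π (k+2) * (W (k+1) / ν (k+1)) := by
      rw [h2, h4]; ring
    rw [h6, h5]; ring
  induction k with
  | zero =>
    refine ⟨fun _ => by rw [D_zero, mul_one], fun h => ?_⟩
    rw [base 0 h, hW0, D_one]; ring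
  | succ k ih =>
    refine ⟨ih.2, fun h => ?_⟩
    rw [base (k+1) h, D_succ, ih.1 (by omega), ih.2 (by omega)]; ring

lemma incr_unique (m : ℕ) (u v : ℕ → ℝ)
    (hu : ∀ i j, 1 ≤ i → i < j → j ≤ m → u i < u j)
    (hv : ∀ j, 1 ≤ j → j + 1 ≤ m → v j < v (j+1))
    (h : ∀ j, 1 ≤ j → j ≤ m → ∃ i, 1 ≤ i ∧ i ≤ m ∧ v j = u i) :
    ∀ j, 1 ≤ j → j ≤ m → v j = u j := by
  choose! σ h1 h2 h3 using h
  have hs : ∀ j, 1 ≤ j → j + 1 ≤ m → σ j < σ (j+1) := by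
    intro j hj hjm
    by_contra hcon
    have a := hv j hj hjm
    rw [h3 j hj (by omega), h3 (j+1) (by omega) hjm] at a
    rcases (not_lt.1 hcon).eq_or_lt with e | e
    · rw [e] at a; exact lt_irrefl _ a
    · exact lt_asymm a (hu _ _ (h1 _ (by omega) hjm) e (h2 _ hj (by omega)))
  have lo : ∀ j, 1 ≤ j → j ≤ m → j ≤ σ j := by
    intro j hj
    induction j, hj using Nat.le_induction with
    | base => intro h; exact h1 1 le_rfl h
    | succ j hj ih => intro h; have := hs j hj h; have := ih (by omega); omega
  have hi : ∀ d j, j + d = m → 1 ≤ j → σ j ≤ j := by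
    intro d
    induction d with
    | zero => intro j e hj; have := h2 j hj (by omega); omega
    | succ d ih => intro j e hj; have := hs j hj (by omega); have := ih (j+1) (by omega) (by omega); omega
  intro j hj hjm
  have a := lo j hj hjm
  have b := hi (m-j) j (by omega) hj
  rw [h3 j hj hjm, show σ j = j by omega]

end SturmAux

theorem stmt8 (n : ℕ) (hn : 3 ≤ n) (π ν : ℕ → ℝ)
    (hπ : ∀ i ∈ Finset.Icc 1 n, 0 < π i)
    (hπ1 : ∑ i ∈ Finset.Icc 1 n, π i = 1)
    (hν : ∀ i ∈ Finset.Icc 1 (n - 1), 0 < ν i)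
    (hν0 : ν 0 = 0) (hνn : ν n = 0)
    -- the (simple) eigenvalues `0 = λ^G_0 < λ^G_1 < ⋯ < λ^G_{n−1}` of `M^G_{π,ν}`
    (lamG : ℕ → ℝ) (hlamG0 : lamG 0 = 0)
    (hlamGmono : ∀ j, j + 1 ≤ n - 1 → lamG j < lamG (j + 1))
    (hlamGeig : ∀ j, j ≤ n - 1 → ∃ ζ : ℕ → ℝ, IsEigen n π ν (lamG j) ζ)
    (hlamGall : ∀ (μ : ℝ) (ζ : ℕ → ℝ), IsEigen n π ν μ ζ → ∃ j ≤ n - 1, μ = lamG j)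
    -- the family `λ ↦ ξ_λ`
    (ξ : ℝ → ℕ → ℝ) (hξ : ∀ lam : ℝ, XiRec n π ν lam (ξ lam)) :
    ∃ α : ℕ → ℝ,
      -- `det A_{n−2}` has exactly the `n−2` distinct roots `α_1 < ⋯ < α_{n−2}`
      (∀ j, 1 ≤ j → j ≤ n - 2 → Matrix.det (Amat π ν (n - 2) (α j)) = 0) ∧
      (∀ x : ℝ, Matrix.det (Amat π ν (n - 2) x) = 0 →
        ∃ j, 1 ≤ j ∧ j ≤ n - 2 ∧ x = α j) ∧
      (∀ j, 1 ≤ j → j + 1 ≤ n - 2 → α j < α (j + 1)) ∧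
      -- (1) interlacing `λ^G_j < α_j < λ^G_{j+1}`
      (∀ j, 1 ≤ j → j ≤ n - 2 → lamG j < α j ∧ α j < lamG (j + 1)) ∧
      -- (2) `ξ_λ` is of type `j` for `λ ∈ (α_{j−1}, α_j]`, with `α_0 := 0`, `α_{n−1} := ∞`
      (∀ j, 1 ≤ j → j ≤ n - 1 → ∀ lam : ℝ,
        ((j = 1 ∧ 0 < lam) ∨ (2 ≤ j ∧ α (j - 1) < lam)) →
        (j = n - 1 ∨ lam ≤ α j) →
        IsType n (ξ lam) j) := by
  have hπ' : ∀ i, 1 ≤ i → i ≤ n → 0 < π i := fun i h1 h2 => hπ i (by simp [h1, h2])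
  have hν' : ∀ i, 1 ≤ i → i < n → 0 < ν i := fun i h1 h2 => hν i (by simp; omega)
  obtain ⟨p, hp⟩ : ∃ p : ℕ → ℝ, ∀ k < n-1, p k = 1 + π (k+2) / π (k+1) := ⟨_, fun _ _ => rfl⟩
  obtain ⟨q, hq, hqpos⟩ : ∃ q : ℕ → ℝ, (∀ k < n-1, q k = π (k+2) / ν (k+1)) ∧ ∀ k, 0 < q k := by
    refine ⟨fun k => if k < n-1 then π (k+2) / ν (k+1) else 1, fun k hk => if_pos hk, fun k => ?_⟩
    dsimp only
    split_ifs with hk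
    · exact div_pos (hπ' _ (by omega) (by omega)) (hν' _ (by omega) (by omega))
    · exact one_pos
  obtain ⟨c, hc, hcpos⟩ : ∃ c : ℕ → ℝ, (∀ k < n-1, c k = π (k+2) / π (k+1)) ∧ ∀ k, 0 < c k := by
    refine ⟨fun k => if k < n-1 then π (k+2) / π (k+1) else 1, fun k hk => if_pos hk, fun k => ?_⟩
    dsimp only
    split_ifs with hk
    · exact div_pos (hπ' _ (by omega) (by omega)) (hπ' _ (by omega) (by omega))
    · exact one_pos
  obtain ⟨R, hR⟩ := SturmAux.exists_R p q c hqpos hcpos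
  have hdet : ∀ x, Matrix.det (Amat π ν (n-2) x) = SturmAux.D p q c (n-2) x := fun x =>
    (SturmAux.Amat_det π ν p q c (n-1) hp hq hc x (n-2)).1 (by omega)
  have hn2 : n - 2 + 1 = n - 1 := by omega
  have hG := (hR (n-2)).1
  have hI := (hR (n-2)).2
  have hG' := (hR (n-1)).1
  rw [hn2] at hI
  -- positivity of the eigenvalues
  have hlampos : ∀ j, 1 ≤ j → j ≤ n-1 → 0 < lamG j := by
    intro j hj
    induction j, hj using Nat.le_induction with
    | base => intro h; have := hlamGmono 0 h; rwa [hlamG0] at this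
    | succ j hj ih => intro h; exact (ih (by omega)).trans (hlamGmono j h)
  have hlamroot : ∀ j, 1 ≤ j → j ≤ n-1 → SturmAux.D p q c (n-1) (lamG j) = 0 := by
    intro j hj hjn
    have hpos := hlampos j hj hjn
    obtain ⟨ζ, ⟨k0, hk0, hk0'⟩, hζ⟩ := hlamGeig j hjn
    have hrec : ∀ k, 1 ≤ k → k ≤ n → (ζ (k+1) - ζ k) * ν k =
        (ζ (k-1+1) - ζ (k-1)) * ν (k-1) - lamG j * (π k * ζ k) := by
      intro k h1 h2
      have := hζ k (by simp [h1, h2])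
      rw [Nat.sub_add_cancel h1]
      linarith
    have hfl := SturmAux.flux n π ν p q c hπ' hν' hp hq hc (lamG j) ζ
      (fun k => (ζ (k+1) - ζ k) * ν k) n le_rfl (by simp [hν0]) (fun k _ _ => rfl) hrec
    have hWn := (hfl (n-1)).1 (by omega)
    rw [Nat.sub_add_cancel (by omega)] at hWn
    simp only [hνn, mul_zero] at hWn
    rcases mul_eq_zero.1 hWn.symm with h0 | h0
    · exfalso
      have hall : ∀ k, k ≤ n → (ζ (k+1) - ζ k) * ν k = 0 := by
        intro k hk
        rcases Nat.eq_zero_or_pos k with rfl | h1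
        · simp [hν0]
        · have h2 := (hfl (k-1)).1 (by omega)
          rw [Nat.sub_add_cancel h1] at h2
          rw [h2, h0, zero_mul]
      rw [Finset.mem_Icc] at hk0
      have h3 := hrec k0 hk0.1 hk0.2
      rw [hall k0 hk0.2, hall (k0-1) (by omega)] at h3
      have h4 : lamG j * (π k0 * ζ k0) = 0 := by linarith
      exact (mul_ne_zero hpos.ne' (mul_ne_zero (hπ' k0 hk0.1 hk0.2).ne' hk0')) h4
    · exact h0
  have hlamR : ∀ j, 1 ≤ j → j ≤ n-1 → lamG j = R (n-1) j :=
    SturmAux.incr_unique (n-1) (R (n-1)) lamG hG'.1 (fun j _ h => hlamGmono j h)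
      (fun j h1 h2 => hG'.eq_of_root (hlamroot j h1 h2))
  have hinter : ∀ j, 1 ≤ j → j ≤ n - 2 → lamG j < R (n-2) j ∧ R (n-2) j < lamG (j + 1) := by
    intro j h1 h2
    rw [hlamR j h1 (by omega), hlamR (j+1) (by omega) (by omega)]
    exact hI j h1 h2
  refine ⟨R (n-2), fun j h1 h2 => ?_, fun x hx => ?_, fun j h1 h2 => ?_, hinter, ?_⟩
  · rw [hdet]; exact hG.root h1 h2
  · rw [hdet] at hx; exact hG.eq_of_root hx
  · exact hG.1 j (j+1) h1 (by omega) h2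
  · intro j hj hjn lam hlo hup
    have hpos : 0 < lam := by
      rcases hlo with h | h
      · exact h.2
      · exact ((hlampos (j-1) (by omega) (by omega)).trans
          (hinter (j-1) (by omega) (by omega)).1).trans h.2
    have hloc : SturmAux.Loc (n-2) (R (n-2)) lam (j-1) := by
      refine ⟨by omega, fun i h1 h2 => ?_, fun i h1 h2 => ?_⟩
      · rcases hlo with h | h
        · omega
        · rcases h2.eq_or_lt with rfl | h3
          · exact h.2
          · exact (hG.1 i (j-1) h1 h3 (by omega)).trans h.2
      · rcases hup with h | h
        · omega
        · rcases (show j ≤ i by omega).eq_or_lt with rfl | h3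
          · exact h
          · exact h.trans (hG.1 j i hj h3 h2).le
    obtain ⟨hξ1, hξr⟩ := hξ lam
    have hrec : ∀ k, 1 ≤ k → k ≤ n-1 → (ξ lam (k+1) - ξ lam k) * ν k =
        (ξ lam (k-1+1) - ξ lam (k-1)) * ν (k-1) - lam * (π k * ξ lam k) := by
      intro k h1 h2
      have := (hν' k h1 (by omega)).ne'
      rw [hξr k h1 (by omega), Nat.sub_add_cancel h1]
      field_simp
      ring
    have hfl := SturmAux.flux n π ν p q c hπ' hν' hp hq hc lam (ξ lam)
      (fun k => (ξ lam (k+1) - ξ lam k) * ν k) (n-1) (by omega) (by simp [hν0])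
      (fun k _ _ => rfl) hrec
    have hW1 : (ξ lam (1+1) - ξ lam 1) * ν 1 = lam * π 1 := by
      rw [hrec 1 le_rfl (by omega), hξ1]
      simp [hν0]
    have hg : ∀ m ≤ n-2, 0 < lam * π 1 / ν (m+1) ∧
        ξ lam (m+2) - ξ lam (m+1) = lam * π 1 / ν (m+1) * SturmAux.D p q c m lam := by
      intro m hm
      have hνm := hν' (m+1) (by omega) (by omega)
      refine ⟨div_pos (mul_pos hpos (hπ' 1 le_rfl (by omega))) hνm, ?_⟩
      have h1 := (hfl m).1 (by omega)
      simp only [hW1] at h1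
      rw [show m+1+1 = m+2 from rfl] at h1
      have := hνm.ne'
      field_simp
      linarith
    obtain ⟨a, b, hab, -⟩ := SturmAux.type_main p q c R hR lam (ξ lam)
      (fun m => lam * π 1 / ν (m+1)) (n-2) (j-1) hg hloc
    rw [Nat.sub_add_cancel (by omega), Nat.sub_add_cancel hj] at hab
    exact ⟨a, b, hab⟩
end

section
/- For the dichotomy algorithm (Di) targeting the i-th non-zero eigenvalue, one has 0 ≤ max{U_ℓ − λ^G_i, λ^G_i − L_ℓ} ≤ (U_0 − L_0) 2^{−ℓ} for all ℓ ≥ 0. -/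
open Finset

/-- Number of sign changes of `s 1, …, s k` (zeros are dropped), when `s 1 > 0`. -/
noncomputable def Vc (s : ℕ → ℝ) : ℕ → ℕ
  | 0 => 0
  | k + 1 => if (-1 : ℝ) ^ (Vc s k) * s (k + 1) < 0 then Vc s k + 1 else Vc s k

theorem Vc_succ (s : ℕ → ℝ) (k : ℕ) :
    Vc s (k + 1) = if (-1 : ℝ) ^ (Vc s k) * s (k + 1) < 0 then Vc s k + 1 else Vc s k := rfl

/-- The first-order system satisfied by `x = -ξ` and its partial `π`-sums `s`. -/
structure Sys (n : ℕ) (π ν : ℕ → ℝ) (lam : ℝ) (x s : ℕ → ℝ) : Prop where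
  x1 : x 1 = 1
  s1 : s 1 = π 1
  xs : ∀ k, 1 ≤ k → k < n → x (k + 1) = x k - lam * s k / ν k
  ss : ∀ k, 1 ≤ k → k < n → s (k + 1) = s k + π (k + 1) * x (k + 1)

theorem Vc_one {s : ℕ → ℝ} (h : 0 < s 1) : Vc s 1 = 0 := by
  rw [show (1 : ℕ) = 0 + 1 from rfl, Vc_succ]
  simp [Vc, h.le]

theorem Vc_le {s : ℕ → ℝ} (h : 0 < s 1) (k : ℕ) (hk : 1 ≤ k) : Vc s k ≤ k - 1 := by
  induction k, hk using Nat.le_induction with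
  | base => simp [Vc_one h]
  | succ k hk ih => rw [Vc_succ]; split_ifs <;> omega

theorem state_pos {n : ℕ} {π ν : ℕ → ℝ} {lam : ℝ} {x s : ℕ → ℝ}
    (hπ : ∀ k ∈ Finset.Icc 1 n, 0 < π k) (h : Sys n π ν lam x s) (k : ℕ) (hk : 1 ≤ k)
    (hkn : k ≤ n) :
    0 < (-1 : ℝ) ^ Vc s k * s k ∨ (s k = 0 ∧ (-1 : ℝ) ^ Vc s k * x k < 0) := by
  induction k, hk using Nat.le_induction with
  | base =>
    left
    have := hπ 1 (by simp; omega)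
    rw [← h.s1] at this
    rw [Vc_one this]; simpa using this
  | succ k hk ih =>
    have ih := ih (by omega)
    have hp := hπ (k + 1) (by simp; omega)
    have hs := h.ss k hk (by omega)
    have hx := h.xs k hk (by omega)
    rw [Vc_succ]
    have he : (-1 : ℝ) ^ Vc s k ≠ 0 := by positivity
    set e := (-1 : ℝ) ^ Vc s k with hedef
    split_ifs with hc
    · left; rw [pow_succ, ← hedef]; linarith
    · rw [← hedef]
      rcases lt_or_eq_of_le (not_lt.1 hc) with h1 | h1
      · left; exact h1
      · right
        have hs0 : s (k + 1) = 0 := by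
          rcases mul_eq_zero.1 h1.symm with h2 | h2
          · exact absurd h2 he
          · exact h2
        refine ⟨hs0, ?_⟩
        rcases ih with h2 | ⟨h2, h3⟩
        · have : e * s k + π (k + 1) * (e * x (k + 1)) = 0 := by
            have : e * s k + π (k + 1) * (e * x (k + 1)) = e * s (k + 1) := by rw [hs]; ring
            rw [this, hs0]; ring
          by_contra h4
          have := mul_nonneg hp.le (not_lt.1 h4)
          linarith
        · rw [hx, h2]; simpa using h3

/-- One step of the comparison. -/
theorem cmp_step (a b p nu lam mu : ℝ) (x s y t : ℝ) (hnu : 0 < nu) (hp : 0 < p)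
    (hlm : lam < mu) (hs : 0 ≤ s) (ht : 0 ≤ t) (hw : y * s < x * t ∨ (0 < s ∧ 0 < t ∧ y * s ≤ x * t))
    (ha : a = x - lam * s / nu) (hb : b = y - mu * t / nu) :
    b * (s + p * a) < a * (t + p * b) := by
  have h1 : b * (s + p * a) - a * (t + p * b) = (y * s - x * t) - (mu - lam) * (s * t) / nu := by
    rw [ha, hb]; field_simp; ring
  have h2 : 0 ≤ (mu - lam) * (s * t) / nu := by
    have : 0 < mu - lam := by linarith
    positivity
  rcases hw with hw | ⟨h3, h4, h5⟩
  · linarith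
  · have : 0 < (mu - lam) * (s * t) / nu := by
      have : 0 < mu - lam := by linarith
      positivity
    linarith

theorem cmp_main {n : ℕ} {π ν : ℕ → ℝ} {lam mu : ℝ} {x s y t : ℕ → ℝ}
    (hπ : ∀ k ∈ Finset.Icc 1 n, 0 < π k) (hν : ∀ k ∈ Finset.Icc 1 (n - 1), 0 < ν k)
    (h : Sys n π ν lam x s) (h' : Sys n π ν mu y t) (hlm : lam < mu) (k : ℕ) (hk : 1 ≤ k)
    (hkn : k ≤ n) :
    Vc s k < Vc t k ∨ (Vc s k = Vc t k ∧ (y k * s k < x k * t k ∨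
      (0 < (-1 : ℝ) ^ Vc s k * s k ∧ 0 < (-1 : ℝ) ^ Vc t k * t k ∧ k = 1 ∧ y k * s k ≤ x k * t k))) := by
  induction k, hk using Nat.le_induction with
  | base =>
    right
    have := hπ 1 (by simp; omega)
    have h1 := this
    have h2 := this
    rw [← h.s1] at h1
    rw [← h'.s1] at h2
    rw [Vc_one h1, Vc_one h2]
    refine ⟨rfl, Or.inr ⟨by simpa using h1, by simpa using h2, rfl, ?_⟩⟩
    rw [h.x1, h'.x1, h.s1, h'.s1]
  | succ k hk ih =>
    have ih := ih (by omega)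
    have hp := hπ (k + 1) (by simp; omega)
    have hnu := hν k (by simp; omega)
    have hs := h.ss k hk (by omega)
    have hx := h.xs k hk (by omega)
    have ht := h'.ss k hk (by omega)
    have hy := h'.xs k hk (by omega)
    have pA := state_pos hπ h k hk (by omega)
    have pB := state_pos hπ h' k hk (by omega)
    rw [Vc_succ s, Vc_succ t]
    rcases ih with hlt | ⟨heq, hw⟩
    · by_cases h0 : Vc s k + 1 < Vc t k
      · left; split_ifs <;> omega
      have h1 : Vc t k = Vc s k + 1 := by omega
      rw [h1, pow_succ] at pB
      rw [h1, pow_succ]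
      have hee : (-1 : ℝ) ^ Vc s k * (-1 : ℝ) ^ Vc s k = 1 := by
        rw [← mul_pow]; simp
      set e := (-1 : ℝ) ^ Vc s k with hedef
      by_cases hA : e * s (k + 1) < 0
      · by_cases hB : e * -1 * t (k + 1) < 0
        · left; rw [if_pos hA, if_pos hB]; omega
        · right
          rw [if_pos hA, if_neg hB]
          refine ⟨rfl, Or.inl ?_⟩
          have hB' := not_lt.1 hB
          rcases pB with pB | ⟨pB1, pB2⟩
          · have hA0 : 0 ≤ e * s k := by
              rcases pA with pA | ⟨pA, _⟩
              · exact pA.le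
              · rw [pA]; simp
            have key : π (k + 1) * (x (k + 1) * t (k + 1) - y (k + 1) * s (k + 1)) =
                (e * s k) * (e * -1 * t (k + 1)) + (e * -1 * t k) * (-(e * s (k + 1))) := by
              have : (e * s k) * (e * -1 * t (k + 1)) + (e * -1 * t k) * (-(e * s (k + 1)))
                = (e * e) * (t k * s (k + 1) - s k * t (k + 1)) := by ring
              rw [this, hee, hs, ht]; ring
            have h2 : 0 < π (k + 1) * (x (k + 1) * t (k + 1) - y (k + 1) * s (k + 1)) := by
              rw [key]
              have := mul_nonneg hA0 hB'
              have := mul_pos pB (neg_pos.2 hA)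
              linarith
            have := pos_of_mul_pos_right h2 hp.le
            linarith
          · exfalso
            have : e * -1 * t (k + 1) = π (k + 1) * (e * -1 * y k) := by
              rw [ht, hy, pB1]; ring
            have := mul_neg_of_pos_of_neg hp pB2
            linarith
      · left; rw [if_neg hA]; split_ifs <;> omega
    · rw [← heq] at hw pB
      rw [← heq]
      have hee : (-1 : ℝ) ^ Vc s k * (-1 : ℝ) ^ Vc s k = 1 := by
        rw [← mul_pow]; simp
      set e := (-1 : ℝ) ^ Vc s k with hedef
      have hA0 : 0 ≤ e * s k := by
        rcases pA with pA | ⟨pA, _⟩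
        · exact pA.le
        · rw [pA]; simp
      have hB0 : 0 ≤ e * t k := by
        rcases pB with pA | ⟨pA, _⟩
        · exact pA.le
        · rw [pA]; simp
      have e1 : (e * y k) * (e * s k) = y k * s k := by
        linear_combination (y k * s k) * hee
      have e2 : (e * x k) * (e * t k) = x k * t k := by
        linear_combination (x k * t k) * hee
      have key := cmp_step (e * x (k + 1)) (e * y (k + 1)) (π (k + 1)) (ν k) lam mu
        (e * x k) (e * s k) (e * y k) (e * t k) hnu hp hlm hA0 hB0
        (by
          rw [e1, e2]
          rcases hw with hw | ⟨q1, q2, _, q3⟩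
          · left; exact hw
          · right; exact ⟨q1, q2, q3⟩)
        (by rw [hx]; ring) (by rw [hy]; ring)
      have es : e * s k + π (k + 1) * (e * x (k + 1)) = e * s (k + 1) := by rw [hs]; ring
      have et : e * t k + π (k + 1) * (e * y (k + 1)) = e * t (k + 1) := by rw [ht]; ring
      rw [es, et] at key
      have wedge : y (k + 1) * s (k + 1) < x (k + 1) * t (k + 1) := by
        have e3 : (e * y (k + 1)) * (e * s (k + 1)) = y (k + 1) * s (k + 1) := by
          linear_combination (y (k + 1) * s (k + 1)) * hee
        have e4 : (e * x (k + 1)) * (e * t (k + 1)) = x (k + 1) * t (k + 1) := by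
          linear_combination (x (k + 1) * t (k + 1)) * hee
        linarith
      by_cases hA : e * s (k + 1) < 0
      · by_cases hB : e * t (k + 1) < 0
        · right; rw [if_pos hA, if_pos hB]; exact ⟨rfl, Or.inl wedge⟩
        · exfalso
          have e5 : π (k + 1) * (y (k + 1) * s (k + 1) - x (k + 1) * t (k + 1)) =
              (e * t (k + 1)) * (e * s k) + (-(e * s (k + 1))) * (e * t k) := by
            have : (e * t (k + 1)) * (e * s k) + (-(e * s (k + 1))) * (e * t k)
              = (e * e) * (t (k + 1) * s k - s (k + 1) * t k) := by ring
            rw [this, hee, hs, ht]; ring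
          have h1 := mul_nonneg (not_lt.1 hB) hA0
          have h2 := mul_nonneg (neg_pos.2 hA).le hB0
          have h3 := mul_neg_of_pos_of_neg hp (sub_neg.2 wedge)
          linarith
      · rw [if_neg hA]
        split_ifs with hB
        · left; omega
        · right; exact ⟨rfl, Or.inl wedge⟩

theorem Vc_mono {n : ℕ} {π ν : ℕ → ℝ} {lam mu : ℝ} {x s y t : ℕ → ℝ}
    (hπ : ∀ k ∈ Finset.Icc 1 n, 0 < π k) (hν : ∀ k ∈ Finset.Icc 1 (n - 1), 0 < ν k)
    (h : Sys n π ν lam x s) (h' : Sys n π ν mu y t) (hlm : lam < mu) (hn : 1 ≤ n) :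
    Vc s n ≤ Vc t n := by
  rcases cmp_main hπ hν h h' hlm n hn le_rfl with h | h <;> omega

theorem Vc_strict {n : ℕ} {π ν : ℕ → ℝ} {lam mu : ℝ} {x s y t : ℕ → ℝ}
    (hπ : ∀ k ∈ Finset.Icc 1 n, 0 < π k) (hν : ∀ k ∈ Finset.Icc 1 (n - 1), 0 < ν k)
    (h : Sys n π ν lam x s) (h' : Sys n π ν mu y t) (hlm : lam < mu) (hn : 1 ≤ n)
    (hs : s n = 0) :
    Vc s n + 1 ≤ Vc t n := by
  rcases cmp_main hπ hν h h' hlm n hn le_rfl with h1 | ⟨h1, h2⟩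
  · omega
  · exfalso
    have pA := state_pos hπ h n hn le_rfl
    have pB := state_pos hπ h' n hn le_rfl
    rw [← h1] at *
    have hee : (-1 : ℝ) ^ Vc s n * (-1 : ℝ) ^ Vc s n = 1 := by
      rw [← mul_pow]; simp
    set e := (-1 : ℝ) ^ Vc s n
    rw [hs] at *
    simp only [mul_zero, lt_self_iff_false, false_and, or_false, false_or, true_and] at *
    have e4 : (e * x n) * (e * t n) = x n * t n := by
      linear_combination (x n * t n) * hee
    rcases pB with pB | ⟨pB, _⟩
    · have := mul_neg_of_neg_of_pos pA pB
      linarith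
    · rw [pB] at h2; simp at h2

theorem type_aux {n : ℕ} {s f : ℕ → ℝ} (hs1 : 0 < s 1)
    (hpos : ∀ k, 1 ≤ k → k < n → s k = 0 → (-1 : ℝ) ^ Vc s k * s (k + 1) < 0)
    (hd : ∀ k, 1 ≤ k → k < n → ∃ c : ℝ, 0 < c ∧ f (k + 1) - f k = c * s k)
    (m : ℕ) (hm : 2 ≤ m) (hmn : m ≤ n) :
    ∃ a b : ℕ → ℕ, a 1 = 1 ∧
      ((b (Vc s (m - 1) + 1) = m) ∨
        (b (Vc s (m - 1) + 1) + 1 = m ∧ s (m - 1) = 0 ∧ f m = f (m - 1))) ∧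
      (∀ j, 1 ≤ j → j ≤ Vc s (m - 1) + 1 → a j < b j) ∧
      (∀ j, 1 ≤ j → j < Vc s (m - 1) + 1 → b j ≤ a (j + 1) ∧ a (j + 1) ≤ b j + 1) ∧
      (∀ j, 1 ≤ j → j ≤ Vc s (m - 1) + 1 → ∀ k, a j ≤ k → k < b j →
        0 < (-1 : ℝ) ^ (j - 1) * (f (k + 1) - f k)) ∧
      (∀ j, 1 ≤ j → j < Vc s (m - 1) + 1 → f (a (j + 1)) = f (b j)) := by
  induction m, hm using Nat.le_induction with
  | base =>
    obtain ⟨c, hc, hc'⟩ := hd 1 le_rfl (by omega)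
    refine ⟨fun _ => 1, fun _ => 2, rfl, Or.inl rfl, ?_, ?_, ?_, ?_⟩
    · intros; norm_num
    · simp only [Nat.reduceSub, Vc_one hs1]; intros; omega
    · simp only [Nat.reduceSub, Vc_one hs1]
      intro j h1 h2 k h3 h4
      have : j = 1 := by omega
      have : k = 1 := by omega
      subst_vars
      rw [hc']
      simpa using mul_pos hc hs1
    · simp only [Nat.reduceSub, Vc_one hs1]; intros; omega
  | succ m hm ih =>
    obtain ⟨a, b, ha1, hb, hab, hba, hsg, hfl⟩ := ih (by omega)
    obtain ⟨c, hc, hc'⟩ := hd m (by omega) (by omega)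
    obtain ⟨p, rfl⟩ : ∃ p, m = p + 1 := ⟨m - 1, by omega⟩
    simp only [Nat.add_sub_cancel] at *
    have hz := hpos p (by omega) (by omega)
    rw [Vc_succ]
    set v := Vc s p with hv
    set e := (-1 : ℝ) ^ v with hedef
    by_cases hA : e * s (p + 1) < 0
    · rw [if_pos hA]
      refine ⟨fun j => if j = v + 2 then p + 1 else a j,
        fun j => if j = v + 2 then p + 2 else b j, ?_, ?_, ?_, ?_, ?_, ?_⟩
      · dsimp only; rw [if_neg (by omega)]; exact ha1
      · left; dsimp only; rw [if_pos (by omega)]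
      · intro j h1 h2
        dsimp only
        split_ifs with h
        · omega
        · exact hab j h1 (by omega)
      · intro j h1 h2
        dsimp only
        rw [if_neg (show j ≠ v + 2 by omega)]
        split_ifs with h
        · have : j = v + 1 := by omega
          subst this
          rcases hb with hb | ⟨hb, _⟩ <;> omega
        · exact hba j h1 (by omega)
      · intro j h1 h2 k
        dsimp only
        split_ifs with h
        · intro h3 h4
          have : k = p + 1 := by omega
          subst this
          subst h
          rw [hc', show v + 2 - 1 = v + 1 by omega, pow_succ, ← hedef]
          have := mul_neg_of_pos_of_neg hc hA
          linarith
        · exact hsg j h1 (by omega) k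
      · intro j h1 h2
        dsimp only
        rw [if_neg (show j ≠ v + 2 by omega)]
        split_ifs with h
        · have : j = v + 1 := by omega
          subst this
          rcases hb with hb | ⟨hb, _, hb2⟩
          · rw [hb]
          · rw [hb2]; congr 1; omega
        · exact hfl j h1 (by omega)
    · rw [if_neg hA]
      have hsp : s p ≠ 0 := fun h => hA (hz h)
      have hb' : b (v + 1) = p + 1 := by
        rcases hb with hb | ⟨_, hb, _⟩
        · exact hb
        · exact absurd hb hsp
      by_cases h0 : s (p + 1) = 0
      · refine ⟨a, b, ha1, Or.inr ⟨by omega, h0, ?_⟩, hab, hba, hsg, hfl⟩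
        rw [h0] at hc'; linarith
      · have hA' : 0 < e * s (p + 1) := by
          refine lt_of_le_of_ne (not_lt.1 hA) (Ne.symm (mul_ne_zero ?_ h0))
          positivity
        refine ⟨a, fun j => if j = v + 1 then p + 2 else b j, ha1, ?_, ?_, ?_, ?_, ?_⟩
        · left; simp
        · intro j h1 h2
          have := hab j h1 h2
          dsimp only
          split_ifs with h
          · subst h; omega
          · exact this
        · intro j h1 h2
          dsimp only
          rw [if_neg (by omega)]
          exact hba j h1 h2
        · intro j h1 h2 k h3
          dsimp only
          split_ifs with h
          · intro h4
            by_cases h5 : k = p + 1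
            · subst h5; subst h
              rw [hc', show v + 1 - 1 = v by omega, ← hedef]
              have := mul_pos hc hA'
              linarith
            · exact hsg j h1 h2 k h3 (by subst h; omega)
          · exact hsg j h1 h2 k h3
        · intro j h1 h2
          dsimp only
          rw [if_neg (by omega)]
          exact hfl j h1 h2

theorem strictMono_of_step {g : ℕ → ℝ} {a b : ℕ}
    (h : ∀ k, a ≤ k → k < b → g k < g (k + 1)) : StrictMonoOn g (Set.Icc a b) := by
  intro p hp q hq hpq
  have : ∀ q, p + 1 ≤ q → q ≤ b → g p < g q := by
    intro q hq
    induction q, hq using Nat.le_induction with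
    | base => intro h1; exact h p hp.1 (by omega)
    | succ q hq ih =>
      intro h1
      exact (ih (by omega)).trans (h q (by have := hp.1; omega) (by omega))
  exact this q hpq hq.2

theorem type_of {n : ℕ} (hn : 2 ≤ n) {s f : ℕ → ℝ} (hs1 : 0 < s 1)
    (hpos : ∀ k, 1 ≤ k → k < n → s k = 0 → (-1 : ℝ) ^ Vc s k * s (k + 1) < 0)
    (hd : ∀ k, 1 ≤ k → k < n → ∃ c : ℝ, 0 < c ∧ f (k + 1) - f k = c * s k) :
    IsType n f (Vc s (n - 1) + 1) := by
  obtain ⟨a, b, ha1, hb, hab, hba, hsg, hfl⟩ := type_aux hs1 hpos hd n hn le_rfl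
  refine ⟨a, b, ha1, ?_, hab, hba, ?_, ?_, hfl, ?_⟩
  · rcases hb with hb | hb <;> omega
  · intro j h1 h2
    have := hsg j h1 h2
    rcases neg_one_pow_eq_or ℝ (j - 1) with he | he
    · left
      apply strictMono_of_step
      intro k h3 h4
      have := this k h3 h4
      rw [he] at this; linarith
    · right
      have h5 : StrictMonoOn (fun k => - f k) (Set.Icc (a j) (b j)) := by
        apply strictMono_of_step
        intro k h3 h4
        have := this k h3 h4
        rw [he] at this; linarith
      intro p hp q hq hpq
      have := h5 hp hq hpq
      simpa using this
  · intro j h1 h2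
    have q1 := hsg j h1 h2.le (a j) le_rfl (hab j h1 h2.le)
    have q2 := hsg (j + 1) (by omega) h2 (a (j + 1)) le_rfl (hab (j + 1) (by omega) h2)
    obtain ⟨p, rfl⟩ : ∃ p, j = p + 1 := ⟨j - 1, by omega⟩
    simp only [Nat.add_sub_cancel, pow_succ] at q1 q2
    rcases neg_one_pow_eq_or ℝ p with he | he <;> rw [he] at q1 q2
    · exact mul_neg_of_neg_of_pos (by linarith) (by linarith)
    · exact mul_neg_of_pos_of_neg (by linarith) (by linarith)
  · intro k h1 h2
    rcases hb with hb | ⟨hb, _, hb2⟩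
    · rw [show k = b (Vc s (n - 1) + 1) by omega]
    · have : k = b (Vc s (n - 1) + 1) ∨ k = n := by omega
      rcases this with h | h
      · rw [← h]
      · rw [h, hb2]; congr 1; omega

/-- Partial sums of `-ξ`. -/
noncomputable def sXi (π ξ : ℕ → ℝ) (k : ℕ) : ℝ := ∑ m ∈ Finset.Icc 1 k, (- ξ m) * π m

theorem sXi_succ (π ξ : ℕ → ℝ) (k : ℕ) : sXi π ξ (k + 1) = sXi π ξ k + (- ξ (k + 1)) * π (k + 1) := by
  unfold sXi
  rw [Finset.sum_Icc_succ_top (by omega)]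

theorem sXi_flux {n : ℕ} {π ν : ℕ → ℝ} {lam : ℝ} {ξ : ℕ → ℝ}
    (hν : ∀ k ∈ Finset.Icc 1 (n - 1), 0 < ν k) (hν0 : ν 0 = 0)
    (h : XiRec n π ν lam ξ) (k : ℕ) (hk : 1 ≤ k) (hkn : k < n) :
    (ξ (k + 1) - ξ k) * ν k = lam * sXi π ξ k := by
  induction k, hk using Nat.le_induction with
  | base =>
    have := (hν 1 (by simp; omega)).ne'
    rw [h.2 1 le_rfl hkn]
    simp only [Nat.sub_self, hν0, sXi, Finset.Icc_self, Finset.sum_singleton]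
    field_simp
    ring
  | succ k hk ih =>
    have := (hν (k + 1) (by simp; omega)).ne'
    have ih := ih (by omega)
    rw [h.2 (k + 1) (by omega) hkn, sXi_succ, Nat.add_sub_cancel, ih]
    field_simp
    ring

theorem sys_of_xi {n : ℕ} {π ν : ℕ → ℝ} {lam : ℝ} {ξ : ℕ → ℝ}
    (hν : ∀ k ∈ Finset.Icc 1 (n - 1), 0 < ν k) (hν0 : ν 0 = 0)
    (h : XiRec n π ν lam ξ) : Sys n π ν lam (fun k => - ξ k) (sXi π ξ) where
  x1 := by simp [h.1]
  s1 := by simp [sXi, h.1]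
  xs := by
    intro k hk hkn
    have := (hν k (by simp; omega)).ne'
    rw [← sXi_flux hν hν0 h k hk hkn]
    field_simp
    ring
  ss := by
    intro k hk hkn
    rw [sXi_succ]; ring

theorem sXi_type {n : ℕ} (hn : 2 ≤ n) {π ν : ℕ → ℝ} {lam : ℝ} {ξ : ℕ → ℝ}
    (hπ : ∀ k ∈ Finset.Icc 1 n, 0 < π k)
    (hν : ∀ k ∈ Finset.Icc 1 (n - 1), 0 < ν k) (hν0 : ν 0 = 0) (hlam : 0 < lam)
    (h : XiRec n π ν lam ξ) : IsType n ξ (Vc (sXi π ξ) (n - 1) + 1) := by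
  have hsys := sys_of_xi hν hν0 h
  apply type_of hn
  · rw [hsys.s1]; exact hπ 1 (by simp; omega)
  · intro k hk hkn h0
    rcases state_pos hπ hsys k hk hkn.le with h1 | ⟨_, h1⟩
    · rw [h0] at h1; simp at h1
    · rw [hsys.ss k hk hkn, hsys.xs k hk hkn, h0]
      have := mul_neg_of_pos_of_neg (hπ (k + 1) (by simp; omega)) h1
      rw [mul_zero, zero_div]
      linarith
  · intro k hk hkn
    have hp := hν k (by simp; omega)
    refine ⟨lam / ν k, by positivity, ?_⟩
    have := sXi_flux hν hν0 h k hk hkn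
    field_simp
    linarith

theorem eig_zero {n : ℕ} (hn : 2 ≤ n) {π ν : ℕ → ℝ} {lam : ℝ} {ξ ζ : ℕ → ℝ}
    (hν : ∀ k ∈ Finset.Icc 1 (n - 1), 0 < ν k) (hν0 : ν 0 = 0) (hνn : ν n = 0) (hlam : 0 < lam)
    (h : XiRec n π ν lam ξ) (hz : IsEigen n π ν lam ζ) : sXi π ξ n = 0 := by
  obtain ⟨⟨k0, hk0, hne⟩, heq⟩ := hz
  have key : ∀ k, 1 ≤ k → k ≤ n → (ζ k = - ζ 1 * ξ k ∧ (k < n →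
      (ζ (k + 1) - ζ k) * ν k = - ζ 1 * ((ξ (k + 1) - ξ k) * ν k))) := by
    intro k hk
    induction k, hk using Nat.le_induction with
    | base =>
      intro _
      refine ⟨by rw [h.1]; ring, fun h1 => ?_⟩
      have e := heq 1 (by simp; omega)
      rw [sXi_flux hν hν0 h 1 le_rfl h1]
      simp only [Nat.sub_self, hν0, sXi, Finset.Icc_self, Finset.sum_singleton, h.1] at e ⊢
      linarith
    | succ k hk ih =>
      intro hkn
      obtain ⟨i1, i2⟩ := ih (by omega)
      have i2 := i2 (by omega)
      have hp := hν k (by simp; omega)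
      have i3 : ζ (k + 1) = - ζ 1 * ξ (k + 1) := by
        apply mul_right_cancel₀ hp.ne'
        rw [i1] at i2; linarith
      refine ⟨i3, fun h1 => ?_⟩
      have e := heq (k + 1) (by simp; omega)
      rw [Nat.add_sub_cancel] at e
      rw [sXi_flux hν hν0 h (k + 1) (by omega) h1, sXi_succ]
      rw [sXi_flux hν hν0 h k hk (by omega)] at i2
      rw [i3] at e ⊢
      rw [i3] at i2
      linarith
  have hz1 : ζ 1 ≠ 0 := by
    intro h0
    apply hne
    simp only [Finset.mem_Icc] at hk0
    rw [(key k0 hk0.1 hk0.2).1, h0]; ring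
  obtain ⟨p, rfl⟩ : ∃ p, n = p + 1 := ⟨n - 1, by omega⟩
  have e := heq (p + 1) (by simp)
  have i2 := (key p (by omega) (by omega)).2 (by omega)
  have i3 := (key (p + 1) (by omega) le_rfl).1
  rw [sXi_flux hν hν0 h p (by omega) (by omega)] at i2
  rw [Nat.add_sub_cancel, i2, i3, hνn] at e
  rw [sXi_succ]
  have : (ζ 1 * lam) * (sXi π ξ p + -ξ (p + 1) * π (p + 1)) = 0 := by linarith
  rcases mul_eq_zero.1 this with h1 | h1
  · exact absurd h1 (mul_ne_zero hz1 hlam.ne')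
  · exact h1

theorem stmt9 (n : ℕ) (hn : 3 ≤ n) (i : ℕ) (hi1 : 1 ≤ i) (hi2 : i ≤ n - 1)
    (π ν : ℕ → ℝ)
    (hπ : ∀ k ∈ Finset.Icc 1 n, 0 < π k)
    (hπ1 : ∑ k ∈ Finset.Icc 1 n, π k = 1)
    (hν : ∀ k ∈ Finset.Icc 1 (n - 1), 0 < ν k)
    (hν0 : ν 0 = 0) (hνn : ν n = 0)
    -- the (simple) eigenvalues `0 = λ^G_0 < λ^G_1 < ⋯ < λ^G_{n−1}` of `M^G_{π,ν}`
    (lamG : ℕ → ℝ) (hlamG0 : lamG 0 = 0)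
    (hlamGmono : ∀ j, j + 1 ≤ n - 1 → lamG j < lamG (j + 1))
    (hlamGeig : ∀ j, j ≤ n - 1 → ∃ ζ : ℕ → ℝ, IsEigen n π ν (lamG j) ζ)
    (hlamGall : ∀ (μ : ℝ) (ζ : ℕ → ℝ), IsEigen n π ν μ ζ → ∃ j ≤ n - 1, μ = lamG j)
    -- the family `λ ↦ ξ_λ`
    (ξ : ℝ → ℕ → ℝ) (hξ : ∀ lam : ℝ, XiRec n π ν lam (ξ lam))
    -- the dichotomy algorithm (Di)
    (L U : ℕ → ℝ) (hL0 : 0 < L 0) (hLi : L 0 < lamG i) (hUi : lamG i < U 0)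
    (hupd : ∀ ℓ,
      ((∃ j, i < j ∧ j ≤ n - 1 ∧ IsType n (ξ ((L ℓ + U ℓ) / 2)) j) ∨
        (IsType n (ξ ((L ℓ + U ℓ) / 2)) i ∧
          0 < (-1 : ℝ) ^ (i - 1) * piMean n π (ξ ((L ℓ + U ℓ) / 2))) →
        L (ℓ + 1) = L ℓ ∧ U (ℓ + 1) = (L ℓ + U ℓ) / 2) ∧
      ((∃ j, 1 ≤ j ∧ j < i ∧ IsType n (ξ ((L ℓ + U ℓ) / 2)) j) ∨
        (IsType n (ξ ((L ℓ + U ℓ) / 2)) i ∧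
          (-1 : ℝ) ^ (i - 1) * piMean n π (ξ ((L ℓ + U ℓ) / 2)) < 0) →
        L (ℓ + 1) = (L ℓ + U ℓ) / 2 ∧ U (ℓ + 1) = U ℓ) ∧
      (IsType n (ξ ((L ℓ + U ℓ) / 2)) i ∧ piMean n π (ξ ((L ℓ + U ℓ) / 2)) = 0 →
        L (ℓ + 1) = (L ℓ + U ℓ) / 2 ∧ U (ℓ + 1) = (L ℓ + U ℓ) / 2)) :
    ∀ ℓ, 0 ≤ max (U ℓ - lamG i) (lamG i - L ℓ) ∧
      max (U ℓ - lamG i) (lamG i - L ℓ) ≤ (U 0 - L 0) / 2 ^ ℓ := by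
  have hlpos : ∀ j, 1 ≤ j → j ≤ n - 1 → 0 < lamG j := by
    intro j hj
    induction j, hj using Nat.le_induction with
    | base => intro h; have := hlamGmono 0 h; rw [hlamG0] at this; simpa using this
    | succ j hj ih => intro h; exact (ih (by omega)).trans (hlamGmono j h)
  have hsys := fun lam => sys_of_xi hν hν0 (hξ lam)
  have hz : ∀ j, 1 ≤ j → j ≤ n - 1 → sXi π (ξ (lamG j)) n = 0 := by
    intro j h1 h2
    obtain ⟨ζ, hζ⟩ := hlamGeig j h2
    exact eig_zero (by omega) hν hν0 hνn (hlpos j h1 h2) (hξ _) hζ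
  have hs1 : ∀ lam, 0 < sXi π (ξ lam) 1 := by
    intro lam; rw [(hsys lam).s1]; exact hπ 1 (by simp; omega)
  have hstep : ∀ j, 1 ≤ j → ∀ k, j ≤ k → k ≤ n - 1 →
      Vc (sXi π (ξ (lamG j))) n + (k - j) ≤ Vc (sXi π (ξ (lamG k))) n := by
    intro j hj k hk
    induction k, hk using Nat.le_induction with
    | base => intro; simp
    | succ k hk ih =>
      intro h
      have i1 := ih (by omega)
      have i2 := Vc_strict hπ hν (hsys (lamG k)) (hsys (lamG (k + 1))) (hlamGmono k h) (by omega)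
        (hz k (by omega) (by omega))
      omega
  have hsuccn : ∀ lam, Vc (sXi π (ξ lam)) n = if (-1 : ℝ) ^ (Vc (sXi π (ξ lam)) (n - 1)) *
      sXi π (ξ lam) n < 0 then Vc (sXi π (ξ lam)) (n - 1) + 1 else Vc (sXi π (ξ lam)) (n - 1) := by
    intro lam
    have := Vc_succ (sXi π (ξ lam)) (n - 1)
    rwa [show n - 1 + 1 = n by omega] at this
  have hVi : Vc (sXi π (ξ (lamG i))) n = i - 1 := by
    have h1 := hstep 1 le_rfl i hi1 hi2
    have h2 := hstep i hi1 (n - 1) hi2 le_rfl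
    have h3 := hsuccn (lamG (n - 1))
    rw [hz (n - 1) (by omega) le_rfl] at h3
    simp only [mul_zero, lt_self_iff_false, if_false] at h3
    have h4 := Vc_le (hs1 (lamG (n - 1))) (n - 1) (by omega)
    omega
  have hgt : ∀ lam, lamG i < lam → i ≤ Vc (sXi π (ξ lam)) n := by
    intro lam h
    have := Vc_strict hπ hν (hsys (lamG i)) (hsys lam) h (by omega) (hz i hi1 hi2)
    omega
  have hle : ∀ lam, lam ≤ lamG i → Vc (sXi π (ξ lam)) n < i := by
    intro lam h
    rcases lt_or_eq_of_le h with h | h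
    · have := Vc_mono hπ hν (hsys lam) (hsys (lamG i)) h (by omega)
      omega
    · rw [h]; omega
  have hpm : ∀ lam, piMean n π (ξ lam) = - sXi π (ξ lam) n := by
    intro lam
    simp [piMean, sXi]
  have hmain : ∀ ℓ, 0 < L ℓ ∧ L ℓ ≤ lamG i ∧ lamG i ≤ U ℓ ∧ U ℓ - L ℓ ≤ (U 0 - L 0) / 2 ^ ℓ := by
    intro ℓ
    induction ℓ with
    | zero => exact ⟨hL0, hLi.le, hUi.le, by simp⟩
    | succ ℓ ih =>
      obtain ⟨q1, q2, q3, q4⟩ := ih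
      obtain ⟨u1, u2, u3⟩ := hupd ℓ
      have hpow : (U 0 - L 0) / 2 ^ (ℓ + 1) = ((U 0 - L 0) / 2 ^ ℓ) / 2 := by
        rw [pow_succ]; field_simp
      have hnn : 0 ≤ (U 0 - L 0) / 2 ^ ℓ := by linarith
      rw [hpow]
      have hm : 0 < (L ℓ + U ℓ) / 2 := by linarith
      set m := (L ℓ + U ℓ) / 2 with hmdef
      have hty := sXi_type (by omega) hπ hν hν0 hm (hξ m)
      have hV := hsuccn m
      have hvle := Vc_le (hs1 m) (n - 1) (by omega)
      rw [hpm] at u1 u2 u3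
      set v := Vc (sXi π (ξ m)) (n - 1) with hv
      have hgt' : i ≤ Vc (sXi π (ξ m)) n → lamG i ≤ m := by
        intro h; by_contra h'
        have := hle m (not_le.1 h').le
        omega
      have hle' : Vc (sXi π (ξ m)) n < i → m ≤ lamG i := by
        intro h; by_contra h'
        have := hgt m (not_le.1 h')
        omega
      have caseU : (L (ℓ + 1) = L ℓ ∧ U (ℓ + 1) = m) → i ≤ Vc (sXi π (ξ m)) n →
          0 < L (ℓ + 1) ∧ L (ℓ + 1) ≤ lamG i ∧ lamG i ≤ U (ℓ + 1) ∧
          U (ℓ + 1) - L (ℓ + 1) ≤ (U 0 - L 0) / 2 ^ ℓ / 2 := by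
        rintro ⟨r1, r2⟩ h
        have := hgt' h
        rw [r1, r2]
        exact ⟨q1, q2, this, by linarith⟩
      have caseL : (L (ℓ + 1) = m ∧ U (ℓ + 1) = U ℓ) → Vc (sXi π (ξ m)) n < i →
          0 < L (ℓ + 1) ∧ L (ℓ + 1) ≤ lamG i ∧ lamG i ≤ U (ℓ + 1) ∧
          U (ℓ + 1) - L (ℓ + 1) ≤ (U 0 - L 0) / 2 ^ ℓ / 2 := by
        rintro ⟨r1, r2⟩ h
        have := hle' h
        rw [r1, r2]
        exact ⟨hm, this, q3, by linarith⟩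
      rcases lt_trichotomy (v + 1) i with hc | hc | hc
      · refine caseL (u2 (Or.inl ⟨v + 1, by omega, hc, hty⟩)) ?_
        rw [hV]; split_ifs <;> omega
      · have hi' : i - 1 = v := by omega
        rw [hc] at hty
        rw [hi'] at u1 u2
        rcases lt_trichotomy ((-1 : ℝ) ^ v * sXi π (ξ m) n) 0 with hs | hs | hs
        · refine caseU (u1 (Or.inr ⟨hty, by linarith⟩)) ?_
          rw [hV, if_pos hs]; omega
        · have hs0 : sXi π (ξ m) n = 0 := by
            rcases mul_eq_zero.1 hs with h | h
            · exact absurd h (by positivity)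
            · exact h
          obtain ⟨r1, r2⟩ := u3 ⟨hty, by rw [hs0]; simp⟩
          have hVn : Vc (sXi π (ξ m)) n = v := by rw [hV, if_neg (by linarith)]
          have hm2 := hle' (by omega)
          have hmeq : m = lamG i := by
            rcases lt_or_eq_of_le hm2 with h | h
            · have := Vc_strict hπ hν (hsys m) (hsys (lamG i)) h (by omega) hs0
              omega
            · exact h
          rw [r1, r2]
          exact ⟨hm, hmeq.le, hmeq.ge, by linarith⟩
        · refine caseL (u2 (Or.inr ⟨hty, by linarith⟩)) ?_
          rw [hV, if_neg (by linarith)]; omega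
      · refine caseU (u1 (Or.inl ⟨v + 1, hc, by omega, hty⟩)) ?_
        rw [hV]; split_ifs <;> omega
  intro ℓ
  obtain ⟨q1, q2, q3, q4⟩ := hmain ℓ
  refine ⟨le_max_of_le_left (by linarith), max_le (by linarith) (by linarith)⟩
end

section
/- For each 1 ≤ i ≤ n−1 there exists ε > 0 such that for every λ_0 ∈ (λ^G_i − ε, λ^G_i + ε) with λ_0 > 0, the sequence defined by λ_{ℓ+1} = L(λ_ℓ) for ℓ ≥ 0 is monotonic from index 1 onward and converges to λ^G_i. -/
open Finset

lemma aux_dyn (L : ℝ → ℝ) (x ε : ℝ) (hε : 0 < ε)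
    (hc : ∀ y, |y - x| < ε → |L y - x| ≤ |y - x| / 2)
    (hs : (∀ y, |y - x| < ε → x ≤ L y) ∨ (∀ y, |y - x| < ε → L y ≤ x) ∨
      (∀ y, |y - x| < ε → (x ≤ y → x ≤ L y) ∧ (y ≤ x → L y ≤ x)))
    (s : ℕ → ℝ) (h0 : |s 0 - x| < ε) (hr : ∀ l, s (l + 1) = L (s l)) :
    ((∀ l, 1 ≤ l → s (l + 1) ≤ s l) ∨ (∀ l, 1 ≤ l → s l ≤ s (l + 1))) ∧
      Filter.Tendsto s Filter.atTop (nhds x) := by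
  have hb : ∀ l, |s l - x| ≤ |s 0 - x| * (1 / 2) ^ l := by
    intro l
    induction l with
    | zero => simp
    | succ l ih =>
      have h1 : |s l - x| < ε := by
        refine lt_of_le_of_lt ih (lt_of_le_of_lt ?_ h0)
        exact mul_le_of_le_one_right (abs_nonneg _) (pow_le_one₀ (by norm_num) (by norm_num))
      rw [hr]
      have := hc _ h1
      rw [pow_succ]; linarith
  have hin : ∀ l, |s l - x| < ε := by
    intro l
    refine lt_of_le_of_lt (hb l) (lt_of_le_of_lt ?_ h0)
    exact mul_le_of_le_one_right (abs_nonneg _) (pow_le_one₀ (by norm_num) (by norm_num))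
  have hup : ∀ l, x ≤ s l → s (l + 1) ≤ s l := by
    intro l hl
    have h1 := hc _ (hin l)
    rw [← hr, abs_of_nonneg (by linarith : 0 ≤ s l - x)] at h1
    have := (abs_le.1 h1).2
    linarith
  have hdn : ∀ l, s l ≤ x → s l ≤ s (l + 1) := by
    intro l hl
    have h1 := hc _ (hin l)
    rw [← hr, abs_of_nonpos (by linarith : s l - x ≤ 0)] at h1
    have := (abs_le.1 h1).1
    linarith
  constructor
  · rcases hs with h | h | h
    · left
      intro l hl
      obtain ⟨m, rfl⟩ : ∃ m, l = m + 1 := ⟨l - 1, by omega⟩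
      apply hup
      rw [hr]; exact h _ (hin _)
    · right
      intro l hl
      obtain ⟨m, rfl⟩ : ∃ m, l = m + 1 := ⟨l - 1, by omega⟩
      apply hdn
      rw [hr]; exact h _ (hin _)
    · rcases le_total x (s 0) with h00 | h00
      · left
        have : ∀ l, x ≤ s l := by
          intro l
          induction l with
          | zero => exact h00
          | succ l ih => rw [hr]; exact (h _ (hin l)).1 ih
        exact fun l _ => hup l (this l)
      · right
        have : ∀ l, s l ≤ x := by
          intro l
          induction l with
          | zero => exact h00
          | succ l ih => rw [hr]; exact (h _ (hin l)).2 ih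
        exact fun l _ => hdn l (this l)
  · have ht : Filter.Tendsto (fun l : ℕ => |s 0 - x| * (1 / 2 : ℝ) ^ l) Filter.atTop (nhds 0) := by
      have := (tendsto_pow_atTop_nhds_zero_of_lt_one (r := (1 / 2 : ℝ)) (by norm_num)
        (by norm_num)).const_mul (|s 0 - x|)
      simpa using this
    rw [tendsto_iff_dist_tendsto_zero]
    exact squeeze_zero (fun _ => dist_nonneg) (fun l => by rw [Real.dist_eq]; exact hb l) ht

lemma aux_term (a b w y z : ℝ) (hw : 0 ≤ w) (hyz : y ≤ z)
    (h : (a < b ∧ z < b) ∨ (b < a ∧ b < y) ∨ a = b) :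
    (b - a) * w / (y - b) ^ 2 ≤ (b - a) * w / (z - b) ^ 2 := by
  rcases h with ⟨h1, h2⟩ | ⟨h1, h2⟩ | h
  · apply div_le_div_of_nonneg_left
    · exact mul_nonneg (by linarith) hw
    · have : z - b ≠ 0 := by intro h; linarith
      positivity
    · nlinarith
  · have : (a - b) * w / (z - b) ^ 2 ≤ (a - b) * w / (y - b) ^ 2 := by
      apply div_le_div_of_nonneg_left
      · exact mul_nonneg (by linarith) hw
      · have : 0 < y - b := by linarith
        positivity
      · nlinarith
    have e1 : ∀ t : ℝ, (b - a) * w / t = - ((a - b) * w / t) := by intro t; ring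
    rw [e1, e1]; linarith
  · simp [h]

lemma aux_main (n : ℕ) (lam w : ℕ → ℝ) (i : ℕ) (hi1 : 1 ≤ i) (hi : i ≤ n - 1)
    (hw : ∀ j, j ≤ n - 1 → 0 < w j)
    (h0 : lam 0 = 0) (hinj : ∀ j, j ≤ n - 1 → j ≠ i → lam j ≠ lam i) (hpos : 0 < lam i)
    (L : ℝ → ℝ)
    (hL : ∀ y, 0 < y → ∃ (P : ℝ) (q : ℕ → ℝ),
      (∀ j, j ≤ n - 1 → (y - lam j) ^ 2 * q j = P ^ 2 * w j) ∧
      (∃ j, j ≤ n - 1 ∧ q j ≠ 0) ∧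
      L y = (∑ j ∈ Finset.Icc 1 (n - 1), lam j * q j) / ∑ j ∈ Finset.Icc 1 (n - 1), q j) :
    ∃ ε : ℝ, 0 < ε ∧ (∀ y, |y - lam i| < ε → |L y - lam i| ≤ |y - lam i| / 2) ∧
      ((∀ y, |y - lam i| < ε → lam i ≤ L y) ∨ (∀ y, |y - lam i| < ε → L y ≤ lam i) ∨
      (∀ y, |y - lam i| < ε → (lam i ≤ y → lam i ≤ L y) ∧ (y ≤ lam i → L y ≤ lam i))) := by
  set S := Finset.Icc 1 (n - 1) with hS
  have hiS : i ∈ S := by simp [hS]; omega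
  have hSle : ∀ j ∈ S, j ≤ n - 1 := by intro j hj; simp [hS] at hj; omega
  set N : ℝ → ℝ := fun y => ∑ j ∈ S, (lam j - lam i) * w j / (y - lam j) ^ 2 with hN
  -- separation
  obtain ⟨e, he, hsep⟩ : ∃ e : ℝ, 0 < e ∧ ∀ j, j ≤ n - 1 → j ≠ i → e ≤ |lam j - lam i| := by
    by_cases hne : ((Finset.range n).erase i).Nonempty
    · obtain ⟨m, hm, hmin⟩ := Finset.exists_min_image _ (fun j => |lam j - lam i|) hne
      simp only [Finset.mem_erase, Finset.mem_range] at hm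
      refine ⟨|lam m - lam i|, abs_pos.2 (sub_ne_zero.2 (hinj m (by omega) hm.1)), ?_⟩
      intro j hj hji
      exact hmin j (by simp only [Finset.mem_erase, Finset.mem_range]; omega)
    · refine ⟨1, one_pos, fun j hj hji => absurd ⟨j, ?_⟩ hne⟩
      simp only [Finset.mem_erase, Finset.mem_range]; omega
  have hele : e ≤ lam i := by
    have := hsep 0 (by omega) (by omega)
    rwa [h0, zero_sub, abs_neg, abs_of_pos hpos] at this
  -- monotonicity of N
  have hmono : ∀ y z, |y - lam i| < e → |z - lam i| < e → y ≤ z → N y ≤ N z := by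
    intro y z hy hz hyz
    apply Finset.sum_le_sum
    intro j hj
    apply aux_term _ _ _ _ _ (hw j (hSle j hj)).le hyz
    by_cases hji : j = i
    · right; right; rw [hji]
    have h1 := hsep j (hSle j hj) hji
    rw [abs_lt] at hy hz
    rcases lt_or_gt_of_ne (hinj j (hSle j hj) hji) with h | h
    · right; left
      rw [abs_of_neg (by linarith)] at h1
      exact ⟨h, by linarith⟩
    · left
      rw [abs_of_pos (by linarith)] at h1
      exact ⟨h, by linarith⟩
  have hcont : ContinuousAt N (lam i) := by
    apply tendsto_finsetSum
    intro j hj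
    by_cases hji : j = i
    · subst hji; simp
    · have : lam i - lam j ≠ 0 := sub_ne_zero.2 (Ne.symm (hinj j (hSle j hj) hji))
      exact ContinuousAt.div (by fun_prop) (by fun_prop) (pow_ne_zero 2 this)
  -- at the eigenvalue
  have hfix : L (lam i) = lam i := by
    obtain ⟨P, q, h1, ⟨m, hm, hqm⟩, h3⟩ := hL _ hpos
    have hP : P ^ 2 = 0 := by
      have := h1 i hi
      have hwi := hw i hi
      simp at this
      rcases this with h | h
      · simp [h]
      · exact absurd h hwi.ne'
    have hq : ∀ j, j ≤ n - 1 → j ≠ i → q j = 0 := by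
      intro j hj hji
      have := h1 j hj
      rw [hP, zero_mul] at this
      exact (mul_eq_zero.1 this).resolve_left
        (pow_ne_zero 2 (sub_ne_zero.2 (Ne.symm (hinj j hj hji))))
    have hqi : q i ≠ 0 := by
      by_cases hmi : m = i
      · rwa [← hmi]
      · exact absurd (hq m hm hmi) hqm
    rw [h3, Finset.sum_eq_single_of_mem i hiS, Finset.sum_eq_single_of_mem i hiS]
    · field_simp
    · exact fun j hj hji => hq j (hSle j hj) hji
    · intro j hj hji; rw [hq j (hSle j hj) hji, mul_zero]
  -- off the eigenvalue
  have hoff : ∀ y, |y - lam i| < e → ∃ K, 0 ≤ K ∧ K ≤ (y - lam i) ^ 2 / w i ∧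
      L y - lam i = K * N y := by
    intro y hy
    by_cases hyi : y = lam i
    · refine ⟨0, le_rfl, div_nonneg (sq_nonneg _) (hw i hi).le, ?_⟩
      rw [hyi, hfix]; simp
    have hy0 : 0 < y := by rw [abs_lt] at hy; linarith
    have hne : ∀ j, j ≤ n - 1 → y - lam j ≠ 0 := by
      intro j hj h
      by_cases hji : j = i
      · subst hji; exact hyi (by linarith)
      · have := hsep j hj hji
        rw [show lam j = y by linarith] at this
        linarith
    obtain ⟨P, q, h1, ⟨m, hm, hqm⟩, h3⟩ := hL y hy0
    have hq : ∀ j, j ≤ n - 1 → q j = P ^ 2 * (w j / (y - lam j) ^ 2) := by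
      intro j hj
      have h2 := h1 j hj
      have h4 := hne j hj
      field_simp
      linarith
    have hP : P ≠ 0 := by
      intro hP
      apply hqm
      rw [hq m hm, hP]; simp
    set D := ∑ j ∈ S, w j / (y - lam j) ^ 2 with hD
    have hDi : w i / (y - lam i) ^ 2 ≤ D := by
      apply Finset.single_le_sum (f := fun j => w j / (y - lam j) ^ 2) _ hiS
      intro j hj
      exact div_nonneg (hw j (hSle j hj)).le (sq_nonneg _)
    have hwi := hw i hi
    have hsq : 0 < (y - lam i) ^ 2 := by
      have := hne i hi
      positivity
    have hbp : 0 < w i / (y - lam i) ^ 2 := by positivity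
    have hDpos : 0 < D := lt_of_lt_of_le hbp hDi
    refine ⟨1 / D, by positivity, ?_, ?_⟩
    · have := one_div_le_one_div_of_le hbp hDi
      rwa [one_div_div] at this
    · have e1 : ∑ j ∈ S, q j = P ^ 2 * D := by
        rw [hD, Finset.mul_sum]
        exact Finset.sum_congr rfl fun j hj => hq j (hSle j hj)
      have e2 : ∑ j ∈ S, lam j * q j = P ^ 2 * (N y + lam i * D) := by
        rw [hD, hN, Finset.mul_sum, ← Finset.sum_add_distrib, Finset.mul_sum]
        refine Finset.sum_congr rfl fun j hj => ?_
        rw [hq j (hSle j hj)]; ring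
      rw [h3, e1, e2]
      field_simp
      ring
  -- bound on N
  obtain ⟨d, hd, hdN⟩ : ∃ d : ℝ, 0 < d ∧ ∀ y, |y - lam i| < d →
      |N y| < |N (lam i)| + 1 ∧ (0 < N (lam i) → 0 < N y) ∧ (N (lam i) < 0 → N y < 0) := by
    have h1 : ∀ᶠ y in nhds (lam i), |N y| < |N (lam i)| + 1 :=
      (hcont.abs).eventually_lt_const (by linarith)
    have h2 : ∀ᶠ y in nhds (lam i), (0 < N (lam i) → 0 < N y) := by
      by_cases h : 0 < N (lam i)
      · filter_upwards [hcont.eventually_const_lt h] with y hy _ using hy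
      · exact Filter.Eventually.of_forall fun y h' => absurd h' h
    have h3 : ∀ᶠ y in nhds (lam i), (N (lam i) < 0 → N y < 0) := by
      by_cases h : N (lam i) < 0
      · filter_upwards [hcont.eventually_lt_const h] with y hy _ using hy
      · exact Filter.Eventually.of_forall fun y h' => absurd h' h
    obtain ⟨d, hd, h⟩ := Metric.eventually_nhds_iff.1 (h1.and (h2.and h3))
    exact ⟨d, hd, fun y hy => h (by rwa [Real.dist_eq])⟩
  set C := |N (lam i)| + 1 with hC
  have hCpos : 0 < C := by positivity
  have hwi := hw i hi
  refine ⟨min e (min d (w i / (2 * C))), by positivity, ?_, ?_⟩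
  · intro y hy
    simp only [lt_min_iff] at hy
    obtain ⟨K, hK0, hK, hLy⟩ := hoff y hy.1
    have hNy := (hdN y hy.2.1).1
    have hy3 := hy.2.2
    rw [hLy, abs_mul, abs_of_nonneg hK0]
    have h1 : K * |N y| ≤ (y - lam i) ^ 2 / w i * C :=
      mul_le_mul hK hNy.le (abs_nonneg _) (by positivity)
    refine h1.trans ?_
    rw [← sq_abs]
    rw [lt_div_iff₀ (by positivity)] at hy3
    rw [div_mul_eq_mul_div, div_le_div_iff₀ hwi (by norm_num)]
    nlinarith [abs_nonneg (y - lam i)]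
  · rcases lt_trichotomy (N (lam i)) 0 with h | h | h
    · right; left
      intro y hy
      simp only [lt_min_iff] at hy
      obtain ⟨K, hK0, hK, hLy⟩ := hoff y hy.1
      have := (hdN y hy.2.1).2.2 h
      nlinarith
    · right; right
      intro y hy
      simp only [lt_min_iff] at hy
      obtain ⟨K, hK0, hK, hLy⟩ := hoff y hy.1
      constructor
      · intro hle
        have := hmono (lam i) y (by simpa using he) hy.1 hle
        rw [h] at this
        have := mul_nonneg hK0 this
        linarith
      · intro hle
        have := hmono y (lam i) hy.1 (by simpa using he) hle
        rw [h] at this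
        have := mul_nonpos_of_nonneg_of_nonpos hK0 this
        linarith
    · left
      intro y hy
      simp only [lt_min_iff] at hy
      obtain ⟨K, hK0, hK, hLy⟩ := hoff y hy.1
      have := (hdN y hy.2.1).2.1 h
      have := mul_nonneg hK0 this.le
      linarith

lemma aux_parts (f h : ℕ → ℝ) (m : ℕ) :
    ∑ k ∈ Finset.Icc 1 (m + 1), f k * (h (k - 1) - h k) =
      ∑ k ∈ Finset.Icc 1 m, (f (k + 1) - f k) * h k + f 1 * h 0 - f (m + 1) * h (m + 1) := by
  induction m with
  | zero => simp; ring
  | succ m ih =>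
    rw [Finset.sum_Icc_succ_top (by omega), ih, Finset.sum_Icc_succ_top (by omega)]
    simp only [Nat.add_sub_cancel]
    ring

lemma aux_EForm (n : ℕ) (hn : 3 ≤ n) (ν : ℕ → ℝ) (hν0 : ν 0 = 0) (hνn : ν n = 0)
    (f g : ℕ → ℝ) :
    EForm n ν f g = ∑ k ∈ Finset.Icc 1 n,
      f k * ((g k - g (k - 1)) * ν (k - 1) + (g k - g (k + 1)) * ν k) := by
  obtain ⟨m, rfl⟩ : ∃ m, n = m + 1 := ⟨n - 1, by omega⟩
  have := aux_parts f (fun k => (g (k + 1) - g k) * ν k) m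
  simp only [hν0, hνn, mul_zero, sub_zero, add_zero] at this
  rw [EForm, Nat.add_sub_cancel]
  rw [show ∑ i ∈ Finset.Icc 1 m, (f i - f (i + 1)) * (g i - g (i + 1)) * ν i =
    ∑ k ∈ Finset.Icc 1 m, (f (k + 1) - f k) * ((g (k + 1) - g k) * ν k) from
    Finset.sum_congr rfl fun k _ => by ring]
  rw [← this]
  refine Finset.sum_congr rfl fun k hk => ?_
  rw [Finset.mem_Icc] at hk
  rw [show k - 1 + 1 = k by omega]
  ring

lemma aux_eig (n : ℕ) (hn : 3 ≤ n) (π ν : ℕ → ℝ) (hν0 : ν 0 = 0) (hνn : ν n = 0)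
    (lam : ℝ) (ζ f : ℕ → ℝ) (h : IsEigen n π ν lam ζ) :
    EForm n ν f ζ = lam * ∑ k ∈ Finset.Icc 1 n, f k * ζ k * π k := by
  rw [aux_EForm n hn ν hν0 hνn, Finset.mul_sum]
  refine Finset.sum_congr rfl fun k hk => ?_
  rw [← h.2 k hk]; ring

lemma aux_xi (n : ℕ) (hn : 3 ≤ n) (π ν : ℕ → ℝ) (hν0 : ν 0 = 0) (hνn : ν n = 0)
    (hν : ∀ k ∈ Finset.Icc 1 (n - 1), 0 < ν k)
    (lam : ℝ) (ξ : ℕ → ℝ) (h : XiRec n π ν lam ξ) :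
    ∃ P : ℝ, ∀ f, EForm n ν f ξ = lam * (∑ k ∈ Finset.Icc 1 n, f k * ξ k * π k) - P * f n := by
  refine ⟨lam * (π n * ξ n) - (ξ n - ξ (n - 1)) * ν (n - 1), fun f => ?_⟩
  rw [aux_EForm n hn ν hν0 hνn]
  obtain ⟨m, rfl⟩ : ∃ m, n = m + 1 := ⟨n - 1, by omega⟩
  rw [Finset.sum_Icc_succ_top (by omega), Finset.sum_Icc_succ_top (by omega), mul_add lam,
    Finset.mul_sum]
  have : ∑ k ∈ Finset.Icc 1 m,
      f k * ((ξ k - ξ (k - 1)) * ν (k - 1) + (ξ k - ξ (k + 1)) * ν k) =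
      ∑ k ∈ Finset.Icc 1 m, lam * (f k * ξ k * π k) := by
    refine Finset.sum_congr rfl fun k hk => ?_
    have hk' := Finset.mem_Icc.1 hk
    have hp := hν k (by simpa using hk)
    rw [h.2 k hk'.1 (by omega)]
    field_simp
    ring
  rw [this, hνn]
  ring

lemma aux_last (n : ℕ) (hn : 3 ≤ n) (π ν : ℕ → ℝ) (hνn : ν n = 0)
    (hν : ∀ k ∈ Finset.Icc 1 (n - 1), 0 < ν k)
    (lam : ℝ) (ζ : ℕ → ℝ) (h : IsEigen n π ν lam ζ) : ζ n ≠ 0 := by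
  intro h0
  obtain ⟨⟨k, hk, hk0⟩, he⟩ := h
  have key : ∀ d, d < n → ζ (n - d) = 0 ∧ (ζ (n - d) - ζ (n - d + 1)) * ν (n - d) = 0 := by
    intro d
    induction d with
    | zero => intro _; simp [h0, hνn]
    | succ d ih =>
      intro hd
      obtain ⟨h1, h2⟩ := ih (by omega)
      have h3 := he (n - d) (by rw [Finset.mem_Icc]; omega)
      have h4 := hν (n - d - 1) (by rw [Finset.mem_Icc]; omega)
      rw [h1] at h2 h3
      rw [h2] at h3
      have h5 : ζ (n - d - 1) = 0 := by
        have : ζ (n - d - 1) * ν (n - d - 1) = 0 := by linarith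
        exact (mul_eq_zero.1 this).resolve_right h4.ne'
      rw [show n - (d + 1) = n - d - 1 by omega, show n - d - 1 + 1 = n - d by omega, h5, h1]
      simp
  rw [Finset.mem_Icc] at hk
  have := (key (n - k) (by omega)).1
  rw [show n - (n - k) = k by omega] at this
  exact hk0 this

/-- Expansion of a function in an orthogonal family of `n` non-zero functions. -/
lemma aux_expand (n : ℕ) (π : ℕ → ℝ) (ζ : ℕ → ℕ → ℝ)
    (hz : ∀ j, j < n → ∑ k ∈ Finset.Icc 1 n, ζ j k * ζ j k * π k ≠ 0)
    (ho : ∀ i j, i < n → j < n → i ≠ j → ∑ k ∈ Finset.Icc 1 n, ζ i k * ζ j k * π k = 0)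
    (f : ℕ → ℝ) :
    ∃ a : ℕ → ℝ, ∀ k ∈ Finset.Icc 1 n, f k = ∑ j ∈ Finset.range n, a j * ζ j k := by
  let v : Fin n → (Fin n → ℝ) := fun j k => ζ j (k + 1)
  have hli : LinearIndependent ℝ v := by
    rw [Fintype.linearIndependent_iff]
    intro g hg i
    have h1 : ∀ k : Fin n, ∑ j, g j * ζ j (k + 1) = 0 := by
      intro k
      have := congrFun hg k
      simpa [v] using this
    have hconv : ∀ F : ℕ → ℝ, ∑ k ∈ Finset.Icc 1 n, F k = ∑ k : Fin n, F (k + 1) := by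
      intro F
      rw [Fin.sum_univ_eq_sum_range (fun k => F (k + 1)), Finset.range_eq_Ico,
        Finset.sum_Ico_add' F 0 n 1]
      rfl
    have h2 : ∑ k : Fin n, (∑ j, g j * ζ j (k + 1)) * ζ i (k + 1) * π (k + 1) = 0 := by
      apply Finset.sum_eq_zero
      intro k _
      rw [h1]; simp
    simp_rw [Finset.sum_mul] at h2
    rw [Finset.sum_comm] at h2
    have h3 : ∀ j : Fin n, ∑ k : Fin n, g j * ζ j (k + 1) * ζ i (k + 1) * π (k + 1) =
        g j * ∑ k ∈ Finset.Icc 1 n, ζ j k * ζ i k * π k := by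
      intro j
      rw [hconv, Finset.mul_sum]
      exact Finset.sum_congr rfl fun k _ => by ring
    simp_rw [h3] at h2
    rw [Finset.sum_eq_single i] at h2
    · exact (mul_eq_zero.1 h2).resolve_right (hz i i.2)
    · intro j _ hji
      rw [ho j i j.2 i.2 (fun h => hji (Fin.ext h)), mul_zero]
    · simp
  have hsp : (⊤ : Submodule ℝ (Fin n → ℝ)) ≤ Submodule.span ℝ (Set.range v) :=
    (hli.span_eq_top_of_card_eq_finrank' (by simp)).ge
  have hm : (fun k : Fin n => f (k + 1)) ∈ Submodule.span ℝ (Set.range v) := hsp trivial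
  rw [Submodule.mem_span_range_iff_exists_fun] at hm
  obtain ⟨c, hc⟩ := hm
  refine ⟨fun j => if h : j < n then c ⟨j, h⟩ else 0, fun k hk => ?_⟩
  rw [Finset.mem_Icc] at hk
  have h1 := congrFun hc ⟨k - 1, by omega⟩
  simp only [Finset.sum_apply, Pi.smul_apply, smul_eq_mul, v] at h1
  rw [show k - 1 + 1 = k by omega] at h1
  rw [← h1, ← Fin.sum_univ_eq_sum_range (fun j => (if h : j < n then c ⟨j, h⟩ else 0) * ζ j k)]
  exact Finset.sum_congr rfl fun j _ => by simp

theorem stmt11 (n : ℕ) (hn : 3 ≤ n) (π ν : ℕ → ℝ)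
    (hπ : ∀ k ∈ Finset.Icc 1 n, 0 < π k)
    (hπ1 : ∑ k ∈ Finset.Icc 1 n, π k = 1)
    (hν : ∀ k ∈ Finset.Icc 1 (n - 1), 0 < ν k)
    (hν0 : ν 0 = 0) (hνn : ν n = 0)
    -- the (simple) eigenvalues `0 = λ^G_0 < λ^G_1 < ⋯ < λ^G_{n−1}` of `M^G_{π,ν}`
    (lamG : ℕ → ℝ) (hlamG0 : lamG 0 = 0)
    (hlamGmono : ∀ j, j + 1 ≤ n - 1 → lamG j < lamG (j + 1))
    (hlamGeig : ∀ j, j ≤ n - 1 → ∃ ζ : ℕ → ℝ, IsEigen n π ν (lamG j) ζ)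
    (hlamGall : ∀ (μ : ℝ) (ζ : ℕ → ℝ), IsEigen n π ν μ ζ → ∃ j ≤ n - 1, μ = lamG j)
    -- the family `λ ↦ ξ_λ`
    (ξ : ℝ → ℕ → ℝ) (hξ : ∀ lam : ℝ, XiRec n π ν lam (ξ lam)) :
    ∀ i, 1 ≤ i → i ≤ n - 1 → ∃ ε : ℝ, 0 < ε ∧
      ∀ lam0 : ℝ, lamG i - ε < lam0 → lam0 < lamG i + ε → 0 < lam0 →
        ∀ seq : ℕ → ℝ, seq 0 = lam0 →
          (∀ ℓ, seq (ℓ + 1) =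
            EForm n ν (ξ (seq ℓ)) (ξ (seq ℓ)) / varPi n π (ξ (seq ℓ))) →
          ((∀ ℓ, 1 ≤ ℓ → seq (ℓ + 1) ≤ seq ℓ) ∨
           (∀ ℓ, 1 ≤ ℓ → seq ℓ ≤ seq (ℓ + 1))) ∧
          Filter.Tendsto seq Filter.atTop (nhds (lamG i)) := by
  have hn1 : 1 ≤ n := by omega
  have hlt : ∀ b, b ≤ n - 1 → ∀ a, a < b → lamG a < lamG b := by
    intro b
    induction b with
    | zero => intro _ a ha; omega
    | succ b ih =>
      intro hb a ha
      have h1 := hlamGmono b hb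
      rcases Nat.lt_succ_iff_lt_or_eq.1 ha with h | h
      · exact (ih (by omega) a h).trans h1
      · rw [h]; exact h1
  have hne : ∀ a b, a ≤ n - 1 → b ≤ n - 1 → a ≠ b → lamG a ≠ lamG b := by
    intro a b ha hb hab
    rcases lt_or_gt_of_ne hab with h | h
    · exact (hlt b hb a h).ne
    · exact (hlt a ha b h).ne'
  obtain ⟨ζ, hζ, hζ0⟩ : ∃ ζ : ℕ → ℕ → ℝ, (∀ j, j ≤ n - 1 → IsEigen n π ν (lamG j) (ζ j)) ∧
      ∀ k, ζ 0 k = 1 := by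
    choose! Z hZ using hlamGeig
    refine ⟨fun j => if j = 0 then fun _ => 1 else Z j, ?_, by simp⟩
    intro j hj
    by_cases h : j = 0
    · subst h
      rw [hlamG0]
      refine ⟨⟨1, by rw [Finset.mem_Icc]; omega, by simp⟩, fun k _ => by simp⟩
    · simp only [h, if_false]; exact hZ j hj
  set z : ℕ → ℝ := fun j => ∑ k ∈ Finset.Icc 1 n, ζ j k * ζ j k * π k with hzdef
  have hnorm : ∀ f : ℕ → ℝ, (∃ k ∈ Finset.Icc 1 n, f k ≠ 0) →
      0 < ∑ k ∈ Finset.Icc 1 n, f k * f k * π k := by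
    rintro f ⟨k, hk, hk0⟩
    refine Finset.sum_pos' (fun m hm => mul_nonneg (mul_self_nonneg _) (hπ m hm).le) ⟨k, hk, ?_⟩
    exact mul_pos (mul_self_pos.2 hk0) (hπ k hk)
  have hz : ∀ j, j ≤ n - 1 → 0 < z j := fun j hj => hnorm _ (hζ j hj).1
  have hEsymm : ∀ f g, EForm n ν f g = EForm n ν g f := by
    intro f g
    exact Finset.sum_congr rfl fun k _ => by ring
  have hEeig : ∀ j, j ≤ n - 1 → ∀ f, EForm n ν f (ζ j) =
      lamG j * ∑ k ∈ Finset.Icc 1 n, f k * ζ j k * π k :=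
    fun j hj f => aux_eig n hn π ν hν0 hνn _ _ f (hζ j hj)
  have hsymm : ∀ f g : ℕ → ℝ, ∑ k ∈ Finset.Icc 1 n, f k * g k * π k =
      ∑ k ∈ Finset.Icc 1 n, g k * f k * π k := fun f g =>
    Finset.sum_congr rfl fun k _ => by ring
  have ho : ∀ a b, a < n → b < n → a ≠ b →
      ∑ k ∈ Finset.Icc 1 n, ζ a k * ζ b k * π k = 0 := by
    intro a b ha hb hab
    have h1 := hEeig b (by omega) (ζ a)
    have h2 := hEeig a (by omega) (ζ b)
    rw [hEsymm, h2, hsymm (ζ b)] at h1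
    have h3 : (lamG a - lamG b) * ∑ k ∈ Finset.Icc 1 n, ζ a k * ζ b k * π k = 0 := by
      linarith
    exact (mul_eq_zero.1 h3).resolve_left
      (sub_ne_zero.2 (hne a b (by omega) (by omega) hab))
  have hζn : ∀ j, j ≤ n - 1 → ζ j n ≠ 0 := fun j hj =>
    aux_last n hn π ν hνn hν _ _ (hζ j hj)
  intro i hi1 hi
  have hpos : 0 < lamG i := by
    rw [← hlamG0]; exact hlt i hi 0 (by omega)
  have hrange : ∀ F : ℕ → ℝ, ∑ j ∈ Finset.range n, F j =
      F 0 + ∑ j ∈ Finset.Icc 1 (n - 1), F j := by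
    intro F
    obtain ⟨m, rfl⟩ : ∃ m, n = m + 1 := ⟨n - 1, by omega⟩
    rw [Finset.sum_range_succ', add_comm, Finset.range_eq_Ico, Finset.sum_Ico_add' F 0 m 1]
    rfl
  obtain ⟨ε, hε, hc, hs⟩ := aux_main n lamG (fun j => ζ j n ^ 2 / z j) i hi1 hi
    (fun j hj => div_pos (by have := hζn j hj; positivity) (hz j hj)) hlamG0
    (fun j hj hji => hne j i hj hi hji) hpos
    (fun y => EForm n ν (ξ y) (ξ y) / varPi n π (ξ y)) (by
      intro y hy
      obtain ⟨P, hP⟩ := aux_xi n hn π ν hν0 hνn hν y (ξ y) (hξ y)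
      obtain ⟨a, ha⟩ := aux_expand n π ζ (fun j hj => (hz j (by omega)).ne') ho (ξ y)
      set f := ξ y with hf
      -- pairing with a function
      have hpair : ∀ g : ℕ → ℝ, ∑ k ∈ Finset.Icc 1 n, g k * f k * π k =
          ∑ j ∈ Finset.range n, a j * ∑ k ∈ Finset.Icc 1 n, g k * ζ j k * π k := by
        intro g
        simp_rw [Finset.mul_sum]
        rw [Finset.sum_comm]
        refine Finset.sum_congr rfl fun k hk => ?_
        rw [ha k hk, Finset.mul_sum, Finset.sum_mul]
        exact Finset.sum_congr rfl fun j _ => by ring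
      have hcj : ∀ j, j ≤ n - 1 → ∑ k ∈ Finset.Icc 1 n, ζ j k * f k * π k = a j * z j := by
        intro j hj
        rw [hpair, Finset.sum_eq_single_of_mem j (Finset.mem_range.2 (by omega))]
        intro m hm hmj
        rw [ho j m (by omega) (Finset.mem_range.1 hm) (Ne.symm hmj), mul_zero]
      have hcj' : ∀ j, j ≤ n - 1 → ∑ k ∈ Finset.Icc 1 n, f k * ζ j k * π k = a j * z j := by
        intro j hj
        rw [hsymm, hcj j hj]
      have hff : ∑ k ∈ Finset.Icc 1 n, f k * f k * π k =
          ∑ j ∈ Finset.range n, a j ^ 2 * z j := by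
        rw [hpair]
        refine Finset.sum_congr rfl fun j hj => ?_
        rw [hcj' j (by have := Finset.mem_range.1 hj; omega)]; ring
      have hE : EForm n ν f f = ∑ j ∈ Finset.range n, lamG j * (a j ^ 2 * z j) := by
        have h1 : EForm n ν f f = ∑ j ∈ Finset.range n, a j * EForm n ν f (ζ j) := by
          simp only [EForm, Finset.mul_sum]
          rw [Finset.sum_comm]
          refine Finset.sum_congr rfl fun k hk => ?_
          rw [Finset.mem_Icc] at hk
          have e1 := ha k (by rw [Finset.mem_Icc]; omega)
          have e2 := ha (k + 1) (by rw [Finset.mem_Icc]; omega)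
          have e3 : f k - f (k + 1) = ∑ j ∈ Finset.range n, a j * (ζ j k - ζ j (k + 1)) := by
            rw [e1, e2, ← Finset.sum_sub_distrib]
            exact Finset.sum_congr rfl fun j _ => by ring
          calc (f k - f (k + 1)) * (f k - f (k + 1)) * ν k
              = (f k - f (k + 1)) * (∑ j ∈ Finset.range n, a j * (ζ j k - ζ j (k + 1))) * ν k := by
                rw [← e3]
            _ = _ := by
                rw [Finset.mul_sum, Finset.sum_mul]
                exact Finset.sum_congr rfl fun j _ => by ring
        rw [h1]
        refine Finset.sum_congr rfl fun j hj => ?_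
        have hj' : j ≤ n - 1 := by have := Finset.mem_range.1 hj; omega
        rw [hEeig j hj', hcj' j hj']; ring
      have hz0 : z 0 = 1 := by
        simp only [hzdef, hζ0]; simpa using hπ1
      have hV : varPi n π f = ∑ j ∈ Finset.Icc 1 (n - 1), a j ^ 2 * z j := by
        have h1 : piMean n π (fun i => f i ^ 2) = ∑ k ∈ Finset.Icc 1 n, f k * f k * π k :=
          Finset.sum_congr rfl fun k _ => by ring
        have h2 : piMean n π f = a 0 := by
          have := hcj 0 (by omega)
          rw [hz0, mul_one] at this
          rw [← this]
          exact Finset.sum_congr rfl fun k _ => by rw [hζ0]; ring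
        rw [varPi, h1, h2, hff, hrange, hz0]; ring
      refine ⟨P, fun j => a j ^ 2 * z j, ?_, ?_, ?_⟩
      · intro j hj
        have h1 := hP (ζ j)
        rw [hEsymm, hEeig j hj, hcj' j hj, hcj j hj] at h1
        have h2 : (y - lamG j) * (a j * z j) = P * ζ j n := by linarith
        have h3 := hz j hj
        have h4 : (y - lamG j) ^ 2 * (a j ^ 2 * z j) = ((y - lamG j) * (a j * z j)) ^ 2 / z j := by
          field_simp
        rw [h4, h2]; ring
      · by_contra hcon
        push Not at hcon
        have h1 : 0 < ∑ k ∈ Finset.Icc 1 n, f k * f k * π k :=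
          hnorm f ⟨1, by rw [Finset.mem_Icc]; omega, by rw [hf, (hξ y).1]; norm_num⟩
        rw [hff, Finset.sum_eq_zero] at h1
        · exact lt_irrefl _ h1
        · intro j hj
          exact hcon j (by have := Finset.mem_range.1 hj; omega)
      · show EForm n ν f f / varPi n π f = _
        rw [hE, hV, hrange, hlamG0, zero_mul, zero_add])
  refine ⟨ε, hε, ?_⟩
  intro lam0 h1 h2 _ seq hs0 hseq
  exact aux_dyn _ (lamG i) ε hε hc hs seq
    (by rw [hs0, abs_lt]; constructor <;> linarith) hseq
end

section
/- The L²(π)-normalized eigenvectors satisfy ζ_i(1) · ζ_i(n) = − ∏_{j=1, j≠i}^{n−1} λ^G_j/(λ^G_j − λ^G_i) for every 1 ≤ i ≤ n−1. -/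
open Finset

open Polynomial in
/-- The polynomial solution of the recursion and its running `π`-sum. -/
noncomputable def pathPoly (π ν : ℕ → ℝ) : ℕ → Polynomial ℝ × Polynomial ℝ
  | 0 => (1, 0)
  | k + 1 =>
    let p := (pathPoly π ν k).1 - C (ν k)⁻¹ * (X * (pathPoly π ν k).2)
    (p, (pathPoly π ν k).2 + C (π (k + 1)) * p)

open Polynomial in
lemma pathPoly_fst_succ (π ν : ℕ → ℝ) (k : ℕ) :
    (pathPoly π ν (k + 1)).1 =
      (pathPoly π ν k).1 - C (ν k)⁻¹ * (X * (pathPoly π ν k).2) := rfl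

open Polynomial in
lemma pathPoly_snd_succ (π ν : ℕ → ℝ) (k : ℕ) :
    (pathPoly π ν (k + 1)).2 =
      (pathPoly π ν k).2 + C (π (k + 1)) * (pathPoly π ν (k + 1)).1 := rfl

open Polynomial in
lemma pathPoly_deg (π ν : ℕ → ℝ) (k : ℕ) :
    (pathPoly π ν (k + 1)).1.natDegree ≤ k ∧ (pathPoly π ν (k + 1)).2.natDegree ≤ k := by
  induction k with
  | zero => simp [pathPoly]
  | succ k ih =>
    have h1 : (pathPoly π ν (k + 1 + 1)).1.natDegree ≤ k + 1 := by
      rw [pathPoly_fst_succ]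
      refine (natDegree_sub_le _ _).trans (max_le (by omega) ?_)
      refine (natDegree_C_mul_le _ _).trans (natDegree_mul_le.trans ?_)
      have := natDegree_X_le (R := ℝ)
      omega
    refine ⟨h1, ?_⟩
    rw [pathPoly_snd_succ]
    exact (natDegree_add_le _ _).trans
      (max_le (by omega) ((natDegree_C_mul_le _ _).trans h1))

open Polynomial in
lemma pathPoly_zero (π ν : ℕ → ℝ) (k : ℕ) :
    (pathPoly π ν k).1.eval 0 = 1 ∧
      (pathPoly π ν k).2.eval 0 = ∑ l ∈ Finset.Icc 1 k, π l := by
  induction k with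
  | zero => simp [pathPoly]
  | succ k ih =>
    have h1 : (pathPoly π ν (k + 1)).1.eval 0 = 1 := by
      rw [pathPoly_fst_succ]; simp [ih.1]
    refine ⟨h1, ?_⟩
    rw [pathPoly_snd_succ, Finset.sum_Icc_succ_top (by omega)]
    simp [h1, ih.2]

open Polynomial in
lemma pathPoly_wronskian (π ν : ℕ → ℝ) (x y : ℝ) (k : ℕ) :
    (y - x) * ∑ l ∈ Finset.Icc 1 k,
        π l * ((pathPoly π ν l).1.eval x * (pathPoly π ν l).1.eval y) =
      (pathPoly π ν k).1.eval x * (y * (pathPoly π ν k).2.eval y) -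
      (pathPoly π ν k).1.eval y * (x * (pathPoly π ν k).2.eval x) := by
  induction k with
  | zero => simp [pathPoly]
  | succ k ih =>
    rw [Finset.sum_Icc_succ_top (by omega), mul_add, ih, pathPoly_snd_succ, pathPoly_fst_succ]
    simp only [eval_add, eval_sub, eval_mul, eval_C, eval_X]
    ring

lemma eigen_flux (n : ℕ) (π ν : ℕ → ℝ) (hν0 : ν 0 = 0) (lam : ℝ) (z : ℕ → ℝ)
    (h : IsEigen n π ν lam z) (k : ℕ) (hk : k ≤ n) :
    lam * ∑ l ∈ Finset.Icc 1 k, π l * z l = (z k - z (k + 1)) * ν k := by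
  induction k with
  | zero => simp [hν0]
  | succ k ih =>
    have h2 := h.2 (k + 1) (by simp; omega)
    rw [Finset.sum_Icc_succ_top (by omega), mul_add, ih (by omega), h2]
    simp
    ring

open Polynomial in
lemma eigen_eq (n : ℕ) (π ν : ℕ → ℝ) (hν : ∀ k ∈ Finset.Icc 1 (n - 1), 0 < ν k)
    (hν0 : ν 0 = 0) (lam : ℝ) (z : ℕ → ℝ)
    (h : IsEigen n π ν lam z) (k : ℕ) (hk : k + 1 ≤ n) :
    z (k + 1) = z 1 * (pathPoly π ν (k + 1)).1.eval lam ∧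
    ∑ l ∈ Finset.Icc 1 (k + 1), π l * z l = z 1 * (pathPoly π ν (k + 1)).2.eval lam := by
  induction k with
  | zero => simp [pathPoly, mul_comm]
  | succ k ih =>
    obtain ⟨i1, i2⟩ := ih (by omega)
    have hp : 0 < ν (k + 1) := hν _ (by simp; omega)
    have hf := eigen_flux n π ν hν0 lam z h (k + 1) (by omega)
    have h1 : z (k + 1 + 1) = z 1 * (pathPoly π ν (k + 1 + 1)).1.eval lam := by
      rw [pathPoly_fst_succ]
      simp only [eval_sub, eval_mul, eval_C, eval_X]
      rw [i2] at hf
      field_simp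
      linear_combination ν (k + 1) * i1 + hf
    refine ⟨h1, ?_⟩
    rw [Finset.sum_Icc_succ_top (by omega), i2, h1, pathPoly_snd_succ π ν (k + 1)]
    simp only [eval_add, eval_mul, eval_C]
    ring

theorem stmt12 (n : ℕ) (hn : 2 ≤ n) (π ν : ℕ → ℝ)
    (hπ : ∀ k ∈ Finset.Icc 1 n, 0 < π k)
    (hπ1 : ∑ k ∈ Finset.Icc 1 n, π k = 1)
    (hν : ∀ k ∈ Finset.Icc 1 (n - 1), 0 < ν k)
    (hν0 : ν 0 = 0) (hνn : ν n = 0)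
    -- the (simple) eigenvalues `0 = λ^G_0 < λ^G_1 < ⋯ < λ^G_{n−1}` of `M^G_{π,ν}`
    (lamG : ℕ → ℝ) (hlamG0 : lamG 0 = 0)
    (hlamGmono : ∀ j, j + 1 ≤ n - 1 → lamG j < lamG (j + 1))
    (hlamGall : ∀ (μ : ℝ) (ζ : ℕ → ℝ), IsEigen n π ν μ ζ → ∃ j ≤ n - 1, μ = lamG j)
    -- the `L²(π)`-normalized eigenvectors `ζ_0 = 1, ζ_1, …, ζ_{n−1}`
    (ζ : ℕ → ℕ → ℝ)
    (hζ0 : ∀ k ∈ Finset.Icc 1 n, ζ 0 k = 1)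
    (hζeig : ∀ j, 1 ≤ j → j ≤ n - 1 → IsEigen n π ν (lamG j) (ζ j))
    (hζnorm : ∀ j, j ≤ n - 1 → ∑ k ∈ Finset.Icc 1 n, (ζ j k) ^ 2 * π k = 1) :
    ∀ i, 1 ≤ i → i ≤ n - 1 →
      ζ i 1 * ζ i n =
        -∏ j ∈ (Finset.Icc 1 (n - 1)).erase i, lamG j / (lamG j - lamG i) := by
  intro i hi1 hin
  obtain ⟨m, rfl⟩ : ∃ m, n = m + 1 := ⟨n - 1, by omega⟩
  simp only [Nat.add_sub_cancel] at *
  have hlt : ∀ b a, a < b → b ≤ m → lamG a < lamG b := by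
    intro b
    induction b with
    | zero => intro a h; omega
    | succ b ih =>
      intro a hab hb
      rcases Nat.lt_succ_iff_lt_or_eq.mp hab with h | h
      · exact (ih a h (by omega)).trans (hlamGmono b hb)
      · subst h; exact hlamGmono a hb
  have hinj : ∀ a b, a ≤ m → b ≤ m → lamG a = lamG b → a = b := by
    intro a b ha hb hab
    rcases lt_trichotomy a b with h | h | h
    · exact absurd hab (hlt b a h hb).ne
    · exact h
    · exact absurd hab (hlt a b h ha).ne'
  have hpos : ∀ j, 1 ≤ j → j ≤ m → 0 < lamG j := fun j h1 h2 => hlamG0 ▸ hlt j 0 (by omega) h2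
  have hz1 : ∀ j, 1 ≤ j → j ≤ m → ζ j 1 ≠ 0 := by
    intro j h1 h2 h0
    obtain ⟨k, hk, hne⟩ := (hζeig j h1 h2).1
    rw [Finset.mem_Icc] at hk
    obtain ⟨k, rfl⟩ : ∃ l, k = l + 1 := ⟨k - 1, by omega⟩
    apply hne
    rw [(eigen_eq (m + 1) π ν (by simpa using hν) hν0 _ _ (hζeig j h1 h2) k (by omega)).1, h0,
      zero_mul]
  have hroot : ∀ j, 1 ≤ j → j ≤ m → (pathPoly π ν (m + 1)).2.eval (lamG j) = 0 := by
    intro j h1 h2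
    have hf := eigen_flux (m + 1) π ν hν0 _ _ (hζeig j h1 h2) (m + 1) le_rfl
    rw [(eigen_eq (m + 1) π ν (by simpa using hν) hν0 _ _ (hζeig j h1 h2) m le_rfl).2, hνn,
      mul_zero] at hf
    simpa [(hpos j h1 h2).ne', hz1 j h1 h2] using hf
  -- factorization of the running sum
  have hS : (pathPoly π ν (m + 1)).2 =
      ∏ j ∈ Finset.Icc 1 m, (1 - Polynomial.C (lamG j)⁻¹ * Polynomial.X) := by
    have hcard : ((Finset.range (m + 1)).image lamG).card = m + 1 := by
      rw [Finset.card_image_of_injOn, Finset.card_range]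
      intro a ha b hb hab
      simp only [Finset.coe_range, Set.mem_Iio] at ha hb
      exact hinj a b (by omega) (by omega) hab
    have hd : (∏ j ∈ Finset.Icc 1 m,
        (1 - Polynomial.C (lamG j)⁻¹ * Polynomial.X)).natDegree ≤ m := by
      refine (Polynomial.natDegree_prod_le _ _).trans ?_
      refine (Finset.sum_le_card_nsmul _ _ 1 ?_).trans (by simp)
      intro j _
      refine (Polynomial.natDegree_sub_le _ _).trans (max_le (by simp) ?_)
      exact (Polynomial.natDegree_C_mul_le _ _).trans Polynomial.natDegree_X_le
    refine Polynomial.eq_of_natDegree_lt_card_of_eval_eq' _ _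
      ((Finset.range (m + 1)).image lamG) ?_ ?_
    · intro x hx
      obtain ⟨j, hj, rfl⟩ := Finset.mem_image.mp hx
      rw [Finset.mem_range] at hj
      rcases Nat.eq_zero_or_pos j with h0 | h0
      · subst h0
        rw [hlamG0, (pathPoly_zero π ν _).2, hπ1, Polynomial.eval_prod]
        simp
      · rw [hroot j h0 (by omega), Polynomial.eval_prod, eq_comm]
        refine Finset.prod_eq_zero (i := j) (by simp; omega) ?_
        have := (hpos j h0 (by omega)).ne'
        simp [this]
    · rw [hcard]
      have := (pathPoly_deg π ν m).2
      omega
  set L := lamG i with hL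
  have hLne : L ≠ 0 := (hpos i hi1 hin).ne'
  set R : Polynomial ℝ := ∏ j ∈ (Finset.Icc 1 m).erase i,
    (1 - Polynomial.C (lamG j)⁻¹ * Polynomial.X) with hR
  have hSR : (pathPoly π ν (m + 1)).2 = (1 - Polynomial.C L⁻¹ * Polynomial.X) * R := by
    rw [hS, hR, hL]
    exact (Finset.mul_prod_erase _ _ (by simp; omega)).symm
  set a : ℝ := (pathPoly π ν (m + 1)).1.eval L with ha
  have hW : (∑ l ∈ Finset.Icc 1 (m + 1),
      Polynomial.C (π l * (pathPoly π ν l).1.eval L) * (pathPoly π ν l).1) =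
      Polynomial.C (-a / L) * Polynomial.X * R := by
    apply mul_left_cancel₀ (Polynomial.X_sub_C_ne_zero L)
    apply Polynomial.funext
    intro y
    have hw := pathPoly_wronskian π ν L y (m + 1)
    rw [hroot i hi1 hin, hSR] at hw
    simp only [Polynomial.eval_mul, Polynomial.eval_sub, Polynomial.eval_X, Polynomial.eval_C,
      Polynomial.eval_finset_sum, Polynomial.eval_one] at hw ⊢
    simp only [mul_assoc] at hw ⊢
    rw [hw]
    field_simp
    ring
  have hWe := congrArg (Polynomial.eval L) hW
  simp only [Polynomial.eval_mul, Polynomial.eval_X, Polynomial.eval_C,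
    Polynomial.eval_finset_sum] at hWe
  have hN : ζ i 1 ^ 2 * ∑ l ∈ Finset.Icc 1 (m + 1),
      π l * (pathPoly π ν l).1.eval L * (pathPoly π ν l).1.eval L = 1 := by
    rw [← hζnorm i hin, Finset.mul_sum]
    refine Finset.sum_congr rfl fun k hk => ?_
    rw [Finset.mem_Icc] at hk
    obtain ⟨k, rfl⟩ : ∃ l, k = l + 1 := ⟨k - 1, by omega⟩
    rw [(eigen_eq (m + 1) π ν (by simpa using hν) hν0 _ _ (hζeig i hi1 hin) k (by omega)).1]
    ring
  have hzn := (eigen_eq (m + 1) π ν (by simpa using hν) hν0 _ _ (hζeig i hi1 hin) m le_rfl).1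
  have hkey : (ζ i 1 * ζ i (m + 1)) * R.eval L = -1 := by
    rw [hWe] at hN
    rw [hzn]
    field_simp at hN
    linear_combination -hN
  have hRe : (∏ j ∈ (Finset.Icc 1 m).erase i, lamG j / (lamG j - L)) * R.eval L = 1 := by
    rw [hR, Polynomial.eval_prod, ← Finset.prod_mul_distrib]
    refine Finset.prod_eq_one fun j hj => ?_
    rw [Finset.mem_erase, Finset.mem_Icc] at hj
    have h1 := (hpos j hj.2.1 hj.2.2).ne'
    have h2 : lamG j - L ≠ 0 := fun h =>
      hj.1 (hinj j i hj.2.2 hin (sub_eq_zero.mp h))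
    simp only [Polynomial.eval_mul, Polynomial.eval_sub, Polynomial.eval_X, Polynomial.eval_C,
      Polynomial.eval_one]
    field_simp
  have hR0 : R.eval L ≠ 0 := right_ne_zero_of_mul_eq_one hRe
  apply mul_right_cancel₀ hR0
  rw [hkey, neg_mul, hRe]
end
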